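/- arXiv:1706.00234 — 2 statements merged into one kernel-verified Lean document; each statement's English description precedes it below -/
import Mathlib

section
/- Let f₀, f₁, …, f_p : ℝⁿ → ℝ be nonconstant polynomial functions, let S := {x ∈ ℝⁿ : f₁(x) ≤ 0, …, f_p(x) ≤ 0} be nonempty, assume f₀ is bounded from below on S, set f* := inf_{x ∈ S} f₀(x), and assume f₀ does not attain f* on S. Then there exist a nonempty set J ⊆ {1, …, n}, a real ε > 0, and smooth semialgebraic curves φ : (0, ε) → ℝⁿ, λ_i : (0, ε) → ℝ for i ∈ I₁ ∪ {0} where I₁ := {i ∈ {1, …, p} : f_i restricted to ℝ^J is not constant}, ν_k : (0, ε) → ℝ for k ∉ J, and μ : (0, ε) → ℝ, such that: (c1) ‖φ(t)‖ → +∞ as t → 0⁺; (c2) f₀(φ(t)) → f* as t → 0⁺; (c3) f_i(φ(t)) ≤ 0 for all t and all i ∈ I₁; (c4) J = {j ∈ {1, …, n} : φ_j is not identically zero}; (c5) φ_k(t) = 0 for all t and all k ∉ J; (c6) Σ_{i ∈ I₁ ∪ {0}} λ_i(t) ∇f_i(φ(t)) + Σ_{k ∉ J} ν_k(t) e^k +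 μ(t) φ(t) = 0 for all t; (c7) λ_i(t) f_i(φ(t)) = 0 for all t and all i ∈ I₁; (c8) λ_i(t) ≥ 0 for all t and all i ∈ I₁ ∪ {0}; (c9) ‖(λ(t), ν(t), μ(t))‖ = 1 for all t, where e^k denotes the k-th standard basis vector. -/
open MvPolynomial Set Filter
open scoped Classical

noncomputable section

/-- The exponent vector of a monomial, viewed as a point of `ℝⁿ`. -/
def expVec {n : ℕ} (κ : Fin n →₀ ℕ) : Fin n → ℝ := fun j => (κ j : ℝ)

/-- The Newton polyhedron at infinity `Γ(f)`: the convex hull of the support of `f`. -/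
def NewtonPolyhedron {n : ℕ} (f : MvPolynomial (Fin n) ℝ) : Set (Fin n → ℝ) :=
  convexHull ℝ (expVec '' (f.support : Set (Fin n →₀ ℕ)))

/-- `d(q, Γ(f)) := min {⟨q, κ⟩ : κ ∈ Γ(f)}`. -/
def NewtonD {n : ℕ} (f : MvPolynomial (Fin n) ℝ) (q : Fin n → ℝ) : ℝ :=
  sInf ((fun κ : Fin n → ℝ => ∑ j, q j * κ j) '' NewtonPolyhedron f)

/-- `Δ(q, Γ(f)) := {κ ∈ Γ(f) : ⟨q, κ⟩ = d(q, Γ(f))}`. -/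
def NewtonFace {n : ℕ} (f : MvPolynomial (Fin n) ℝ) (q : Fin n → ℝ) : Set (Fin n → ℝ) :=
  {κ ∈ NewtonPolyhedron f | ∑ j, q j * κ j = NewtonD f q}

/-- For a set `Δ ⊆ ℝⁿ`, the polynomial `f_Δ := ∑_{κ ∈ Δ} a_κ x^κ`. -/
def facePoly {n : ℕ} (f : MvPolynomial (Fin n) ℝ) (Δ : Set (Fin n → ℝ)) :
    MvPolynomial (Fin n) ℝ :=
  ∑ κ ∈ f.support.filter (fun κ => expVec κ ∈ Δ), monomial κ (f.coeff κ)

/-- `ℝ^J := {x ∈ ℝⁿ : x_j = 0 for all j ∉ J}`. -/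
def RJ {n : ℕ} (J : Set (Fin n)) : Set (Fin n → ℝ) := {x | ∀ j ∉ J, x j = 0}

/-- The restriction of `f` to `ℝ^J` is not constant. -/
def NotConstOn {n : ℕ} (f : MvPolynomial (Fin n) ℝ) (J : Set (Fin n)) : Prop :=
  ∃ x ∈ RJ J, ∃ y ∈ RJ J, eval x f ≠ eval y f

/-- The Mangasarian–Fromovitz property at infinity for `inf {f 0 x : f i x ≤ 0, i = 1,…,p}`. -/
def MFinfty {n p : ℕ} (f : Fin (p + 1) → MvPolynomial (Fin n) ℝ) : Prop :=
  ∀ J : Set (Fin n), J.Nonempty → ∀ q x : Fin n → ℝ,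
    NewtonD (f 0) q < 0 →
    (∀ i, NotConstOn (f i) J → NewtonFace (f i) q ⊆ RJ J) →
    (∀ j, x j = 0 ↔ j ∉ J) →
    (∀ i, i ≠ 0 → eval x (facePoly (f i) (NewtonFace (f i) q)) ≤ 0) →
    ∃ v : Fin n → ℝ, v ≠ 0 ∧ ∀ i, NotConstOn (f i) J →
      eval x (facePoly (f i) (NewtonFace (f i) q)) = 0 →
      ∑ j, eval x (pderiv j (facePoly (f i) (NewtonFace (f i) q))) * v j < 0

/-- Kouchnirenko non-degeneracy at infinity. -/
def NondegenerateAtInfinity {n : ℕ} (f : MvPolynomial (Fin n) ℝ) : Prop :=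
  ∀ q : Fin n → ℝ, NewtonD f q < 0 →
    ∀ x : Fin n → ℝ, (∀ j, x j ≠ 0) →
      ¬ ∀ j, eval x (pderiv j (facePoly f (NewtonFace f q))) = 0

/-- A convenient polynomial. -/
def Convenient {n : ℕ} (f : MvPolynomial (Fin n) ℝ) : Prop :=
  ∀ j : Fin n, ∃ c : ℝ, 0 < c ∧ c • (Pi.single j 1 : Fin n → ℝ) ∈ NewtonPolyhedron f

/-- A bad face of `Γ(f)`. -/
def BadFace {n : ℕ} (f : MvPolynomial (Fin n) ℝ) (Δ : Set (Fin n → ℝ)) : Prop :=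
  (∃ q : Fin n → ℝ, Δ = NewtonFace f q) ∧
  (0 : Fin n → ℝ) ∈ affineSpan ℝ Δ ∧
  ∃ q : Fin n → ℝ, (∃ i j, q i * q j < 0) ∧
    {κ : Fin n → ℝ | ∑ j, q j * κ j = 0} ∩ NewtonPolyhedron f = Δ

/-- The set of critical values of `f`. -/
def K0 {n : ℕ} (f : MvPolynomial (Fin n) ℝ) : Set ℝ :=
  {c | ∃ x : Fin n → ℝ, (∀ j, eval x (pderiv j f) = 0) ∧ eval x f = c}

/-- `Σ∞(f)`: critical values of `f_Δ` over all bad faces `Δ`. -/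
def SigmaInfty {n : ℕ} (f : MvPolynomial (Fin n) ℝ) : Set ℝ :=
  {c | ∃ Δ : Set (Fin n → ℝ), BadFace f Δ ∧ ∃ x : Fin n → ℝ,
    (∀ j, eval x (pderiv j (facePoly f Δ)) = 0) ∧ eval x (facePoly f Δ) = c}

/-- `Σ∞'(f)`: critical values of `f_Δ` on `(ℝ ∖ {0})ⁿ` over all bad faces `Δ`. -/
def SigmaInfty' {n : ℕ} (f : MvPolynomial (Fin n) ℝ) : Set ℝ :=
  {c | ∃ Δ : Set (Fin n → ℝ), BadFace f Δ ∧ ∃ x : Fin n → ℝ, (∀ j, x j ≠ 0) ∧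
    (∀ j, eval x (pderiv j (facePoly f Δ)) = 0) ∧ eval x (facePoly f Δ) = c}

/-- The Euclidean norm on `Fin k → ℝ`. -/
def euclNorm {k : ℕ} (x : Fin k → ℝ) : ℝ := Real.sqrt (∑ j, (x j) ^ 2)

/-- Basic semialgebraic subsets of `ℝ^m`. -/
def BasicSA {m : ℕ} (A : Set (Fin m → ℝ)) : Prop :=
  ∃ (k l : ℕ) (g : Fin k → MvPolynomial (Fin m) ℝ) (h : Fin l → MvPolynomial (Fin m) ℝ),
    A = {x | (∀ i, eval x (g i) = 0) ∧ ∀ i, 0 < eval x (h i)}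

/-- Semialgebraic subsets of `ℝ^m`: finite unions of basic semialgebraic sets. -/
def IsSA {m : ℕ} (A : Set (Fin m → ℝ)) : Prop :=
  ∃ (N : ℕ) (B : Fin N → Set (Fin m → ℝ)), (∀ i, BasicSA (B i)) ∧ A = ⋃ i, B i

/-- A semialgebraic scalar function on a domain `D ⊆ ℝ` (graph is semialgebraic). -/
def IsSAFunOn (D : Set ℝ) (f : ℝ → ℝ) : Prop :=
  IsSA {z : Fin 2 → ℝ | z 0 ∈ D ∧ z 1 = f (z 0)}

/-- A semialgebraic curve `D → ℝⁿ` (graph is semialgebraic). -/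
def IsSACurve {n : ℕ} (D : Set ℝ) (φ : ℝ → Fin n → ℝ) : Prop :=
  IsSA {z : Fin (n + 1) → ℝ | z 0 ∈ D ∧ ∀ j : Fin n, z j.succ = φ (z 0) j}

/-- A semialgebraic map `ℝⁿ → ℝ^p` (graph is semialgebraic). -/
def IsSAMap {n p : ℕ} (F : (Fin n → ℝ) → (Fin p → ℝ)) : Prop :=
  IsSA {z : Fin (n + p) → ℝ |
    (fun i : Fin p => z (Fin.natAdd n i)) = F (fun j : Fin n => z (Fin.castAdd p j))}

/-- A space with a ring of polynomial functions. -/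
class PS (X : Type) where
  A : Type
  [ring : CommRing A]
  ev : X → A →+* ℝ
  cst : ℝ → A
  ev_cst : ∀ x r, ev x (cst r) = r

attribute [reducible, instance] PS.ring

/-- Regular (polynomial) functions. -/
def Reg {X : Type} [PS X] (g : X → ℝ) : Prop := ∃ a : PS.A X, ∀ x, PS.ev x a = g x

/-- Semialgebraic predicates: determined by finitely many signs. -/
def SA {X : Type} [PS X] (P : X → Prop) : Prop :=
  ∃ M : Finset (PS.A X), ∀ x x',
    (∀ a ∈ M, SignType.sign (PS.ev x a) = SignType.sign (PS.ev x' a)) → P x → P x'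

/-- Polynomial maps. -/
def PM {Y X : Type} [PS Y] [PS X] (φ : Y → X) : Prop :=
  ∀ a : PS.A X, Reg (fun y => PS.ev (φ y) a)

section basic
variable {X Y : Type} [PS X] [PS Y]

theorem Reg.ev (a : PS.A X) : Reg (fun x => PS.ev x a) := ⟨a, fun _ => rfl⟩
theorem Reg.const (r : ℝ) : Reg (fun _ : X => r) := ⟨PS.cst r, fun x => PS.ev_cst x r⟩
theorem Reg.add {f g : X → ℝ} (hf : Reg f) (hg : Reg g) : Reg (fun x => f x + g x) := by
  obtain ⟨a, ha⟩ := hf; obtain ⟨b, hb⟩ := hg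
  exact ⟨a + b, fun x => by rw [map_add, ha, hb]⟩
theorem Reg.sub {f g : X → ℝ} (hf : Reg f) (hg : Reg g) : Reg (fun x => f x - g x) := by
  obtain ⟨a, ha⟩ := hf; obtain ⟨b, hb⟩ := hg
  exact ⟨a - b, fun x => by rw [map_sub, ha, hb]⟩
theorem Reg.mul {f g : X → ℝ} (hf : Reg f) (hg : Reg g) : Reg (fun x => f x * g x) := by
  obtain ⟨a, ha⟩ := hf; obtain ⟨b, hb⟩ := hg
  exact ⟨a * b, fun x => by rw [map_mul, ha, hb]⟩
theorem Reg.pow {f : X → ℝ} (hf : Reg f) (k : ℕ) : Reg (fun x => f x ^ k) := by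
  obtain ⟨a, ha⟩ := hf
  exact ⟨a ^ k, fun x => by rw [map_pow, ha]⟩
theorem Reg.sum {ι : Type*} (s : Finset ι) {f : ι → X → ℝ} (hf : ∀ i ∈ s, Reg (f i)) :
    Reg (fun x => ∑ i ∈ s, f i x) := by
  induction s using Finset.induction_on with
  | empty => simpa using Reg.const (X := X) 0
  | insert a s ha ih =>
    simp only [Finset.sum_insert ha]
    exact (hf a (by simp)).add (ih (fun i hi => hf i (by simp [hi])))
theorem Reg.comp {f : X → ℝ} (hf : Reg f) {φ : Y → X} (hφ : PM φ) : Reg (fun y => f (φ y)) := by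
  obtain ⟨a, ha⟩ := hf
  simpa [ha] using hφ a

theorem PM.id : PM (fun x : X => x) := fun a => ⟨a, fun _ => rfl⟩
theorem PM.comp {Z : Type} [PS Z] {φ : Y → X} (hφ : PM φ) {ψ : Z → Y} (hψ : PM ψ) :
    PM (fun z => φ (ψ z)) := fun a => (hφ a).comp hψ

theorem SA.comp {P : X → Prop} (hP : SA P) {φ : Y → X} (hφ : PM φ) : SA (fun y => P (φ y)) := by
  obtain ⟨M, hM⟩ := hP
  choose b hb using hφ
  refine ⟨M.image b, fun x x' h => hM _ _ fun a ha => ?_⟩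
  have := h (b a) (Finset.mem_image_of_mem _ ha)
  rwa [hb, hb] at this

theorem SA.congr {P Q : X → Prop} (hP : SA P) (h : ∀ x, Q x ↔ P x) : SA Q := by
  have : Q = P := funext fun x => propext (h x)
  rwa [this]

theorem SA.const (p : Prop) : SA (fun _ : X => p) := ⟨∅, fun _ _ _ h => h⟩

theorem SA.not {P : X → Prop} (hP : SA P) : SA (fun x => ¬ P x) := by
  obtain ⟨M, hM⟩ := hP
  exact ⟨M, fun x x' h hx hx' => hx (hM x' x (fun a ha => (h a ha).symm) hx')⟩

theorem SA.and {P Q : X → Prop} (hP : SA P) (hQ : SA Q) : SA (fun x => P x ∧ Q x) := by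
  obtain ⟨M, hM⟩ := hP; obtain ⟨N, hN⟩ := hQ
  refine ⟨M ∪ N, fun x x' h hx => ⟨hM x x' (fun a ha => h a ?_) hx.1,
    hN x x' (fun a ha => h a ?_) hx.2⟩⟩ <;> simp [ha]

theorem SA.or {P Q : X → Prop} (hP : SA P) (hQ : SA Q) : SA (fun x => P x ∨ Q x) :=
  ((hP.not.and hQ.not).not).congr fun x => by tauto

theorem SA.imp {P Q : X → Prop} (hP : SA P) (hQ : SA Q) : SA (fun x => P x → Q x) :=
  (hP.not.or hQ).congr fun x => by tauto

theorem SA.finset_all {ι : Type*} (s : Finset ι) {P : ι → X → Prop} (hP : ∀ i, SA (P i)) :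
    SA (fun x => ∀ i ∈ s, P i x) := by
  induction s using Finset.induction_on with
  | empty => simpa using SA.const (X := X) True
  | insert a s ha ih =>
    exact ((hP a).and ih).congr fun x => by simp

theorem SA.fin_all {ι : Type*} [Finite ι] {P : ι → X → Prop} (hP : ∀ i, SA (P i)) :
    SA (fun x => ∀ i, P i x) := by
  have := Fintype.ofFinite ι
  exact (SA.finset_all Finset.univ hP).congr fun x => by simp

theorem SA.fin_ex {ι : Type*} [Finite ι] {P : ι → X → Prop} (hP : ∀ i, SA (P i)) :
    SA (fun x => ∃ i, P i x) :=
  ((SA.fin_all fun i => (hP i).not).not).congr fun x => by simp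

theorem SA.sign {f : X → ℝ} (hf : Reg f) (s : SignType) :
    SA (fun x => SignType.sign (f x) = s) := by
  obtain ⟨a, ha⟩ := hf
  refine ⟨{a}, fun x x' h => ?_⟩
  have := h a (by simp)
  rw [ha, ha] at this
  exact fun hs => this.symm.trans hs

theorem SA.pos {f : X → ℝ} (hf : Reg f) : SA (fun x => 0 < f x) :=
  (SA.sign hf 1).congr fun _ => by rw [sign_eq_one_iff]

theorem SA.lt {f g : X → ℝ} (hf : Reg f) (hg : Reg g) : SA (fun x => f x < g x) :=
  (SA.pos (hg.sub hf)).congr fun x => by rw [sub_pos]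

theorem SA.le {f g : X → ℝ} (hf : Reg f) (hg : Reg g) : SA (fun x => f x ≤ g x) :=
  (SA.lt hg hf).not.congr fun x => by rw [not_lt]

theorem SA.eq {f g : X → ℝ} (hf : Reg f) (hg : Reg g) : SA (fun x => f x = g x) :=
  ((SA.le hf hg).and (SA.le hg hf)).congr fun _ => le_antisymm_iff

end basic

instance PS.prodReal (X : Type) [PS X] : PS (X × ℝ) where
  A := Polynomial (PS.A X)
  ev z := Polynomial.eval₂RingHom (PS.ev z.1) z.2
  cst r := Polynomial.C (PS.cst r)
  ev_cst z r := by simp [PS.ev_cst]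

section prod
variable {X Y : Type} [PS X] [PS Y]

/-- Specialization. -/
def sp (x : X) (g : Polynomial (PS.A X)) : Polynomial ℝ := g.map (PS.ev x)

theorem ev_prod (x : X) (y : ℝ) (g : Polynomial (PS.A X)) :
    PS.ev (X := X × ℝ) (x, y) g = (sp x g).eval y := by
  change Polynomial.eval₂ _ _ _ = _
  rw [sp, Polynomial.eval_map]

theorem PM.fst : PM (fun z : X × ℝ => z.1) := fun a =>
  ⟨(Polynomial.C a : Polynomial (PS.A X)), fun z => by
    obtain ⟨x, y⟩ := z
    rw [ev_prod]; simp [sp]⟩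

theorem Reg.snd : Reg (fun z : X × ℝ => z.2) :=
  ⟨(Polynomial.X : Polynomial (PS.A X)), fun z => by
    obtain ⟨x, y⟩ := z
    rw [ev_prod]; simp [sp]⟩

theorem PM.prod {φ : Y → X} (hφ : PM φ) {g : Y → ℝ} (hg : Reg g) :
    PM (fun y => (φ y, g y)) := by
  intro a
  simp only [ev_prod]
  have : ∀ y, (sp (φ y) a).eval (g y) = ∑ i ∈ Finset.range (Polynomial.natDegree (R := PS.A X) a + 1),
      PS.ev (φ y) (Polynomial.coeff (R := PS.A X) a i) * g y ^ i := by
    intro y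
    rw [sp, Polynomial.eval_map, Polynomial.eval₂_eq_sum_range]
  simp only [this]
  exact Reg.sum _ fun i _ => (hφ _).mul (hg.pow i)

theorem Reg.sp {φ : Y → X} (hφ : PM φ) {g : Y → ℝ} (hg : Reg g) (p : Polynomial (PS.A X)) :
    Reg (fun y => (sp (φ y) p).eval (g y)) := by
  have := (PM.prod hφ hg) p
  simpa only [ev_prod] using this

theorem SA.sp_ne (p : Polynomial (PS.A X)) : SA (fun x => sp x p ≠ 0) := by
  have : ∀ x : X, _root_.sp x p = 0 ↔ ∀ i ∈ Finset.range (p.natDegree + 1), PS.ev x (p.coeff i) = 0 := by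
    intro x
    constructor
    · intro h i _
      have := congrArg (fun q => Polynomial.coeff q i) h
      simpa [_root_.sp] using this
    · intro h
      ext i
      by_cases hi : i < p.natDegree + 1
      · simpa [_root_.sp] using h i (by simpa using hi)
      · simp [_root_.sp, Polynomial.coeff_eq_zero_of_natDegree_lt (show p.natDegree < i by omega)]
  refine (SA.finset_all (Finset.range (p.natDegree + 1)) (P := fun i x => PS.ev x (p.coeff i) = 0)
    (fun i => SA.eq (Reg.ev _) (Reg.const 0))).not.congr fun x => ?_
  rw [Ne, this]

end prod

/-! Real analysis of univariate polynomials. -/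

theorem sign_const (q : Polynomial ℝ) {u v : ℝ} (h : ∀ z ∈ uIcc u v, q.eval z ≠ 0) :
    SignType.sign (q.eval u) = SignType.sign (q.eval v) := by
  by_contra hne
  have hu := h u left_mem_uIcc
  have hv := h v right_mem_uIcc
  have h0 : (0:ℝ) ∈ uIcc (q.eval u) (q.eval v) := by
    rw [mem_uIcc]
    rcases lt_or_gt_of_ne hu with h1 | h1 <;> rcases lt_or_gt_of_ne hv with h2 | h2
    · exact absurd (by rw [sign_neg h1, sign_neg h2]) hne
    · exact Or.inl ⟨h1.le, h2.le⟩
    · exact Or.inr ⟨h2.le, h1.le⟩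
    · exact absurd (by rw [sign_pos h1, sign_pos h2]) hne
  obtain ⟨z, hz, hz0⟩ := intermediate_value_uIcc (f := fun z => q.eval z)
    (q.continuous.continuousOn) h0
  exact h z hz hz0

theorem sign_const' (q : Polynomial ℝ) {a b u v : ℝ} (h : ¬ (q ≠ 0 ∧ ∃ c, q.eval c = 0 ∧ a < c ∧ c < b))
    (hu : u ∈ Ioo a b) (hv : v ∈ Ioo a b) :
    SignType.sign (q.eval u) = SignType.sign (q.eval v) := by
  by_cases hq : q = 0
  · simp [hq]
  apply sign_const
  intro z hz h0
  have := (ordConnected_Ioo (a := a) (b := b)).uIcc_subset hu hv hz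
  exact h ⟨hq, z, h0, this.1, this.2⟩

theorem mul_neg_of_deriv (g : Polynomial ℝ) {a b y : ℝ} (hy : y ∈ Ioo a b) (h0 : g.eval y = 0)
    (h : ∀ z ∈ Ioo a b, g.derivative.eval z ≠ 0) : g.eval a * g.eval b < 0 := by
  have hs : ∀ z ∈ Ioo a b, SignType.sign (g.derivative.eval y) = SignType.sign (g.derivative.eval z) := by
    intro z hz
    apply sign_const' (a := a) (b := b) _ _ hy hz
    rintro ⟨_, c, hc, h1, h2⟩
    exact h c ⟨h1, h2⟩ hc
  rcases lt_or_gt_of_ne (h y hy) with h1 | h1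
  · have hm : StrictAntiOn (fun z => g.eval z) (Icc a b) := by
      apply strictAntiOn_of_deriv_neg (convex_Icc a b) g.continuous.continuousOn
      intro z hz
      rw [interior_Icc] at hz
      have := hs z hz
      rw [sign_neg h1] at this
      rw [Polynomial.deriv]
      exact sign_eq_neg_one_iff.1 this.symm
    have h2 := hm (left_mem_Icc.2 (hy.1.trans hy.2).le) (Ioo_subset_Icc_self hy) hy.1
    have h3 := hm (Ioo_subset_Icc_self hy) (right_mem_Icc.2 (hy.1.trans hy.2).le) hy.2
    simp only [h0] at h2 h3
    exact mul_neg_of_pos_of_neg h2 h3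
  · have hm : StrictMonoOn (fun z => g.eval z) (Icc a b) := by
      apply strictMonoOn_of_deriv_pos (convex_Icc a b) g.continuous.continuousOn
      intro z hz
      rw [interior_Icc] at hz
      have := hs z hz
      rw [sign_pos h1] at this
      rw [Polynomial.deriv]
      exact sign_eq_one_iff.1 this.symm
    have h2 := hm (left_mem_Icc.2 (hy.1.trans hy.2).le) (Ioo_subset_Icc_self hy) hy.1
    have h3 := hm (Ioo_subset_Icc_self hy) (right_mem_Icc.2 (hy.1.trans hy.2).le) hy.2
    simp only [h0] at h2 h3
    exact mul_neg_of_neg_of_pos h2 h3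

/-- `c` is a root of a nonzero member of the family. -/
def RootOf {κ : Type} (q : κ → Polynomial ℝ) (c : ℝ) : Prop := ∃ k, q k ≠ 0 ∧ (q k).eval c = 0

theorem rootOf_finite {κ : Type} [Finite κ] (q : κ → Polynomial ℝ) : {c | RootOf q c}.Finite := by
  have : {c | RootOf q c} = ⋃ k, {c | q k ≠ 0 ∧ (q k).eval c = 0} := by
    ext c; simp [RootOf]
  rw [this]
  apply Set.finite_iUnion
  intro k
  by_cases hk : q k = 0
  · simp [hk]
  · refine ((q k).rootSet_finite ℝ).subset ?_
    rintro c ⟨_, h⟩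
    rw [Polynomial.mem_rootSet]
    exact ⟨hk, by simpa using h⟩

theorem exists_left {s : Set ℝ} (hs : s.Finite) {y : ℝ} (h : ∃ c ∈ s, c < y) :
    ∃ a ∈ s, a < y ∧ ∀ c ∈ s, c < y → c ≤ a := by
  obtain ⟨a, ha, hm⟩ := Set.exists_max_image (s ∩ Iio y) id (hs.subset inter_subset_left)
    (by obtain ⟨c, h1, h2⟩ := h; exact ⟨c, h1, h2⟩)
  exact ⟨a, ha.1, ha.2, fun c h1 h2 => hm c ⟨h1, h2⟩⟩

theorem exists_right {s : Set ℝ} (hs : s.Finite) {y : ℝ} (h : ∃ c ∈ s, y < c) :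
    ∃ a ∈ s, y < a ∧ ∀ c ∈ s, y < c → a ≤ c := by
  obtain ⟨a, ha, hm⟩ := Set.exists_min_image (s ∩ Ioi y) id (hs.subset inter_subset_left)
    (by obtain ⟨c, h1, h2⟩ := h; exact ⟨c, h1, h2⟩)
  exact ⟨a, ha.1, ha.2, fun c h1 h2 => hm c ⟨h1, h2⟩⟩

/-- Test points. -/
def TestPt {κ : Type} (q : κ → Polynomial ℝ) (y : ℝ) : Prop :=
  y = 0 ∨ (∃ k, q k ≠ 0 ∧ ∃ a, (q k).eval a = 0 ∧ (y = a ∨ y = a + 1 ∨ y = a - 1)) ∨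
  ∃ k l, q k ≠ 0 ∧ ∃ a, (q k).eval a = 0 ∧ q l ≠ 0 ∧ ∃ b, (q l).eval b = 0 ∧ y = (a + b) / 2

theorem testPt_finite {κ : Type} [Finite κ] (q : κ → Polynomial ℝ) : {y | TestPt q y}.Finite := by
  have hR := rootOf_finite q
  refine (((Set.finite_singleton (0:ℝ)).union (hR.union ((hR.image (· + 1)).union
    (hR.image (· - 1))))).union (Set.Finite.image2 (fun a b => (a + b) / 2) hR hR)).subset ?_
  rintro y (h | ⟨k, hk, a, ha, h | h | h⟩ | ⟨k, l, hk, a, ha, hl, b, hb, h⟩)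
  · left; left; exact h
  · left; right; left; exact h ▸ ⟨k, hk, ha⟩
  · left; right; right; left; exact ⟨a, ⟨k, hk, ha⟩, h.symm⟩
  · left; right; right; right; exact ⟨a, ⟨k, hk, ha⟩, h.symm⟩
  · right; exact ⟨a, ⟨k, hk, ha⟩, b, ⟨l, hl, hb⟩, h.symm⟩

theorem exists_testPt {κ : Type} [Finite κ] (q : κ → Polynomial ℝ) (y : ℝ) :
    ∃ y', TestPt q y' ∧ ∀ k, SignType.sign ((q k).eval y) = SignType.sign ((q k).eval y') := by
  have hR := rootOf_finite q
  by_cases hy : RootOf q y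
  · obtain ⟨k, hk, h⟩ := hy
    exact ⟨y, Or.inr (Or.inl ⟨k, hk, y, h, Or.inl rfl⟩), fun _ => rfl⟩
  have key : ∀ y', (∀ c, RootOf q c → c ∉ uIcc y y') →
      ∀ k, SignType.sign ((q k).eval y) = SignType.sign ((q k).eval y') := by
    intro y' h k
    by_cases hk : q k = 0
    · simp [hk]
    exact sign_const _ fun z hz h0 => h z ⟨k, hk, h0⟩ hz
  by_cases hL : ∃ c ∈ {c | RootOf q c}, c < y <;> by_cases hU : ∃ c ∈ {c | RootOf q c}, y < c
  · obtain ⟨a, ⟨k, hk, ha⟩, hay, hamax⟩ := exists_left hR hL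
    obtain ⟨b, ⟨l, hl, hb⟩, hby, hbmin⟩ := exists_right hR hU
    refine ⟨(a + b) / 2, Or.inr (Or.inr ⟨k, l, hk, a, ha, hl, b, hb, rfl⟩), key _ ?_⟩
    intro c hc hmem
    have := (ordConnected_Ioo (a := a) (b := b)).uIcc_subset ⟨hay, hby⟩
      (show (a + b) / 2 ∈ Ioo a b from ⟨by linarith, by linarith⟩) hmem
    rcases lt_trichotomy c y with h | h | h
    · exact absurd (hamax c hc h) (not_le.2 this.1)
    · exact hy (h ▸ hc)
    · exact absurd (hbmin c hc h) (not_le.2 this.2)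
  · obtain ⟨a, ⟨k, hk, ha⟩, hay, hamax⟩ := exists_left hR hL
    refine ⟨a + 1, Or.inr (Or.inl ⟨k, hk, a, ha, Or.inr (Or.inl rfl)⟩), key _ ?_⟩
    intro c hc hmem
    have := (ordConnected_Ioi (a := a)).uIcc_subset hay
      (show a + 1 ∈ Ioi a from by simp) hmem
    rcases lt_trichotomy c y with h | h | h
    · exact absurd (hamax c hc h) (not_le.2 this)
    · exact hy (h ▸ hc)
    · exact hU ⟨c, hc, h⟩
  · obtain ⟨b, ⟨l, hl, hb⟩, hby, hbmin⟩ := exists_right hR hU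
    refine ⟨b - 1, Or.inr (Or.inl ⟨l, hl, b, hb, Or.inr (Or.inr rfl)⟩), key _ ?_⟩
    intro c hc hmem
    have := (ordConnected_Iio (a := b)).uIcc_subset hby
      (show b - 1 ∈ Iio b from by simp) hmem
    rcases lt_trichotomy c y with h | h | h
    · exact hL ⟨c, hc, h⟩
    · exact hy (h ▸ hc)
    · exact absurd (hbmin c hc h) (not_le.2 this)
  · refine ⟨0, Or.inl rfl, key _ ?_⟩
    intro c hc _
    rcases lt_trichotomy c y with h | h | h
    · exact hL ⟨c, hc, h⟩
    · exact hy (h ▸ hc)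
    · exact hU ⟨c, hc, h⟩

section elim

theorem SA.of_sign {X Y : Type} [PS X] [PS Y] {P : Y → Prop} (hP : SA P)
    (Q : X → Y → Prop)
    (h : ∀ (M : Finset (PS.A Y)) (s : M → SignType),
      SA (fun x : X => ∃ y, Q x y ∧ ∀ a : M, SignType.sign (PS.ev y a.1) = s a)) :
    SA (fun x => ∃ y, Q x y ∧ P y) := by
  obtain ⟨M, hM⟩ := hP
  refine (SA.fin_ex (ι := M → SignType) (P := fun s x =>
    (∃ y', P y' ∧ ∀ a : M, SignType.sign (PS.ev y' a.1) = s a) ∧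
      ∃ y, Q x y ∧ ∀ a : M, SignType.sign (PS.ev y a.1) = s a)
    (fun s => (SA.const _).and (h M s))).congr fun x => ?_
  constructor
  · rintro ⟨y, h1, h2⟩
    exact ⟨fun a => SignType.sign (PS.ev y a.1), ⟨y, h2, fun _ => rfl⟩, y, h1, fun _ => rfl⟩
  · rintro ⟨s, ⟨y', h1, h2⟩, y, h3, h4⟩
    refine ⟨y, h3, hM y' y (fun a ha => ?_) h1⟩
    rw [h2 ⟨a, ha⟩, h4 ⟨a, ha⟩]

/-- Elimination of a quantifier ranging over roots of a polynomial of degree at most `d`. -/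
def RootElim (d : ℕ) : Prop := ∀ (X : Type) [PS X] (g : Polynomial (PS.A X)), g.natDegree ≤ d →
  ∀ P : X × ℝ → Prop, SA P → SA (fun x => sp x g ≠ 0 ∧ ∃ y, (sp x g).eval y = 0 ∧ P (x, y))

theorem rootElim_zero : RootElim 0 := by
  intro X _ g hg P _
  refine (SA.const False).congr fun x => ?_
  simp only [iff_false, not_and, not_exists]
  intro h y h0 _
  rw [Polynomial.eq_C_of_natDegree_le_zero hg] at h h0
  simp [sp] at h h0
  exact h h0

theorem RootElim.pull {d : ℕ} (h : RootElim d) {X Y : Type} [PS X] [PS Y]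
    (g : Polynomial (PS.A X)) (hg : g.natDegree ≤ d) {π : Y → X} (hπ : PM π)
    {P : Y → ℝ → Prop} (hP : SA (fun z : Y × ℝ => P z.1 z.2)) :
    SA (fun y => sp (π y) g ≠ 0 ∧ ∃ b, (sp (π y) g).eval b = 0 ∧ P y b) := by
  choose b hb using hπ
  let g' : Polynomial (PS.A Y) := ∑ i ∈ Finset.range (d + 1), Polynomial.monomial i (b (g.coeff i))
  have hs : ∀ y, sp y g' = sp (π y) g := by
    intro y
    have : g = ∑ i ∈ Finset.range (d + 1), Polynomial.monomial i (g.coeff i) :=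
      Polynomial.as_sum_range' g (d + 1) (by omega)
    rw [this]
    simp only [sp, g', Polynomial.map_sum, Polynomial.map_monomial, hb]
  have hd : g'.natDegree ≤ d := by
    apply Polynomial.natDegree_sum_le_of_forall_le
    intro i hi
    refine (Polynomial.natDegree_monomial_le _).trans ?_
    simp at hi; omega
  have := h Y g' hd _ hP
  simpa only [hs] using this

theorem exists_red {X : Type} [PS X] {d : ℕ} (g : Polynomial (PS.A X)) (hg : g.natDegree = d + 1) :
    ∀ (e : ℕ) (h : Polynomial (PS.A X)), h.natDegree ≤ e → ∃ r : Polynomial (PS.A X),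
      r.natDegree ≤ d ∧ ∀ x y, PS.ev x g.leadingCoeff ≠ 0 → (sp x g).eval y = 0 →
        SignType.sign ((sp x h).eval y) = SignType.sign ((sp x r).eval y) := by
  intro e
  induction e with
  | zero => exact fun h hh => ⟨h, by omega, fun _ _ _ _ => rfl⟩
  | succ e ih =>
    intro h hh
    by_cases hd : h.natDegree ≤ d
    · exact ⟨h, hd, fun _ _ _ _ => rfl⟩
    push Not at hd
    have hed : d ≤ e := by omega
    obtain ⟨r, hr, hr'⟩ := ih (Polynomial.C (g.leadingCoeff ^ 2) * h -
      Polynomial.C (g.leadingCoeff * h.coeff (e + 1)) * (Polynomial.X ^ (e - d) * g)) (by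
        rw [Polynomial.natDegree_le_iff_coeff_eq_zero]
        intro N hN
        rw [Polynomial.coeff_sub, Polynomial.coeff_C_mul, Polynomial.coeff_C_mul,
          Polynomial.coeff_X_pow_mul', if_pos (by omega)]
        rcases (show e + 1 = N ∨ e + 1 < N by omega) with rfl | hN
        · rw [show e + 1 - (e - d) = g.natDegree by omega]
          change _ - _ * g.leadingCoeff = 0
          ring
        · rw [Polynomial.coeff_eq_zero_of_natDegree_lt (show h.natDegree < N by omega),
            Polynomial.coeff_eq_zero_of_natDegree_lt (show g.natDegree < N - (e - d) by omega)]
          simp)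
    refine ⟨r, hr, fun x y hx hy => ?_⟩
    rw [← hr' x y hx hy]
    have : (sp x (Polynomial.C (g.leadingCoeff ^ 2) * h -
      Polynomial.C (g.leadingCoeff * h.coeff (e + 1)) * (Polynomial.X ^ (e - d) * g))).eval y
      = (PS.ev x g.leadingCoeff) ^ 2 * (sp x h).eval y := by
      simp only [sp] at hy ⊢
      simp [hy]
    rw [this, sign_mul, sign_pos (a := PS.ev x g.leadingCoeff ^ 2) (sq_pos_of_ne_zero hx), one_mul]

theorem root_bound (g : Polynomial ℝ) (d : ℕ) (hd : g.natDegree = d + 1) (y : ℝ)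
    (hg : g ≠ 0) (hy : g.eval y = 0) :
    g.leadingCoeff ^ 2 * |y| < 2 * g.leadingCoeff ^ 2 + ∑ i ∈ Finset.range (d + 1), g.coeff i ^ 2 := by
  have h1 := Polynomial.IsRoot.norm_lt_cauchyBound hg (a := y) hy
  have hl : 0 < |g.leadingCoeff| := by simpa using hg
  set S := ∑ i ∈ Finset.range (d + 1), g.coeff i ^ 2
  have hS : 0 ≤ S := Finset.sum_nonneg fun i _ => sq_nonneg _
  have h2 : (Polynomial.cauchyBound g : ℝ) ≤ 2 + S / g.leadingCoeff ^ 2 := by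
    obtain ⟨B, hB⟩ : ∃ B : NNReal, (B : ℝ) = (1 + S / g.leadingCoeff ^ 2) * |g.leadingCoeff| :=
      ⟨Real.toNNReal _, Real.coe_toNNReal _ (by positivity)⟩
    have : (Polynomial.cauchyBound g : ℝ) ≤ 2 + S / g.leadingCoeff ^ 2 := by
      rw [Polynomial.cauchyBound]
      have h3 : (Finset.range g.natDegree).sup (fun x => ‖g.coeff x‖₊) ≤ B := by
        refine Finset.sup_le ?_
        intro i hi
        refine NNReal.coe_le_coe.1 ?_
        rw [hB]
        simp only [coe_nnnorm, Real.norm_eq_abs]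
        have h4 : g.coeff i ^ 2 ≤ S :=
          Finset.single_le_sum (f := fun i => g.coeff i ^ 2) (fun i _ => sq_nonneg _) (hd ▸ hi)
        have h5 : (1 + S / g.leadingCoeff ^ 2) * |g.leadingCoeff| =
            |g.leadingCoeff| + S / |g.leadingCoeff| := by
          rw [← sq_abs]; field_simp
        rw [h5]
        rw [← sq_abs] at h4
        have h6 : |g.coeff i| ^ 2 / |g.leadingCoeff| ≤ S / |g.leadingCoeff| := by gcongr
        have h7 : |g.coeff i| ≤ |g.leadingCoeff| + |g.coeff i| ^ 2 / |g.leadingCoeff| := by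
          rw [← sub_nonneg]
          have : |g.leadingCoeff| + |g.coeff i| ^ 2 / |g.leadingCoeff| - |g.coeff i| =
            (|g.leadingCoeff| ^ 2 + |g.coeff i| ^ 2 - |g.coeff i| * |g.leadingCoeff|) / |g.leadingCoeff| := by
              field_simp
          rw [this]
          apply div_nonneg _ hl.le
          nlinarith [sq_nonneg (|g.leadingCoeff| - |g.coeff i|), sq_nonneg (|g.leadingCoeff|), sq_nonneg (|g.coeff i|)]
        linarith
      replace h3 := NNReal.coe_le_coe.2 h3
      simp only [NNReal.coe_add, NNReal.coe_div, NNReal.coe_one, coe_nnnorm, Real.norm_eq_abs,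
        hB] at h3 ⊢
      rw [← le_sub_iff_add_le, div_le_iff₀ hl]
      refine h3.trans (le_of_eq ?_)
      ring
    exact this
  have h3 : |y| < 2 + S / g.leadingCoeff ^ 2 := lt_of_lt_of_le h1 h2
  have h4 : 0 < g.leadingCoeff ^ 2 := by rw [← sq_abs]; positivity
  calc g.leadingCoeff ^ 2 * |y| < g.leadingCoeff ^ 2 * (2 + S / g.leadingCoeff ^ 2) := by gcongr
    _ = _ := by rw [mul_add, mul_div_cancel₀ _ h4.ne', mul_comm]

end elim

theorem rootElim_core {d : ℕ} (hd : 1 ≤ d) (ih : RootElim d) {X : Type} [PS X]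
    (g : Polynomial (PS.A X)) (hg : g.natDegree = d + 1) {ι : Type} [Finite ι]
    (H : ι → Polynomial (PS.A X)) (hH : ∀ i, (H i).natDegree ≤ d) (s : ι → SignType) :
    SA (fun x => PS.ev x g.leadingCoeff ≠ 0 ∧ ∃ y, (sp x g).eval y = 0 ∧
      ∀ i, SignType.sign ((sp x (H i)).eval y) = s i) := by
  have := Fintype.ofFinite ι
  set c := g.leadingCoeff with hc
  set β : PS.A X := 2 * c ^ 2 + ∑ i ∈ Finset.range (d + 1), g.coeff i ^ 2 with hβ
  let W : ι ⊕ Fin 3 → Polynomial (PS.A X) := Sum.elim H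
    ![Polynomial.derivative g, Polynomial.C (c ^ 2) * Polynomial.X - Polynomial.C β,
      Polynomial.C (c ^ 2) * Polynomial.X + Polynomial.C β]
  have hW : ∀ k, (W k).natDegree ≤ d := by
    rintro (i | j)
    · exact hH i
    · fin_cases j
      · refine (Polynomial.natDegree_derivative_le g).trans (by omega)
      · refine le_trans ?_ hd
        change (Polynomial.C (c ^ 2) * Polynomial.X - Polynomial.C β).natDegree ≤ 1
        compute_degree
      · refine le_trans ?_ hd
        change (Polynomial.C (c ^ 2) * Polynomial.X + Polynomial.C β).natDegree ≤ 1
        compute_degree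
  have main : SA (fun x => PS.ev x c ≠ 0 ∧
      ((∃ k, sp x (W k) ≠ 0 ∧ ∃ y, (sp x (W k)).eval y = 0 ∧ ((sp x g).eval y = 0 ∧
        ∀ i, SignType.sign ((sp x (H i)).eval y) = s i)) ∨
      ∃ k l, sp x (W k) ≠ 0 ∧ ∃ a, (sp x (W k)).eval a = 0 ∧
        (sp x (W l) ≠ 0 ∧ ∃ b, (sp x (W l)).eval b = 0 ∧ (a < b ∧
          (sp x g).eval a * (sp x g).eval b < 0 ∧
          (∀ i, SignType.sign ((sp x (H i)).eval ((a + b) * (1 / 2))) = s i) ∧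
          ∀ i, ¬ (sp x (H i) ≠ 0 ∧ ∃ c, (sp x (H i)).eval c = 0 ∧ (a < c ∧ c < b)))))) := by
    refine ((SA.eq (Reg.ev c) (Reg.const 0)).not).and (SA.or ?_ ?_)
    · refine SA.fin_ex fun k => ?_
      refine ih.pull (W k) (hW k) PM.id (P := fun x y => (sp x g).eval y = 0 ∧
        ∀ i, SignType.sign ((sp x (H i)).eval y) = s i) ?_
      exact (SA.eq (Reg.sp PM.fst Reg.snd g) (Reg.const 0)).and
        (SA.fin_all fun i => SA.sign (Reg.sp PM.fst Reg.snd _) _)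
    · refine SA.fin_ex fun k => SA.fin_ex fun l => ?_
      refine ih.pull (W k) (hW k) PM.id (P := fun x a => (sp x (W l) ≠ 0 ∧ ∃ b,
          (sp x (W l)).eval b = 0 ∧ (a < b ∧
          (sp x g).eval a * (sp x g).eval b < 0 ∧
          (∀ i, SignType.sign ((sp x (H i)).eval ((a + b) * (1 / 2))) = s i) ∧
          ∀ i, ¬ (sp x (H i) ≠ 0 ∧ ∃ c, (sp x (H i)).eval c = 0 ∧ (a < c ∧ c < b))))) ?_
      refine ih.pull (W l) (hW l) PM.fst (P := fun (z : X × ℝ) b => (z.2 < b ∧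
          (sp z.1 g).eval z.2 * (sp z.1 g).eval b < 0 ∧
          (∀ i, SignType.sign ((sp z.1 (H i)).eval ((z.2 + b) * (1 / 2))) = s i) ∧
          ∀ i, ¬ (sp z.1 (H i) ≠ 0 ∧ ∃ c, (sp z.1 (H i)).eval c = 0 ∧ (z.2 < c ∧ c < b)))) ?_
      have r1 : Reg (fun z : (X × ℝ) × ℝ => z.1.2) := Reg.snd.comp PM.fst
      have r2 : Reg (fun z : (X × ℝ) × ℝ => z.2) := Reg.snd
      have p0 : PM (fun z : (X × ℝ) × ℝ => z.1.1) := PM.fst.comp PM.fst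
      refine (SA.lt r1 r2).and ((SA.lt ((Reg.sp p0 r1 g).mul (Reg.sp p0 r2 g)) (Reg.const 0)).and
        ((SA.fin_all fun i => SA.sign (Reg.sp p0 ((r1.add r2).mul (Reg.const _)) _) _).and
          (SA.fin_all fun i => SA.not ?_)))
      refine ih.pull (H i) (hH i) p0 (P := fun (z : (X × ℝ) × ℝ) c => z.1.2 < c ∧ c < z.2) ?_
      exact (SA.lt (r1.comp PM.fst) Reg.snd).and (SA.lt Reg.snd (r2.comp PM.fst))
  refine main.congr fun x => and_congr_right fun hx => ?_
  have hlead : (sp x g).leadingCoeff = PS.ev x c :=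
    Polynomial.leadingCoeff_map_of_leadingCoeff_ne_zero _ hx
  have hnd : (sp x g).natDegree = d + 1 := by
    rw [← hg]; exact Polynomial.natDegree_map_of_leadingCoeff_ne_zero _ hx
  have hg0 : sp x g ≠ 0 := by
    intro h; rw [h] at hnd; simp at hnd
  constructor
  · rintro ⟨y, hy, hsy⟩
    by_cases hroot : RootOf (fun k => sp x (W k)) y
    · obtain ⟨k, hk, hky⟩ := hroot
      exact Or.inl ⟨k, hk, y, hky, hy, hsy⟩
    right
    have hR := rootOf_finite (fun k => sp x (W k))
    have hbd := root_bound (sp x g) d hnd y hg0 hy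
    rw [hlead] at hbd
    set C := PS.ev x c with hC
    set B := PS.ev x β with hB
    have hBeq : B = 2 * C ^ 2 + ∑ i ∈ Finset.range (d + 1), (sp x g).coeff i ^ 2 := by
      simp [hB, hβ, hC, sp, map_ofNat]
    rw [← hBeq] at hbd
    have hC2 : 0 < C ^ 2 := sq_pos_of_ne_zero hx
    have hhi : RootOf (fun k => sp x (W k)) (B / C ^ 2) := by
      refine ⟨Sum.inr 1, ?_, ?_⟩
      · intro h
        have := congrArg (fun q => Polynomial.coeff q 1) h
        simp [W, sp] at this
        rw [← Polynomial.C_pow, Polynomial.coeff_C_zero] at this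
        exact hx (pow_eq_zero_iff two_ne_zero |>.1 this)
      · simp [W, sp, ← hB, ← hC]
        field_simp
        ring
    have hlo : RootOf (fun k => sp x (W k)) (- B / C ^ 2) := by
      refine ⟨Sum.inr 2, ?_, ?_⟩
      · intro h
        have := congrArg (fun q => Polynomial.coeff q 1) h
        simp [W, sp] at this
        rw [← Polynomial.C_pow, Polynomial.coeff_C_zero] at this
        exact hx (pow_eq_zero_iff two_ne_zero |>.1 this)
      · simp [W, sp, ← hB, ← hC]
        field_simp
        ring
    have hylt : |y| < B / C ^ 2 := by rw [lt_div_iff₀ hC2]; linarith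
    rw [abs_lt] at hylt
    obtain ⟨a, ⟨k, hk, ha⟩, hay, hamax⟩ := exists_left hR (y := y)
      ⟨_, hlo, by rw [neg_div]; exact hylt.1⟩
    obtain ⟨b, ⟨l, hl, hb⟩, hby, hbmin⟩ := exists_right hR (y := y) ⟨_, hhi, hylt.2⟩
    have hno : ∀ c, RootOf (fun k => sp x (W k)) c → ¬ (a < c ∧ c < b) := by
      rintro c hc ⟨h1, h2⟩
      rcases lt_trichotomy c y with h | h | h
      · exact absurd (hamax c hc h) (not_le.2 h1)
      · exact hroot (h ▸ hc)
      · exact absurd (hbmin c hc h) (not_le.2 h2)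
    have hnoH : ∀ i, ¬ (sp x (H i) ≠ 0 ∧ ∃ c, (sp x (H i)).eval c = 0 ∧ (a < c ∧ c < b)) := by
      rintro i ⟨h1, c, h2, h3⟩
      exact hno c ⟨Sum.inl i, h1, h2⟩ h3
    refine ⟨k, l, hk, a, ha, hl, b, hb, hay.trans hby, ?_, ?_, hnoH⟩
    · apply mul_neg_of_deriv _ (y := y) ⟨hay, hby⟩ hy
      intro z hz h0
      refine hno z ⟨Sum.inr 0, ?_, ?_⟩ hz
      · simp only [W, sp, Sum.elim_inr, Matrix.cons_val_zero, ← Polynomial.derivative_map]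
        intro h
        have := Polynomial.derivative_eq_zero.1 h
        rw [sp] at hnd
        omega
      · simpa [W, sp, ← Polynomial.derivative_map] using h0
    · intro i
      rw [← hsy i]
      exact sign_const' _ (hnoH i) ⟨by linarith, by linarith⟩ ⟨hay, hby⟩
  · rintro (⟨k, _, y, _, hy, hsy⟩ | ⟨k, l, _, a, _, _, b, _, hab, hneg, hs, hno⟩)
    · exact ⟨y, hy, hsy⟩
    · have h0 : (0:ℝ) ∈ uIcc ((sp x g).eval a) ((sp x g).eval b) := by
        rw [mem_uIcc]
        rcases mul_neg_iff.1 hneg with ⟨h1, h2⟩ | ⟨h1, h2⟩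
        · exact Or.inr ⟨h2.le, h1.le⟩
        · exact Or.inl ⟨h1.le, h2.le⟩
      obtain ⟨y, hy, hy0⟩ := intermediate_value_uIcc (f := fun z => (sp x g).eval z)
        ((sp x g).continuous.continuousOn) h0
      simp only at hy0
      rw [uIcc_of_le hab.le] at hy
      have hya : y ≠ a := by rintro rfl; simp [hy0] at hneg
      have hyb : y ≠ b := by rintro rfl; simp [hy0] at hneg
      have hy' : y ∈ Ioo a b := ⟨lt_of_le_of_ne hy.1 hya.symm, lt_of_le_of_ne hy.2 hyb⟩
      refine ⟨y, hy0, fun i => ?_⟩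
      rw [← hs i]
      exact sign_const' _ (hno i) hy' ⟨by linarith, by linarith⟩

theorem rootElim_step {d : ℕ} (ih : RootElim d) : RootElim (d + 1) := by
  intro X _ g hg P hP
  by_cases hgd : g.natDegree ≤ d
  · exact ih X g hgd P hP
  have hg1 : g.natDegree = d + 1 := by omega
  have hlow := ih X g.eraseLead (by
    have := Polynomial.eraseLead_natDegree_le g; omega) P hP
  have hhigh : SA (fun x => ∃ y : X × ℝ, (PS.ev x g.leadingCoeff ≠ 0 ∧ y.1 = x ∧
      (sp x g).eval y.2 = 0) ∧ P y) := by
    refine SA.of_sign hP _ fun M s => ?_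
    choose r hr hr' using fun a : M => exists_red g hg1 (Polynomial.natDegree (R := PS.A X) a.1)
      a.1 le_rfl
    have : SA (fun x => PS.ev x g.leadingCoeff ≠ 0 ∧ ∃ y, (sp x g).eval y = 0 ∧
      ∀ a : M, SignType.sign ((sp x (r a)).eval y) = s a) := by
      rcases Nat.eq_zero_or_pos d with rfl | hd
      · refine (((SA.eq (Reg.ev g.leadingCoeff) (Reg.const 0)).not).and
          (SA.fin_all fun a : M => SA.sign (Reg.ev ((r a).coeff 0)) (s a))).congr fun x => ?_
        refine and_congr_right fun hx => ?_
        have hc : ∀ (a : M) y, (sp x (r a)).eval y = PS.ev x ((r a).coeff 0) := by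
          intro a y
          conv_lhs => rw [Polynomial.eq_C_of_natDegree_le_zero (hr a)]
          simp [sp]
        simp only [hc]
        constructor
        · rintro ⟨y, _, h⟩; exact h
        · intro h
          have hnd : (sp x g).degree = 1 := by
            rw [sp, Polynomial.degree_map_eq_of_leadingCoeff_ne_zero _ hx]
            exact (Polynomial.degree_eq_iff_natDegree_eq_of_pos (by norm_num)).2 hg1
          obtain ⟨y, hy⟩ := Polynomial.exists_root_of_degree_eq_one hnd
          exact ⟨y, hy, h⟩
      · exact rootElim_core hd ih g hg1 r hr s
    refine this.congr fun x => ?_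
    constructor
    · rintro ⟨⟨x', y⟩, ⟨hx, rfl, hy⟩, hs⟩
      refine ⟨hx, y, hy, fun a => ?_⟩
      rw [← hr' a _ y hx hy, ← hs a, ev_prod]
    · rintro ⟨hx, y, hy, hs⟩
      refine ⟨(x, y), ⟨hx, rfl, hy⟩, fun a => ?_⟩
      rw [← hs a, ← hr' a _ y hx hy, ev_prod]
  refine (((SA.eq (Reg.ev g.leadingCoeff) (Reg.const 0)).and hlow).or hhigh).congr fun x => ?_
  have hsplit : sp x g = sp x g.eraseLead + Polynomial.monomial g.natDegree (PS.ev x g.leadingCoeff) := by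
    conv_lhs => rw [← Polynomial.eraseLead_add_monomial_natDegree_leadingCoeff g]
    rw [sp, Polynomial.map_add, Polynomial.map_monomial]
    rfl
  by_cases hx : PS.ev x g.leadingCoeff = 0
  · have : sp x g = sp x g.eraseLead := by rw [hsplit, hx]; simp
    rw [this]
    simp [hx]
  · simp only [hx, false_and, false_or]
    have hne : sp x g ≠ 0 := by
      intro h
      apply hx
      have := congrArg (fun q => Polynomial.coeff q g.natDegree) h
      simpa [sp] using this
    constructor
    · rintro ⟨_, y, hy, hp⟩
      exact ⟨(x, y), ⟨hx, rfl, hy⟩, hp⟩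
    · rintro ⟨⟨x', y⟩, ⟨_, rfl, hy⟩, hp⟩
      exact ⟨hne, y, hy, hp⟩

theorem rootElim (d : ℕ) : RootElim d := by
  induction d with
  | zero => exact rootElim_zero
  | succ d ih => exact rootElim_step ih

theorem root_pull {X Y : Type} [PS X] [PS Y]
    (g : Polynomial (PS.A X)) {π : Y → X} (hπ : PM π)
    {P : Y → ℝ → Prop} (hP : SA (fun z : Y × ℝ => P z.1 z.2)) :
    SA (fun y => sp (π y) g ≠ 0 ∧ ∃ b, (sp (π y) g).eval b = 0 ∧ P y b) :=
  (rootElim g.natDegree).pull g le_rfl hπ hP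

/-- Sets with finite fibres inside a semialgebraic one, with the same projection. -/
theorem SA.finite_section {X : Type} [PS X] {P : X × ℝ → Prop} (hP : SA P) :
    ∃ F : X × ℝ → Prop, SA F ∧ (∀ z, F z → P z) ∧ (∀ x, {y | F (x, y)}.Finite) ∧
      ∀ x y, P (x, y) → ∃ y', F (x, y') := by
  obtain ⟨M, hM⟩ := hP
  refine ⟨fun z => P z ∧ TestPt (fun a : M => sp z.1 a.1) z.2, ?_, fun z h => h.1, ?_, ?_⟩
  · refine SA.and ⟨M, hM⟩ ?_
    unfold TestPt
    refine (SA.eq Reg.snd (Reg.const 0)).or ((SA.fin_ex fun k => ?_).or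
      (SA.fin_ex fun k => SA.fin_ex fun l => ?_))
    · refine root_pull k.1 PM.fst (P := fun (z : X × ℝ) a => z.2 = a ∨ z.2 = a + 1 ∨ z.2 = a - 1) ?_
      have r1 : Reg (fun z : (X × ℝ) × ℝ => z.1.2) := Reg.snd.comp PM.fst
      have r2 : Reg (fun z : (X × ℝ) × ℝ => z.2) := Reg.snd
      exact (SA.eq r1 r2).or ((SA.eq r1 (r2.add (Reg.const 1))).or (SA.eq r1 (r2.sub (Reg.const 1))))
    · refine root_pull k.1 PM.fst (P := fun (z : X × ℝ) a => sp z.1 l.1 ≠ 0 ∧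
        ∃ b, (sp z.1 l.1).eval b = 0 ∧ z.2 = (a + b) / 2) ?_
      refine root_pull l.1 (PM.fst.comp PM.fst) (P := fun (z : (X × ℝ) × ℝ) b =>
        z.1.2 = (z.2 + b) / 2) ?_
      have r1 : Reg (fun z : ((X × ℝ) × ℝ) × ℝ => z.1.1.2) := (Reg.snd.comp PM.fst).comp PM.fst
      have r2 : Reg (fun z : ((X × ℝ) × ℝ) × ℝ => z.1.2) := Reg.snd.comp PM.fst
      have r3 : Reg (fun z : ((X × ℝ) × ℝ) × ℝ => z.2) := Reg.snd
      exact SA.eq r1 ((r2.add r3).mul (Reg.const (2:ℝ)⁻¹))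
  · intro x
    exact (testPt_finite (fun a : M => sp x a.1)).subset fun y hy => hy.2
  · intro x y hp
    obtain ⟨y', h1, h2⟩ := exists_testPt (fun a : M => sp x a.1) y
    refine ⟨y', hM (x, y) (x, y') (fun a ha => ?_) hp, h1⟩
    rw [ev_prod, ev_prod]
    exact h2 ⟨a, ha⟩

/-- Tarski–Seidenberg. -/
theorem SA.ex {X : Type} [PS X] {P : X → ℝ → Prop} (hP : SA (fun z : X × ℝ => P z.1 z.2)) :
    SA (fun x => ∃ y, P x y) := by
  obtain ⟨M, hM⟩ := hP
  have hQ : SA (fun z : X × ℝ => P z.1 z.2) := ⟨M, hM⟩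
  have key : SA (fun x => P x 0 ∨ (∃ k : M, sp x k.1 ≠ 0 ∧ ∃ a, (sp x k.1).eval a = 0 ∧
      (P x a ∨ P x (a + 1) ∨ P x (a - 1))) ∨
      ∃ k l : M, sp x k.1 ≠ 0 ∧ ∃ a, (sp x k.1).eval a = 0 ∧ (sp x l.1 ≠ 0 ∧
        ∃ b, (sp x l.1).eval b = 0 ∧ P x ((a + b) / 2))) := by
    have hsub : ∀ {Y : Type} [PS Y] {π : Y → X} (_ : PM π) {r : Y → ℝ} (_ : Reg r),
        SA (fun y => P (π y) (r y)) := fun hπ _ hr => hQ.comp (PM.prod hπ hr)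
    refine (hsub PM.id (Reg.const 0)).or ((SA.fin_ex fun k => ?_).or
      (SA.fin_ex fun k => SA.fin_ex fun l => ?_))
    · refine root_pull k.1 PM.id (P := fun x a => P x a ∨ P x (a + 1) ∨ P x (a - 1)) ?_
      exact (hsub PM.fst Reg.snd).or ((hsub PM.fst (Reg.snd.add (Reg.const 1))).or
        (hsub PM.fst (Reg.snd.sub (Reg.const 1))))
    · refine root_pull k.1 PM.id (P := fun x a => sp x l.1 ≠ 0 ∧
        ∃ b, (sp x l.1).eval b = 0 ∧ P x ((a + b) / 2)) ?_
      refine root_pull l.1 PM.fst (P := fun (z : X × ℝ) b => P z.1 ((z.2 + b) / 2)) ?_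
      have r2 : Reg (fun z : (X × ℝ) × ℝ => z.1.2) := Reg.snd.comp PM.fst
      have r3 : Reg (fun z : (X × ℝ) × ℝ => z.2) := Reg.snd
      exact hsub (PM.fst.comp PM.fst) ((r2.add r3).mul (Reg.const (2:ℝ)⁻¹))
  refine key.congr fun x => ?_
  constructor
  · rintro ⟨y, hy⟩
    obtain ⟨y', h1, h2⟩ := exists_testPt (fun a : M => sp x a.1) y
    have hp : P x y' := hM (x, y) (x, y') (fun a ha => by
      rw [ev_prod, ev_prod]; exact h2 ⟨a, ha⟩) hy
    rcases h1 with rfl | ⟨k, hk, a, ha, rfl | rfl | rfl⟩ | ⟨k, l, hk, a, ha, hl, b, hb, rfl⟩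
    · exact Or.inl hp
    · exact Or.inr (Or.inl ⟨k, hk, _, ha, Or.inl hp⟩)
    · exact Or.inr (Or.inl ⟨k, hk, _, ha, Or.inr (Or.inl hp)⟩)
    · exact Or.inr (Or.inl ⟨k, hk, _, ha, Or.inr (Or.inr hp)⟩)
    · exact Or.inr (Or.inr ⟨k, l, hk, a, ha, hl, b, hb, hp⟩)
  · rintro (h | ⟨_, _, a, _, h | h | h⟩ | ⟨_, _, _, a, _, _, b, _, h⟩) <;> exact ⟨_, h⟩

theorem SA.all {X : Type} [PS X] {P : X → ℝ → Prop} (hP : SA (fun z : X × ℝ => P z.1 z.2)) :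
    SA (fun x => ∀ y, P x y) :=
  (SA.ex (P := fun x y => ¬ P x y) hP.not).not.congr fun x => by simp

instance PS.real : PS ℝ where
  A := Polynomial ℝ
  ev t := Polynomial.evalRingHom t
  cst r := Polynomial.C r
  ev_cst t r := by simp

instance PS.fin (m : ℕ) : PS (Fin m → ℝ) where
  A := MvPolynomial (Fin m) ℝ
  ev x := MvPolynomial.eval x
  cst r := MvPolynomial.C r
  ev_cst t r := by simp

instance PS.prodFin (X : Type) [PS X] (ι : Type) : PS (X × (ι → ℝ)) where
  A := MvPolynomial ι (PS.A X)
  ev z := MvPolynomial.eval₂Hom (PS.ev z.1) z.2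
  cst r := MvPolynomial.C (PS.cst r)
  ev_cst t r := by simp [PS.ev_cst]

section inst
variable {X Y : Type} [PS X] [PS Y] {ι : Type}

theorem ev_real (t : ℝ) (a : Polynomial ℝ) : PS.ev (X := ℝ) t a = a.eval t := rfl

theorem Reg.idR : Reg (fun t : ℝ => t) := ⟨(Polynomial.X : Polynomial ℝ), fun t => by
  rw [ev_real]; simp⟩

theorem Reg.coord {m : ℕ} (j : Fin m) : Reg (fun x : Fin m → ℝ => x j) :=
  ⟨(MvPolynomial.X j : MvPolynomial (Fin m) ℝ), fun t => by
    change eval t (MvPolynomial.X j) = _; simp⟩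

theorem PM.toR {g : Y → ℝ} (hg : Reg g) : PM g := by
  intro a
  have : ∀ y, PS.ev (g y) a = ∑ i ∈ Finset.range (Polynomial.natDegree (R := ℝ) a + 1),
      (Polynomial.coeff (R := ℝ) a i) * g y ^ i := by
    intro y
    rw [ev_real, Polynomial.eval_eq_sum_range]
  simp only [this]
  exact Reg.sum _ fun i _ => (Reg.const _).mul (hg.pow i)

theorem Reg.of_PM {g : Y → ℝ} (hg : PM g) : Reg g := Reg.idR.comp hg

theorem Reg.mv {g : Y → ι → ℝ} (hg : ∀ i, Reg (fun y => g y i)) (f : MvPolynomial ι ℝ) :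
    Reg (fun y => eval (g y) f) := by
  induction f using MvPolynomial.induction_on with
  | C a => simpa using Reg.const a
  | add p q hp hq => simpa using hp.add hq
  | mul_X p i hp => simpa using hp.mul (hg i)

theorem PM.fstF : PM (fun z : X × (ι → ℝ) => z.1) := fun a =>
  ⟨(MvPolynomial.C a : MvPolynomial ι (PS.A X)), fun z => by
    change eval₂ _ _ _ = _; simp⟩

theorem Reg.sndF (i : ι) : Reg (fun z : X × (ι → ℝ) => z.2 i) :=
  ⟨(MvPolynomial.X i : MvPolynomial ι (PS.A X)), fun z => by
    change eval₂ _ _ _ = _; simp⟩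

theorem PM.pi {φ : Y → X} (hφ : PM φ) {g : Y → ι → ℝ} (hg : ∀ i, Reg (fun y => g y i)) :
    PM (fun y => (φ y, g y)) := by
  intro a
  change Reg (fun y => eval₂ (PS.ev (φ y)) (g y) (a : MvPolynomial ι (PS.A X)))
  induction a using MvPolynomial.induction_on with
  | C a => simpa using hφ a
  | add p q hp hq => simpa using hp.add hq
  | mul_X p i hp => simpa using hp.mul (hg i)

theorem SA.exFin (N : ℕ) : ∀ {X : Type} [PS X] {P : X × (Fin N → ℝ) → Prop}, SA P →
    SA (fun x => ∃ z, P (x, z)) := by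
  induction N with
  | zero =>
    intro X _ P hP
    have h : PM (fun x : X => (x, (Fin.elim0 : Fin 0 → ℝ))) := PM.pi PM.id (fun i => i.elim0)
    refine (hP.comp h).congr fun x => ⟨?_, fun h => ⟨_, h⟩⟩
    rintro ⟨z, hz⟩
    rwa [Subsingleton.elim z (Fin.elim0)] at hz
  | succ N ih =>
    intro X _ P hP
    have h : PM (fun w : (X × ℝ) × (Fin N → ℝ) => (w.1.1, (Fin.cons w.1.2 w.2 : Fin (N+1) → ℝ))) := by
      refine PM.pi (PM.fst.comp PM.fstF) (fun i => ?_)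
      refine Fin.cases ?_ (fun j => ?_) i
      · simpa using Reg.snd.comp PM.fstF
      · simpa using Reg.sndF j
    have h1 := ih (hP.comp h)
    refine (SA.ex (P := fun x y => ∃ z : Fin N → ℝ, P (x, (Fin.cons y z : Fin (N+1) → ℝ))) h1).congr fun x => ?_
    constructor
    · rintro ⟨z, hz⟩
      exact ⟨z 0, Fin.tail z, by rwa [Fin.cons_self_tail]⟩
    · rintro ⟨y, z, hz⟩
      exact ⟨_, hz⟩

end inst

/-- semialgebraic function -/
def SAf {X : Type} [PS X] (g : X → ℝ) : Prop := SA (fun z : X × ℝ => z.2 = g z.1)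

section saf
variable {X Y : Type} [PS X] [PS Y]

theorem SAf.subst {P : X × ℝ → Prop} (hP : SA P) {g : X → ℝ} (hg : SAf g) :
    SA (fun x => P (x, g x)) := by
  refine (SA.ex (P := fun x y => P (x, y) ∧ y = g x) (hP.and hg)).congr fun x => ?_
  constructor
  · intro h; exact ⟨_, h, rfl⟩
  · rintro ⟨y, h, rfl⟩; exact h

theorem SAf.comp {g : X → ℝ} (hg : SAf g) {φ : Y → X} (hφ : PM φ) : SAf (fun y => g (φ y)) :=
  SA.comp hg (PM.prod (hφ.comp PM.fst) Reg.snd)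

theorem SAf.of_reg {g : X → ℝ} (hg : Reg g) : SAf g := SA.eq Reg.snd (hg.comp PM.fst)

theorem SAf.congr {g h : X → ℝ} (hg : SAf g) (e : ∀ x, h x = g x) : SAf h := by
  rwa [show h = g from funext e]

theorem SAf.choice {P : X × ℝ → Prop} (hP : SA P) :
    ∃ f : X → ℝ, SAf f ∧ ∀ x, (∃ y, P (x, y)) → P (x, f x) := by
  obtain ⟨F, hF, hFP, hfin, hex⟩ := SA.finite_section hP
  have hmin : ∀ x, (∃ y, F (x, y)) → ∃ y, F (x, y) ∧ ∀ y', F (x, y') → y ≤ y' := by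
    intro x h
    obtain ⟨y, hy, hm⟩ := (hfin x).exists_minimalFor id _ h
    refine ⟨y, hy, fun y' hy' => ?_⟩
    by_contra hlt
    push Not at hlt
    exact absurd (hm hy' hlt.le) (not_le.2 hlt)
  let f : X → ℝ := fun x => if h : ∃ y, F (x, y) then (hmin x h).choose else 0
  have hf1 : ∀ x, (∃ y, F (x, y)) → F (x, f x) ∧ ∀ y', F (x, y') → f x ≤ y' := by
    intro x h
    simp only [f, dif_pos h]
    exact (hmin x h).choose_spec
  have hf2 : ∀ x, ¬ (∃ y, F (x, y)) → f x = 0 := by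
    intro x h
    simp only [f, dif_neg h]
  refine ⟨f, ?_, fun x ⟨y, hy⟩ => hFP _ (hf1 x (hex x y hy)).1⟩
  have hE : SA (fun x => ∃ y, F (x, y)) := SA.ex hF
  have hA : SA (fun z : X × ℝ => ∀ y', F (z.1, y') → z.2 ≤ y') := by
    refine SA.all (P := fun (z : X × ℝ) y' => F (z.1, y') → z.2 ≤ y') ?_
    exact (hF.comp (PM.prod (PM.fst.comp PM.fst) Reg.snd)).imp (SA.le (Reg.snd.comp PM.fst) Reg.snd)
  refine ((hF.and hA).or ((hE.comp PM.fst).not.and (SA.eq Reg.snd (Reg.const 0)))).congr ?_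
  rintro ⟨x, y⟩
  simp only
  constructor
  · rintro rfl
    by_cases h : ∃ y, F (x, y)
    · exact Or.inl (hf1 x h)
    · exact Or.inr ⟨h, hf2 x h⟩
  · rintro (⟨h1, h2⟩ | ⟨h1, h2⟩)
    · have := hf1 x ⟨y, h1⟩
      exact le_antisymm (h2 _ this.1) (this.2 _ h1)
    · rw [hf2 x h1, h2]

/-- simultaneous choice -/
theorem SAf.choiceFin (N : ℕ) : ∀ {P : X × (Fin N → ℝ) → Prop}, SA P →
    ∃ z : X → Fin N → ℝ, (∀ j, SAf (fun x => z x j)) ∧ ∀ x, (∃ w, P (x, w)) → P (x, z x) := by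
  induction N with
  | zero =>
    intro P hP
    refine ⟨fun _ => Fin.elim0, fun j => j.elim0, fun x ⟨w, hw⟩ => ?_⟩
    rwa [Subsingleton.elim (Fin.elim0 : Fin 0 → ℝ) w]
  | succ N ih =>
    intro P hP
    have h : PM (fun w : (X × ℝ) × (Fin N → ℝ) => (w.1.1, (Fin.cons w.1.2 w.2 : Fin (N+1) → ℝ))) := by
      refine PM.pi (PM.fst.comp PM.fstF) (fun i => ?_)
      refine Fin.cases ?_ (fun j => ?_) i
      · simpa using Reg.snd.comp PM.fstF
      · simpa using Reg.sndF j
    obtain ⟨f, hf, hfP⟩ := SAf.choice (SA.exFin N (hP.comp h))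
    have h' : PM (fun w : (X × (Fin N → ℝ)) × ℝ => (w.1.1, (Fin.cons w.2 w.1.2 : Fin (N+1) → ℝ))) := by
      refine PM.pi (PM.fstF.comp PM.fst) (fun i => ?_)
      refine Fin.cases ?_ (fun j => ?_) i
      · simpa using Reg.snd (X := X × (Fin N → ℝ))
      · simpa using (Reg.sndF j).comp PM.fst
    obtain ⟨z, hz, hzP⟩ := ih (SAf.subst (hP.comp h') (hf.comp PM.fstF))
    refine ⟨fun x => Fin.cons (f x) (z x), fun j => ?_, ?_⟩
    · refine Fin.cases ?_ (fun j => ?_) j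
      · simpa using hf
      · simpa using hz j
    · rintro x ⟨w, hw⟩
      refine hzP x ?_
      exact hfP x ⟨w 0, Fin.tail w, by simpa using hw⟩

end saf

theorem SA.finite_bd {P : ℝ → Prop} (hP : SA P) :
    ∃ R : Set ℝ, R.Finite ∧ ∀ u v, (∀ z ∈ uIcc u v, z ∉ R) → (P u ↔ P v) := by
  obtain ⟨M, hM⟩ := hP
  let q : {a // a ∈ M} → Polynomial ℝ := fun a => a.1
  have key : ∀ u v, (∀ z ∈ uIcc u v, z ∉ {c | RootOf q c}) → (P u → P v) := by
    intro u v h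
    refine hM u v fun a ha => ?_
    rw [ev_real, ev_real]
    by_cases h0 : a = (0 : Polynomial ℝ)
    · rw [h0]; simp
    · exact sign_const _ fun z hz hz0 => h z hz ⟨⟨a, ha⟩, h0, hz0⟩
  refine ⟨{c | RootOf q c}, rootOf_finite q, fun u v h => ⟨key u v h, key v u ?_⟩⟩
  rwa [uIcc_comm]

theorem SA.dich {P : ℝ → Prop} (hP : SA P) :
    (∀ᶠ t in nhdsWithin 0 (Ioi 0), P t) ∨ (∀ᶠ t in nhdsWithin (0:ℝ) (Ioi 0), ¬ P t) := by
  obtain ⟨R, hR, h⟩ := hP.finite_bd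
  have h1 : ∀ᶠ t in nhdsWithin (0:ℝ) (Ioi 0), t ∉ R \ {0} := by
    have : (R \ {0})ᶜ ∈ nhds (0:ℝ) := (hR.subset sdiff_subset).isClosed.isOpen_compl.mem_nhds (by simp)
    exact nhdsWithin_le_nhds this
  obtain ⟨e, he, h2⟩ := mem_nhdsGT_iff_exists_Ioo_subset.1 h1
  have he' : (0:ℝ) < e := he
  have h3 : ∀ t ∈ Ioo 0 e, (P t ↔ P (e/2)) := by
    intro t ht
    refine h _ _ fun z hz hzR => ?_
    have := (ordConnected_Ioo (a := 0) (b := e)).uIcc_subset ht (show e/2 ∈ Ioo 0 e by constructor <;> linarith) hz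
    exact h2 this ⟨hzR, by simpa using this.1.ne'⟩
  have h4 : Ioo 0 e ∈ nhdsWithin (0:ℝ) (Ioi 0) := Ioo_mem_nhdsGT he'
  by_cases hp : P (e/2)
  · left
    filter_upwards [h4] with t ht using (h3 t ht).2 hp
  · right
    filter_upwards [h4] with t ht using fun hh => hp ((h3 t ht).1 hh)

theorem SA.bd_countable {P : ℝ → Prop} (hP : SA P) :
    {t | P t ∧ ¬ ∀ᶠ s in nhds t, P s}.Countable := by
  obtain ⟨R, hR, h⟩ := hP.finite_bd
  refine hR.countable.mono fun t ht => ?_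
  by_contra htR
  have h1 : Rᶜ ∈ nhds t := hR.isClosed.isOpen_compl.mem_nhds htR
  obtain ⟨e, he, h2⟩ := Metric.mem_nhds_iff.1 h1
  refine ht.2 ?_
  filter_upwards [Metric.ball_mem_nhds t he] with s hs
  refine (h t s fun z hz => ?_).1 ht.1
  exact h2 ((convex_ball t e).ordConnected.uIcc_subset (Metric.mem_ball_self he) hs hz)

section f



theorem SAf.lt_const {f : ℝ → ℝ} (hf : SAf f) (q : ℝ) : SA (fun t => f t < q) :=
  SAf.subst (P := fun z : ℝ × ℝ => z.2 < q) (SA.lt Reg.snd (Reg.const q)) hf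
theorem SAf.gt_const {f : ℝ → ℝ} (hf : SAf f) (q : ℝ) : SA (fun t => q < f t) :=
  SAf.subst (P := fun z : ℝ × ℝ => q < z.2) (SA.lt (Reg.const q) Reg.snd) hf

theorem SAf.discont_countable {f : ℝ → ℝ} (hf : SAf f) : {t | ¬ ContinuousAt f t}.Countable := by
  have h1 : (⋃ q : ℚ, ({t | f t < q ∧ ¬ ∀ᶠ s in nhds t, f s < q} ∪
      {t | q < f t ∧ ¬ ∀ᶠ s in nhds t, q < f s})).Countable :=
    countable_iUnion fun q => (SAf.lt_const hf q).bd_countable.union (SAf.gt_const hf q).bd_countable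
  refine h1.mono fun t ht => ?_
  by_contra hn
  simp only [mem_iUnion, not_exists, mem_union, mem_ofPred_eq, not_or, not_and, not_not] at hn
  apply ht
  rw [ContinuousAt, tendsto_order]
  constructor
  · intro a ha
    obtain ⟨q, hq1, hq2⟩ := exists_rat_btwn ha
    filter_upwards [(hn q).2 hq2] with s hs using hq1.trans hs
  · intro a ha
    obtain ⟨q, hq1, hq2⟩ := exists_rat_btwn ha
    filter_upwards [(hn q).1 hq1] with s hs using hs.trans hq2

theorem SAf.cont_SA {f : ℝ → ℝ} (hf : SAf f) : SA (fun t => ContinuousAt f t) := by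
  -- variables `(((t, e), d), s)`
  have h0 : SA (fun z : ((((ℝ × ℝ) × ℝ) × ℝ) × ℝ) × ℝ =>
      (z.1.1.2 - z.1.1.1.1.1 < z.1.1.1.2 ∧ z.1.1.1.1.1 - z.1.1.2 < z.1.1.1.2) →
        (z.2 - z.1.2 < z.1.1.1.1.2 ∧ z.1.2 - z.2 < z.1.1.1.1.2)) := by
    have r2 : Reg (fun z : ((((ℝ × ℝ) × ℝ) × ℝ) × ℝ) × ℝ => z.2) := Reg.snd
    have r12 : Reg (fun z : ((((ℝ × ℝ) × ℝ) × ℝ) × ℝ) × ℝ => z.1.2) := Reg.snd.comp PM.fst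
    have r112 : Reg (fun z : ((((ℝ × ℝ) × ℝ) × ℝ) × ℝ) × ℝ => z.1.1.2) :=
      Reg.snd.comp (PM.fst.comp PM.fst)
    have r1112 : Reg (fun z : ((((ℝ × ℝ) × ℝ) × ℝ) × ℝ) × ℝ => z.1.1.1.2) :=
      Reg.snd.comp (PM.fst.comp (PM.fst.comp PM.fst))
    have r11112 : Reg (fun z : ((((ℝ × ℝ) × ℝ) × ℝ) × ℝ) × ℝ => z.1.1.1.1.2) :=
      Reg.snd.comp (PM.fst.comp (PM.fst.comp (PM.fst.comp PM.fst)))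
    have r11111 : Reg (fun z : ((((ℝ × ℝ) × ℝ) × ℝ) × ℝ) × ℝ => z.1.1.1.1.1) :=
      Reg.of_PM (PM.fst.comp (PM.fst.comp (PM.fst.comp (PM.fst.comp PM.fst))))
    exact ((SA.lt (r112.sub r11111) r1112).and (SA.lt (r11111.sub r112) r1112)).imp
      ((SA.lt (r2.sub r12) r11112).and (SA.lt (r12.sub r2) r11112))
  have hs : SAf (fun z : (((ℝ × ℝ) × ℝ) × ℝ) × ℝ => f z.1.2) :=
    hf.comp (PM.toR (Reg.snd.comp PM.fst))
  have h1 := SAf.subst h0 hs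
  have ht : SAf (fun z : (((ℝ × ℝ) × ℝ) × ℝ) => f z.1.1.1) :=
    hf.comp (PM.fst.comp (PM.fst.comp PM.fst))
  have h2 := SAf.subst h1 ht
  have h3 := SA.all (X := (ℝ × ℝ) × ℝ) (P := fun z s => (s - z.1.1 < z.2 ∧ z.1.1 - s < z.2) →
        (f s - f z.1.1 < z.1.2 ∧ f z.1.1 - f s < z.1.2)) h2
  have h4 := SA.ex (X := ℝ × ℝ) (P := fun z d => 0 < d ∧ ∀ s, (s - z.1 < d ∧ z.1 - s < d) →
        (f s - f z.1 < z.2 ∧ f z.1 - f s < z.2)) ((SA.pos Reg.snd).and h3)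
  have h5 := SA.all (X := ℝ) (P := fun t e => 0 < e → ∃ d, 0 < d ∧ ∀ s, (s - t < d ∧ t - s < d) →
        (f s - f t < e ∧ f t - f s < e)) ((SA.pos Reg.snd).imp h4)
  refine h5.congr fun t => ?_
  rw [Metric.continuousAt_iff]
  simp only [Real.dist_eq, abs_lt]
  constructor
  · intro h e he
    obtain ⟨d, hd, h⟩ := h e he
    exact ⟨d, hd, fun s hs => by have := h (x := s) (by constructor <;> linarith); constructor <;> linarith⟩
  · intro h e he
    obtain ⟨d, hd, h⟩ := h e he
    exact ⟨d, hd, fun {s} hs => by have := h s (by constructor <;> linarith); constructor <;> linarith⟩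

theorem SAf.cont_ev {f : ℝ → ℝ} (hf : SAf f) : ∀ᶠ t in nhdsWithin 0 (Ioi 0), ContinuousAt f t := by
  rcases (SAf.cont_SA hf).dich with h | h
  · exact h
  exfalso
  obtain ⟨e, he, h2⟩ := mem_nhdsGT_iff_exists_Ioo_subset.1 h
  have := (SAf.discont_countable hf).mono h2
  exact (Cardinal.Real.Ioo_countable_iff.not.2 (not_le.2 he)) this

theorem SAf.alg {f : ℝ → ℝ} (hf : SAf f) : ∃ g : Polynomial (Polynomial ℝ), ∀ᶠ t in nhdsWithin (0:ℝ) (Ioi 0),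
    sp t g ≠ 0 ∧ (sp t g).eval (f t) = 0 := by
  have hf' := hf
  obtain ⟨M, hM⟩ := hf
  have h1 : ∀ t : ℝ, ∃ h ∈ M, sp t h ≠ 0 ∧ (sp t h).eval (f t) = 0 := by
    intro t
    by_contra hn
    push Not at hn
    have h2 : ∀ᶠ y in nhds (f t), ∀ h ∈ M, SignType.sign ((sp t h).eval (f t)) = SignType.sign ((sp t h).eval y) := by
      rw [Filter.eventually_all_finset]
      intro h hh
      by_cases h0 : sp t h = 0
      · simp [h0]
      have h3 := hn h hh h0
      have hc := (sp t h).continuous.continuousAt (x := f t)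
      rcases lt_or_gt_of_ne h3 with h4 | h4
      · filter_upwards [hc.eventually (gt_mem_nhds h4)] with y hy
        rw [sign_neg h4, sign_neg hy]
      · filter_upwards [hc.eventually (lt_mem_nhds h4)] with y hy
        rw [sign_pos h4, sign_pos hy]
    have h5 : ∀ᶠ y in nhds (f t), y = f t := by
      filter_upwards [h2] with y hy
      refine hM (t, f t) (t, y) (fun a ha => ?_) rfl
      rw [ev_prod, ev_prod]
      exact hy a ha
    obtain ⟨e, he, h6⟩ := Metric.eventually_nhds_iff.1 h5
    have := h6 (y := f t + e/2) (by simp [abs_of_pos he]; linarith)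
    linarith
  by_contra hn
  rw [not_exists] at hn
  have h2 : ∀ h : Polynomial (PS.A ℝ), ∀ᶠ t in nhdsWithin (0:ℝ) (Ioi 0), ¬ (sp t h ≠ 0 ∧ (sp t h).eval (f t) = 0) := by
    intro h
    have hs : SA (fun t => sp t h ≠ 0 ∧ (sp t h).eval (f t) = 0) :=
      (SA.sp_ne h).and (SAf.subst (P := fun z : ℝ × ℝ => (sp z.1 h).eval z.2 = 0)
        (SA.eq (Reg.sp PM.fst Reg.snd h) (Reg.const 0)) hf')
    rcases hs.dich with h | h'
    · exact absurd h (hn _)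
    · exact h'
  have h3 : ∀ᶠ t in nhdsWithin (0:ℝ) (Ioi 0), ∀ h ∈ M, ¬ (sp t h ≠ 0 ∧ (sp t h).eval (f t) = 0) := by
    rw [Filter.eventually_all_finset]
    exact fun h _ => h2 h
  obtain ⟨t, ht⟩ := h3.exists
  obtain ⟨h, hh, h4⟩ := h1 t
  exact ht h hh h4

theorem SAf.alg_simple {f : ℝ → ℝ} (hf : SAf f) : ∃ g : Polynomial (Polynomial ℝ), ∀ᶠ t in nhdsWithin (0:ℝ) (Ioi 0),
    (sp t g).eval (f t) = 0 ∧ (sp t g).derivative.eval (f t) ≠ 0 := by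
  have hex : ∃ d : ℕ, ∃ g : Polynomial (Polynomial ℝ), g.natDegree = d ∧
      ∀ᶠ t in nhdsWithin (0:ℝ) (Ioi 0), sp t g ≠ 0 ∧ (sp t g).eval (f t) = 0 := by
    obtain ⟨g, hg⟩ := SAf.alg hf
    exact ⟨_, g, rfl, hg⟩
  obtain ⟨g, hgd, hg⟩ := Nat.find_spec hex
  have hder : ∀ t : ℝ, sp t (Polynomial.derivative g : Polynomial (PS.A ℝ)) = (sp t g).derivative :=
    fun t => (Polynomial.derivative_map g _).symm
  have hnc : ∀ t : ℝ, sp t g ≠ 0 ∧ (sp t g).eval (f t) = 0 → (sp t g).derivative ≠ 0 := by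
    rintro t ⟨h1, h2⟩ h3
    have := Polynomial.eq_C_of_derivative_eq_zero h3
    rw [this] at h2
    simp only [Polynomial.eval_C] at h2
    rw [h2] at this
    exact h1 (by simpa using this)
  have hg0 : g.natDegree ≠ 0 := by
    intro h0
    obtain ⟨t, ht⟩ := hg.exists
    apply hnc t ht
    rw [← hder, Polynomial.derivative_of_natDegree_zero h0]
    simp [sp]
  refine ⟨g, ?_⟩
  have hs : SA (fun t : ℝ => (sp t (Polynomial.derivative g : Polynomial (PS.A ℝ))).eval (f t) = 0) :=
      (SAf.subst (P := fun z : ℝ × ℝ => (sp z.1 (Polynomial.derivative g : Polynomial (PS.A ℝ))).eval z.2 = 0)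
        (SA.eq (Reg.sp PM.fst Reg.snd _) (Reg.const 0)) hf)
  rcases hs.dich with h | h
  · exfalso
    refine Nat.find_min hex (m := (Polynomial.derivative g).natDegree) ?_ ⟨_, rfl, ?_⟩
    · rw [← hgd]; exact Polynomial.natDegree_derivative_lt hg0
    · filter_upwards [hg, h] with t h1 h2
      exact ⟨by rw [hder]; exact hnc t h1, h2⟩
  · filter_upwards [hg, h] with t h1 h2
    rw [hder] at h2
    exact ⟨h1.2, h2⟩

theorem SAf.smooth_ev {f : ℝ → ℝ} (hf : SAf f) : ∃ e > 0, ∀ t ∈ Ioo 0 e, ContDiffAt ℝ (⊤ : ℕ∞) f t := by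
  obtain ⟨g, hg⟩ := SAf.alg_simple hf
  obtain ⟨e, he, h⟩ := mem_nhdsGT_iff_exists_Ioo_subset.1 (hg.and (SAf.cont_ev hf))
  refine ⟨e, he, fun t ht => ?_⟩
  obtain ⟨⟨h1, h2⟩, h3⟩ := h ht
  let F : ℝ × ℝ → ℝ := fun z => (sp z.1 g).eval z.2
  have hF : ContDiff ℝ (⊤ : ℕ∞) F := by
    have : F = fun z => ∑ i ∈ Finset.range (g.natDegree + 1), (g.coeff i).eval z.1 * z.2 ^ i := by
      funext z
      simp only [F]
      rw [sp, Polynomial.eval_map, Polynomial.eval₂_eq_sum_range]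
      rfl
    rw [this]
    refine ContDiff.sum fun i _ => ContDiff.mul ?_ (contDiff_snd.pow i)
    exact (by simpa using (g.coeff i).contDiff_aeval (𝕜 := ℝ) (⊤ : ℕ∞) : ContDiff ℝ (⊤ : ℕ∞) (fun t : ℝ => (g.coeff i).eval t)).comp contDiff_fst
  have hd : fderiv ℝ F (t, f t) (0, 1) = (sp t g).derivative.eval (f t) := by
    have h4 := (hF.differentiable (by simp) (t, f t)).hasFDerivAt
    have h5 : HasDerivAt (fun y : ℝ => (t, y)) ((0:ℝ), (1:ℝ)) (f t) :=
      (hasDerivAt_const _ _).prodMk (hasDerivAt_id _)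
    have h6 := h4.comp_hasDerivAt (f t) h5
    exact h6.unique ((sp t g).hasDerivAt (f t))
  have hinv : (fderiv ℝ F (t, f t) ∘L .inr ℝ ℝ ℝ).IsInvertible := by
    refine ⟨ContinuousLinearEquiv.unitsEquivAut ℝ (Units.mk0 _ h2), ?_⟩
    ext
    simp [hd]
  have hc : ContDiffAt ℝ (⊤ : ℕ∞) F (t, f t) := hF.contDiffAt
  have h7 := ContDiffAt.eventually_apply_eq_iff_implicitFunction hc (by simp) hinv
  have h8 := ContDiffAt.contDiffAt_implicitFunction hc (by simp) hinv
  refine h8.congr_of_eventuallyEq ?_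
  have h9 : ContinuousAt (fun s => (s, f s)) t := continuousAt_id.prodMk h3
  filter_upwards [h9.eventually h7, Ioo_mem_nhds ht.1 ht.2] with s hs hs'
  refine (hs.1 ?_).symm
  have := (h hs').1.1
  exact this.trans h1.symm

end f

theorem SA.toIsSA {m : ℕ} {P : (Fin m → ℝ) → Prop} (hP : SA P) :
    ∃ (N : ℕ) (B : Fin N → Set (Fin m → ℝ)), (∀ i, ∃ (k l : ℕ) (g : Fin k → MvPolynomial (Fin m) ℝ) (h : Fin l → MvPolynomial (Fin m) ℝ),
    B i = {x | (∀ i, eval x (g i) = 0) ∧ ∀ i, 0 < eval x (h i)}) ∧ {x | P x} = ⋃ i, B i := by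
  obtain ⟨M, hM⟩ := hP
  let T := {s : {a // a ∈ M} → SignType // ∃ x, P x ∧ ∀ a, SignType.sign (PS.ev x a.1) = s a}
  have : Fintype T := Fintype.ofFinite T
  let c : T ≃ Fin (Fintype.card T) := Fintype.equivFin T
  refine ⟨Fintype.card T, fun i => {x | ∀ a, SignType.sign (PS.ev x a.1) = (c.symm i).1 a}, fun i => ?_, ?_⟩
  · let s := (c.symm i).1
    let Z := {a : {a // a ∈ M} // s a = 0}
    let W := {a : {a // a ∈ M} // s a ≠ 0}
    have : Fintype Z := Fintype.ofFinite Z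
    have : Fintype W := Fintype.ofFinite W
    let cz := (Fintype.equivFin Z).symm
    let cw := (Fintype.equivFin W).symm
    refine ⟨Fintype.card Z, Fintype.card W, fun i => (cz i).1.1,
      fun i => if s (cw i).1 = 1 then (cw i).1.1 else - (cw i).1.1, ?_⟩
    ext x
    simp only [mem_ofPred_eq]
    constructor
    · intro h
      refine ⟨fun i => ?_, fun i => ?_⟩
      · have : SignType.sign (PS.ev x (cz i).1.1) = s (cz i).1 := h (cz i).1
        rw [(cz i).2] at this
        exact sign_eq_zero_iff.1 this
      · have h1 := h (cw i).1
        have h2 := (cw i).2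
        split_ifs with h3
        · rw [show (c.symm _).1 _ = 1 from h3] at h1
          exact sign_eq_one_iff.1 h1
        · have h4 : s (cw i).1 = -1 := by
            revert h2 h3; generalize s (cw i).1 = u; revert u; decide
          rw [show (c.symm _).1 _ = -1 from h4] at h1
          have := sign_eq_neg_one_iff.1 h1
          rw [map_neg]
          exact neg_pos.2 this
    · rintro ⟨h1, h2⟩ a
      change _ = s a
      by_cases h0 : s a = 0
      · have := h1 (cz.symm ⟨a, h0⟩)
        simp only [Equiv.apply_symm_apply] at this
        rw [h0]
        exact sign_eq_zero_iff.2 this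
      · have := h2 (cw.symm ⟨a, h0⟩)
        simp only [Equiv.apply_symm_apply] at this
        split_ifs at this with h3
        · rw [h3]; exact sign_eq_one_iff.2 this
        · have h4 : s a = -1 := by
            revert h0 h3; generalize s a = u; revert u; decide
          rw [h4]
          rw [map_neg] at this
          exact sign_eq_neg_one_iff.2 (neg_pos.1 this)
  · ext x
    simp only [mem_ofPred_eq, mem_iUnion]
    constructor
    · intro h
      refine ⟨c ⟨fun a => SignType.sign (PS.ev x a.1), x, h, fun _ => rfl⟩, fun a => ?_⟩
      simp
    · rintro ⟨i, hi⟩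
      obtain ⟨y, hy, h1⟩ := (c.symm i).2
      refine hM y x (fun a ha => ?_) hy
      exact (h1 ⟨a, ha⟩).trans (hi ⟨a, ha⟩).symm

theorem hasDerivAt_mv {n : ℕ} (f : MvPolynomial (Fin n) ℝ) (y : Fin n → ℝ) (j : Fin n) :
    HasDerivAt (fun s => eval (Function.update y j s) f) (eval y (pderiv j f)) (y j) := by
  induction f using MvPolynomial.induction_on with
  | C a => simpa using hasDerivAt_const (y j) a
  | add p q hp hq => simpa using hp.fun_add hq
  | mul_X p i hp =>
    have h1 : HasDerivAt (fun s => Function.update y j s i) ((Pi.single j (1:ℝ) : Fin n → ℝ) i) (y j) :=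
      hasDerivAt_pi.1 (hasDerivAt_update y j (y j)) i
    have h2 := hp.fun_mul h1
    simp only [Function.update_eq_self] at h2
    have e : eval y (pderiv j (p * X i)) =
        eval y (pderiv j p) * y i + eval y p * (Pi.single j (1:ℝ) : Fin n → ℝ) i := by
      rw [Derivation.leibniz]
      simp only [smul_eq_mul, map_add, map_mul, eval_X, pderiv_X]
      by_cases h : i = j
      · subst h; simp; ring
      · simp [h]; ring
    rw [e]
    simpa using h2

theorem cont_mv {n : ℕ} (f : MvPolynomial (Fin n) ℝ) : Continuous (fun x => eval x f) :=
  MvPolynomial.continuous_eval f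

/-- Stationarity at a local minimum of the penalized problem. -/
theorem penalty_stat {n : ℕ} {I K : Type} [Fintype I] [Fintype K] (f0 : MvPolynomial (Fin n) ℝ)
    (f : I → MvPolynomial (Fin n) ℝ) (g : K → MvPolynomial (Fin n) ℝ) (x y : Fin n → ℝ) (c : ℝ) (hc : 0 ≤ c)
    (hmin : ∀ᶠ z in nhds y, eval y f0 + c / 2 * (∑ i, max (eval y (f i)) 0 ^ 2 + ∑ k, eval y (g k) ^ 2)
        + 1 / 2 * ∑ j, (y j - x j) ^ 2 ≤
      eval z f0 + c / 2 * (∑ i, max (eval z (f i)) 0 ^ 2 + ∑ k, eval z (g k) ^ 2)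
        + 1 / 2 * ∑ j, (z j - x j) ^ 2) (j : Fin n) :
    eval y (pderiv j f0) + ∑ i, (c * max (eval y (f i)) 0) * eval y (pderiv j (f i)) +
      ∑ k, (c * eval y (g k)) * eval y (pderiv j (g k)) + (y j - x j) = 0 := by
  let G : (Fin n → ℝ) → ℝ := fun z => eval z f0 + c / 2 * (∑ i, (eval z (f i) - eval y (f i) + max (eval y (f i)) 0) ^ 2
    + ∑ k, eval z (g k) ^ 2) + 1 / 2 * ∑ j, (z j - x j) ^ 2
  have hG : ∀ᶠ z in nhds y, G y ≤ G z := by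
    filter_upwards [hmin] with z hz
    have e : G y = eval y f0 + c / 2 * (∑ i, max (eval y (f i)) 0 ^ 2 + ∑ k, eval y (g k) ^ 2)
        + 1 / 2 * ∑ j, (y j - x j) ^ 2 := by simp [G]
    rw [e]
    refine hz.trans ?_
    simp only [G]
    have hs : ∑ i, max (eval z (f i)) 0 ^ 2 ≤
        ∑ i, (eval z (f i) - eval y (f i) + max (eval y (f i)) 0) ^ 2 := by
      refine Finset.sum_le_sum fun i _ => ?_
      rcases le_total 0 (eval z (f i)) with h' | h'
      · rw [max_eq_left h']
        exact pow_le_pow_left₀ h' (by linarith [le_max_left (eval y (f i)) 0]) 2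
      · rw [max_eq_right h']
        simpa using sq_nonneg _
    have := mul_le_mul_of_nonneg_left hs (show 0 ≤ c / 2 by linarith)
    rw [mul_add, mul_add]
    linarith
  have hcont : ContinuousAt (fun s => Function.update y j s) (y j) :=
    (continuous_const.update j continuous_id).continuousAt
  have hloc : IsLocalMin (fun s => G (Function.update y j s)) (y j) := by
    have : Tendsto (fun s => Function.update y j s) (nhds (y j)) (nhds y) := by
      simpa [ContinuousAt] using hcont
    have := this.eventually hG
    simpa [IsLocalMin, IsMinFilter] using this
  have hX : ∀ i, HasDerivAt (fun s => Function.update y j s i) ((Pi.single j (1:ℝ) : Fin n → ℝ) i) (y j) :=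
      fun i => hasDerivAt_pi.1 (hasDerivAt_update y j (y j)) i
  have hder : HasDerivAt (fun s => G (Function.update y j s)) (eval y (pderiv j f0) +
      c / 2 * (∑ i, 2 * (max (eval y (f i)) 0) * eval y (pderiv j (f i)) +
      ∑ k, 2 * (eval y (g k)) * eval y (pderiv j (g k))) +
      1 / 2 * ∑ i, 2 * (y i - x i) * (Pi.single j (1:ℝ) : Fin n → ℝ) i) (y j) := by
    refine ((hasDerivAt_mv f0 y j).fun_add (HasDerivAt.const_mul _ (HasDerivAt.fun_add ?_ ?_))).fun_add
      (HasDerivAt.const_mul _ ?_)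
    · refine HasDerivAt.fun_sum fun i _ => ?_
      have := (((hasDerivAt_mv (f i) y j).sub_const (eval y (f i))).add_const (max (eval y (f i)) 0)).fun_pow 2
      simpa using this
    · refine HasDerivAt.fun_sum fun i _ => ?_
      simpa using (hasDerivAt_mv (g i) y j).fun_pow 2
    · refine HasDerivAt.fun_sum fun i _ => ?_
      simpa using ((hX i).sub_const (x i)).fun_pow 2
  have h0 := hloc.hasDerivAt_eq_zero hder
  refine Eq.trans ?_ h0
  have e1 : ∑ i, 2 * (y i - x i) * (Pi.single j (1:ℝ) : Fin n → ℝ) i = 2 * (y j - x j) := by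
    simp [Pi.single_apply]
  rw [e1, mul_add, Finset.mul_sum, Finset.mul_sum]
  have e2 : ∀ i, c / 2 * (2 * max (eval y (f i)) 0 * eval y (pderiv j (f i))) =
    c * max (eval y (f i)) 0 * eval y (pderiv j (f i)) := fun i => by ring
  have e3 : ∀ i, c / 2 * (2 * eval y (g i) * eval y (pderiv j (g i))) =
    c * eval y (g i) * eval y (pderiv j (g i)) := fun i => by ring
  simp only [e2, e3]
  ring

theorem ultra_lim (U : Ultrafilter ℕ) (u : ℕ → ℝ) (hu : ∀ k, |u k| ≤ 1) :
    ∃ l, Tendsto u U (nhds l) := by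
  have := (isCompact_Icc (a := (-1:ℝ)) (b := 1)).ultrafilter_le_nhds (U.map u) (by
    rw [le_principal_iff]
    exact Filter.mem_map.2 (Filter.univ_mem' fun k => abs_le.1 (hu k)))
  obtain ⟨l, _, hl⟩ := this
  exact ⟨l, hl⟩

theorem fritz_john {n : ℕ} {I K : Type} [Fintype I] [Fintype K] (f0 : MvPolynomial (Fin n) ℝ)
    (f : I → MvPolynomial (Fin n) ℝ) (g : K → MvPolynomial (Fin n) ℝ) (x : Fin n → ℝ)
    (hf : ∀ i, eval x (f i) ≤ 0) (hg : ∀ k, eval x (g k) = 0)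
    (hmin : ∀ y, (∀ i, eval y (f i) ≤ 0) → (∀ k, eval y (g k) = 0) → eval x f0 ≤ eval y f0) :
    ∃ (l0 : ℝ) (l : I → ℝ) (m : K → ℝ), 0 ≤ l0 ∧ (∀ i, 0 ≤ l i) ∧ (∀ i, l i * eval x (f i) = 0) ∧
      l0 ^ 2 + ∑ i, l i ^ 2 + ∑ k, m k ^ 2 = 1 ∧
      ∀ j, l0 * eval x (pderiv j f0) + ∑ i, l i * eval x (pderiv j (f i)) +
        ∑ k, m k * eval x (pderiv j (g k)) = 0 := by
  let pen : (Fin n → ℝ) → ℝ := fun y => ∑ i, max (eval y (f i)) 0 ^ 2 + ∑ k, eval y (g k) ^ 2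
  have hpen : Continuous pen := by
    refine (continuous_finsetSum _ fun i _ => ?_).add (continuous_finsetSum _ fun i _ => ?_)
    · exact ((cont_mv (f i)).max continuous_const).pow 2
    · exact (cont_mv (g i)).pow 2
  have hpen0 : ∀ y, 0 ≤ pen y := fun y => by simp only [pen]; positivity
  have hpenx : pen x = 0 := by simp [pen, hf, hg]
  let D : (Fin n → ℝ) → ℝ := fun y => ∑ j, (y j - x j) ^ 2
  have hD : Continuous D := by
    refine continuous_finsetSum _ fun i _ => ?_
    fun_prop
  have hD0 : ∀ y, 0 ≤ D y := fun y => by simp only [D]; positivity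
  have hDx : D x = 0 := by simp [D]
  let B := Metric.closedBall x 1
  have hB : IsCompact B := isCompact_closedBall x 1
  have hxB : x ∈ B := Metric.mem_closedBall_self (by norm_num)
  have hex : ∀ k : ℕ, ∃ y ∈ B, ∀ z ∈ B, eval y f0 + (k:ℝ) / 2 * pen y + 1 / 2 * D y ≤
      eval z f0 + (k:ℝ) / 2 * pen z + 1 / 2 * D z := by
    intro k
    obtain ⟨y, hy, h⟩ := hB.exists_isMinOn ⟨x, hxB⟩
      (f := fun y => eval y f0 + (k:ℝ) / 2 * pen y + 1 / 2 * D y)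
      (((cont_mv f0).add (hpen.const_mul _)).add (hD.const_mul _)).continuousOn
    exact ⟨y, hy, fun z hz => h hz⟩
  choose y hyB hy using hex
  have hyx : ∀ k : ℕ, eval (y k) f0 + (k:ℝ) / 2 * pen (y k) + 1 / 2 * D (y k) ≤ eval x f0 := by
    intro k
    have := hy k x hxB
    rwa [hpenx, hDx, mul_zero, mul_zero, add_zero, add_zero] at this
  obtain ⟨m0, _, hm0⟩ := hB.exists_isMinOn ⟨x, hxB⟩ (cont_mv f0).continuousOn
  have hm : ∀ z ∈ B, eval m0 f0 ≤ eval z f0 := fun z hz => hm0 hz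
  let U : Ultrafilter ℕ := hyperfilter ℕ
  have hU : (U : Filter ℕ) ≤ atTop := Nat.hyperfilter_le_atTop
  obtain ⟨y', hy'B, hy'⟩ := hB.ultrafilter_le_nhds (U.map y) (by
    rw [le_principal_iff]
    exact Filter.mem_map.2 (Filter.univ_mem' hyB))
  have hyt : Tendsto y U (nhds y') := hy'
  -- the penalty vanishes in the limit
  have hp0 : pen y' = 0 := by
    have h1 : Tendsto (fun k => pen (y k)) U (nhds (pen y')) := (hpen.tendsto y').comp hyt
    have h2 : Tendsto (fun k : ℕ => (2 * (eval x f0 - eval m0 f0)) / (k:ℝ)) U (nhds 0) :=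
      (tendsto_const_div_atTop_nhds_zero_nat _).mono_left hU
    refine le_antisymm (le_of_tendsto_of_tendsto h1 h2 ?_) (hpen0 _)
    have h3 : ∀ᶠ k : ℕ in U, 0 < k := hU (eventually_gt_atTop 0)
    filter_upwards [h3] with k hk
    have hk' : (0:ℝ) < k := by exact_mod_cast hk
    rw [le_div_iff₀ hk']
    have := hyx k
    have := hm _ (hyB k)
    have := hD0 (y k)
    nlinarith
  have hfe : ∀ i, eval y' (f i) ≤ 0 := by
    intro i
    have h1 : ∑ i, max (eval y' (f i)) 0 ^ 2 = 0 := by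
      have a1 : 0 ≤ ∑ i, max (eval y' (f i)) 0 ^ 2 := by positivity
      have a2 : 0 ≤ ∑ k, eval y' (g k) ^ 2 := by positivity
      have a3 : ∑ i, max (eval y' (f i)) 0 ^ 2 + ∑ k, eval y' (g k) ^ 2 = 0 := hp0
      linarith
    have h2 := (Finset.sum_eq_zero_iff_of_nonneg (fun i _ => sq_nonneg _)).1 h1 i (Finset.mem_univ i)
    have h3 := pow_eq_zero_iff (two_ne_zero) |>.1 h2
    exact max_eq_right_iff.1 h3
  have hge : ∀ k, eval y' (g k) = 0 := by
    intro i
    have h1 : ∑ k, eval y' (g k) ^ 2 = 0 := by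
      have a1 : 0 ≤ ∑ i, max (eval y' (f i)) 0 ^ 2 := by positivity
      have a2 : 0 ≤ ∑ k, eval y' (g k) ^ 2 := by positivity
      have a3 : ∑ i, max (eval y' (f i)) 0 ^ 2 + ∑ k, eval y' (g k) ^ 2 = 0 := hp0
      linarith
    have h2 := (Finset.sum_eq_zero_iff_of_nonneg (fun i _ => sq_nonneg _)).1 h1 i (Finset.mem_univ i)
    exact pow_eq_zero_iff (two_ne_zero) |>.1 h2
  have hyy : y' = x := by
    have h1 : Tendsto (fun k => eval (y k) f0 + 1 / 2 * D (y k)) U (nhds (eval y' f0 + 1 / 2 * D y')) :=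
      (((cont_mv f0).add (hD.const_mul _)).tendsto y').comp hyt
    have h2 : eval y' f0 + 1 / 2 * D y' ≤ eval x f0 := by
      refine le_of_tendsto h1 (Filter.univ_mem' fun k => ?_)
      have := hyx k
      have : 0 ≤ (k:ℝ) / 2 * pen (y k) := mul_nonneg (by positivity) (hpen0 _)
      simp only [mem_ofPred_eq]
      linarith
    have h3 := hmin y' hfe hge
    have h4 : D y' = 0 := le_antisymm (by linarith) (hD0 _)
    funext j
    have h5 := (Finset.sum_eq_zero_iff_of_nonneg (fun i _ => sq_nonneg _)).1 h4 j (Finset.mem_univ j)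
    have h6 := pow_eq_zero_iff (two_ne_zero) |>.1 h5
    linarith
  subst hyy
  -- multipliers
  let a : ℕ → I → ℝ := fun k i => (k:ℝ) * max (eval (y k) (f i)) 0
  let b : ℕ → K → ℝ := fun k i => (k:ℝ) * eval (y k) (g i)
  let s : ℕ → ℝ := fun k => Real.sqrt (1 + ∑ i, a k i ^ 2 + ∑ i, b k i ^ 2)
  have hs2 : ∀ k, s k ^ 2 = 1 + ∑ i, a k i ^ 2 + ∑ i, b k i ^ 2 := fun k => Real.sq_sqrt (by positivity)
  have hs : ∀ k, 0 < s k := fun k => Real.sqrt_pos.2 (by positivity)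
  have hone : ∀ k, (1 / s k) ^ 2 + ∑ i, (a k i / s k) ^ 2 + ∑ i, (b k i / s k) ^ 2 = 1 := by
    intro k
    simp only [div_pow, ← Finset.sum_div]
    rw [← add_div, ← add_div, one_pow, ← hs2]
    exact div_self (pow_ne_zero 2 (hs k).ne')
  have h1a : ∀ k, 0 ≤ (1 / s k) ^ 2 := fun k => sq_nonneg _
  have h2a : ∀ k, 0 ≤ ∑ i, (a k i / s k) ^ 2 := fun k => by positivity
  have h3a : ∀ k, 0 ≤ ∑ i, (b k i / s k) ^ 2 := fun k => by positivity
  obtain ⟨l0, hl0⟩ := ultra_lim U (fun k => 1 / s k) (fun k => by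
    rw [← sq_le_one_iff_abs_le_one]
    linarith [hone k, h2a k, h3a k])
  have hl : ∀ i, ∃ l, Tendsto (fun k => a k i / s k) U (nhds l) := fun i =>
    ultra_lim U _ (fun k => by
      rw [← sq_le_one_iff_abs_le_one]
      have := Finset.single_le_sum (f := fun i => (a k i / s k) ^ 2) (fun i _ => sq_nonneg _) (Finset.mem_univ i)
      linarith [hone k, h1a k, h3a k])
  have hm : ∀ i, ∃ l, Tendsto (fun k => b k i / s k) U (nhds l) := fun i =>
    ultra_lim U _ (fun k => by
      rw [← sq_le_one_iff_abs_le_one]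
      have := Finset.single_le_sum (f := fun i => (b k i / s k) ^ 2) (fun i _ => sq_nonneg _) (Finset.mem_univ i)
      linarith [hone k, h1a k, h2a k])
  choose l hl using hl
  choose m hm using hm
  refine ⟨l0, l, m, ?_, ?_, ?_, ?_, ?_⟩
  · exact ge_of_tendsto hl0 (Filter.univ_mem' fun k => (div_pos one_pos (hs k)).le)
  · exact fun i => ge_of_tendsto (hl i) (Filter.univ_mem' fun k => by
      have := hs k
      simp only [mem_ofPred_eq, a]; positivity)
  · intro i
    rcases (hf i).lt_or_eq with h | h
    · have h1 : ∀ᶠ k in (U : Filter ℕ), a k i / s k = 0 := by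
        have : Tendsto (fun k => eval (y k) (f i)) U (nhds (eval y' (f i))) := ((cont_mv (f i)).tendsto y').comp hyt
        filter_upwards [this.eventually (gt_mem_nhds h)] with k hk
        simp [a, max_eq_right hk.le]
      have h2 : l i = 0 := tendsto_nhds_unique ((hl i).congr' h1) tendsto_const_nhds
      rw [h2, zero_mul]
    · rw [h, mul_zero]
  · have h1 : Tendsto (fun k => (1 / s k) ^ 2 + ∑ i, (a k i / s k) ^ 2 + ∑ i, (b k i / s k) ^ 2) U
        (nhds (l0 ^ 2 + ∑ i, l i ^ 2 + ∑ i, m i ^ 2)) :=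
      ((hl0.pow 2).add (tendsto_finsetSum _ fun i _ => (hl i).pow 2)).add
        (tendsto_finsetSum _ fun i _ => (hm i).pow 2)
    simp only [hone] at h1
    exact tendsto_nhds_unique h1 tendsto_const_nhds |>.symm ▸ rfl
  · intro j
    have ht : ∀ q : MvPolynomial (Fin n) ℝ, Tendsto (fun k => eval (y k) q) U (nhds (eval y' q)) :=
      fun q => ((cont_mv q).tendsto y').comp hyt
    have hj : Tendsto (fun k => y k j - y' j) U (nhds (y' j - y' j)) :=
      ((tendsto_pi_nhds.1 hyt j)).sub tendsto_const_nhds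
    have h1 : Tendsto (fun k => (1 / s k) * eval (y k) (pderiv j f0) + ∑ i, (a k i / s k) * eval (y k) (pderiv j (f i))
        + ∑ i, (b k i / s k) * eval (y k) (pderiv j (g i)) + (1 / s k) * (y k j - y' j)) U
        (nhds (l0 * eval y' (pderiv j f0) + ∑ i, l i * eval y' (pderiv j (f i))
        + ∑ i, m i * eval y' (pderiv j (g i)) + l0 * (y' j - y' j))) :=
      (((hl0.mul (ht _)).add (tendsto_finsetSum _ fun i _ => (hl i).mul (ht _))).add
        (tendsto_finsetSum _ fun i _ => (hm i).mul (ht _))).add (hl0.mul hj)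
    have h2 : ∀ᶠ k in (U : Filter ℕ), (1 / s k) * eval (y k) (pderiv j f0) + ∑ i, (a k i / s k) * eval (y k) (pderiv j (f i))
        + ∑ i, (b k i / s k) * eval (y k) (pderiv j (g i)) + (1 / s k) * (y k j - y' j) = 0 := by
      filter_upwards [hyt.eventually (Metric.ball_mem_nhds y' one_pos)] with k hk
      have h3 := penalty_stat f0 f g y' (y k) k (by positivity) (by
        filter_upwards [Metric.isOpen_ball.mem_nhds hk] with z hz
        exact hy k z (Metric.ball_subset_closedBall hz)) j
      have h4 := congrArg (fun u => (1 / s k) * u) h3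
      simp only [mul_zero, mul_add, Finset.mul_sum] at h4
      rw [← h4]
      have e : ∀ u v : ℝ, 1 / s k * (u * v) = u / s k * v := fun u v => by ring
      simp only [e]
      simp only [a, b, mul_sub]
    have h5 := tendsto_nhds_unique (h1.congr' h2) tendsto_const_nhds
    linarith

theorem sum_ext_zero {ι : Type} [Fintype ι] (P : ι → Prop) [inst : Fintype {i // P i}]
    (l : {i // P i} → ℝ) (L : ι → ℝ) (hL : ∀ i (h : P i), L i = l ⟨i, h⟩)
    (hL0 : ∀ i, ¬ P i → L i = 0) (v : ι → ℝ → ℝ) (hv : ∀ i, v i 0 = 0) :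
    ∑ i, v i (L i) = ∑ i : {i // P i}, v i.1 (l i) := by
  have h0 : ∑ i : {i // P i}, v i.1 (l i) = ∑ i : {i // P i}, v i.1 (L i.1) :=
    Finset.sum_congr rfl fun i _ => by rw [hL i.1 i.2]
  have h1 : ∑ i : {i // ¬ P i}, v i.1 (L i.1) = 0 :=
    Finset.sum_eq_zero fun i _ => by rw [hL0 i.1 i.2, hv]
  have h2 := Fintype.sum_subtype_add_sum_subtype P (fun i => v i (L i))
  rw [h1, add_zero] at h2
  rw [h0, ← h2]
  refine Finset.sum_congr ?_ fun _ _ => rfl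
  ext; simp

/-- The critical point system. -/
def CritSys {n p : ℕ} (f : Fin (p + 1) → MvPolynomial (Fin n) ℝ) (J : Set (Fin n))
    (x : Fin n → ℝ) (lam : Fin (p + 1) → ℝ) (nu : Fin n → ℝ) (mu : ℝ) : Prop :=
  (∀ i, i ≠ 0 → eval x (f i) ≤ 0) ∧ (∀ j, j ∈ J → x j ≠ 0) ∧ (∀ j, j ∉ J → x j = 0) ∧
  (∀ j, (∑ i, lam i * eval x (pderiv j (f i))) + nu j + mu * x j = 0) ∧
  (∀ i, i ≠ 0 → lam i * eval x (f i) = 0) ∧ (∀ i, 0 ≤ lam i) ∧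
  ((∑ i, lam i ^ 2) + (∑ k, nu k ^ 2) + mu ^ 2 = 1) ∧
  (∀ i, i ≠ 0 → ¬ NotConstOn (f i) J → lam i = 0) ∧ (∀ k, k ∈ J → nu k = 0)

theorem critSys_of_min {n p : ℕ} (f : Fin (p + 1) → MvPolynomial (Fin n) ℝ) (x : Fin n → ℝ)
    (hx : ∀ i, i ≠ 0 → eval x (f i) ≤ 0)
    (hmin : ∀ y : Fin n → ℝ, (∀ i, i ≠ 0 → eval y (f i) ≤ 0) → ∑ j, y j ^ 2 = ∑ j, x j ^ 2 →
      eval x (f 0) ≤ eval y (f 0)) :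
    ∃ lam nu mu, CritSys f {j | x j ≠ 0} x lam nu mu := by
  let J : Set (Fin n) := {j | x j ≠ 0}
  let PI : Fin (p + 1) → Prop := fun i => i ≠ 0 ∧ NotConstOn (f i) J
  let g : Option {k : Fin n // k ∉ J} → MvPolynomial (Fin n) ℝ := fun o =>
    match o with
    | none => C (1 / 2 : ℝ) * (∑ j, X j ^ 2 - C (∑ j, x j ^ 2))
    | some k => X k.1
  have hxJ : ∀ j, j ∉ J → x j = 0 := fun j hj => by simpa [J] using hj
  have hxRJ : x ∈ RJ J := fun j hj => hxJ j hj
  obtain ⟨l0, l, m, h1, h2, h3, h4, h5⟩ := fritz_john (f 0) (fun i : {i // PI i} => f i.1) g x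
    (fun i => hx i.1 i.2.1) (fun k => by
      cases k with
      | none => simp [g]
      | some k => simpa [g] using hxJ k.1 k.2)
    (fun y hy hg => by
      have hyJ : y ∈ RJ J := fun j hj => by simpa [g] using hg (some ⟨j, hj⟩)
      refine hmin y (fun i hi => ?_) ?_
      · by_cases hc : NotConstOn (f i) J
        · exact hy ⟨i, hi, hc⟩
        · have : eval y (f i) = eval x (f i) := by
            by_contra hne
            exact hc ⟨y, hyJ, x, hxRJ, hne⟩
          rw [this]
          exact hx i hi
      · have := hg none
        simp only [g, map_mul, map_sub, map_sum, map_pow, eval_X, eval_C] at this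
        linarith)
  let ext : Fin (p + 1) → ℝ := fun i => if h : PI i then l ⟨i, h⟩ else 0
  let lam : Fin (p + 1) → ℝ := fun i => if i = 0 then l0 else ext i
  have hext0 : ext 0 = 0 := by simp [ext, PI]
  let nu : Fin n → ℝ := fun k => if h : k ∉ J then m (some ⟨k, h⟩) else 0
  have hlsum : ∀ v : Fin (p + 1) → ℝ → ℝ, (∀ i, v i 0 = 0) →
      ∑ i, v i (lam i) = v 0 l0 + ∑ i : {i // PI i}, v i.1 (l i) := by
    intro v hv
    rw [← sum_ext_zero PI l ext (fun i h => dif_pos h) (fun i h => dif_neg h) v hv]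
    rw [Fin.sum_univ_succ, Fin.sum_univ_succ, hext0, hv]
    simp [lam, Fin.succ_ne_zero]
  have hlam : ∀ i, i ≠ 0 → lam i = ext i := fun i hi => by simp [lam, hi]
  refine ⟨lam, nu, m none, hx, fun j hj => hj, hxJ, ?_, ?_, ?_, ?_, ?_, ?_⟩
  · intro j
    rw [hlsum (fun i u => u * eval x (pderiv j (f i))) (fun i => zero_mul _)]
    have h6 := h5 j
    rw [Fintype.sum_option] at h6
    have e1 : eval x (pderiv j (g none)) = x j := by
      simp [g, pderiv_X, Pi.single_apply]
    have e2 : ∑ k : {k : Fin n // k ∉ J}, m (some k) * eval x (pderiv j (g (some k))) = nu j := by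
      have := sum_ext_zero (fun k : Fin n => k ∉ J) (fun k => m (some k)) nu
        (fun i h => dif_pos h) (fun i h => dif_neg h)
        (fun k u => u * eval x (pderiv j (X k))) (fun i => zero_mul _)
      simp only [g]
      rw [← this]
      simp [pderiv_X, Pi.single_apply]
    rw [e1, e2] at h6
    linarith
  · intro i hi
    rw [hlam i hi]
    simp only [ext]
    split_ifs with h
    · exact h3 ⟨i, h⟩
    · exact zero_mul _
  · intro i
    by_cases hi : i = 0
    · simpa [lam, hi] using h1
    · rw [hlam i hi]
      simp only [ext]
      split_ifs with h
      · exact h2 ⟨i, h⟩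
      · exact le_rfl
  · rw [hlsum (fun i u => u ^ 2) (fun i => by simp)]
    have := sum_ext_zero (fun k : Fin n => k ∉ J) (fun k => m (some k)) nu
        (fun i h => dif_pos h) (fun i h => dif_neg h)
        (fun k u => u ^ 2) (fun i => by simp)
    rw [Fintype.sum_option, ← this] at h4
    linarith
  · intro i hi hc
    rw [hlam i hi]
    exact dif_neg fun h => hc h.2
  · intro k hk
    exact dif_neg fun h => h hk

theorem critSys_SA {n p N : ℕ} (f : Fin (p + 1) → MvPolynomial (Fin n) ℝ) (J : Set (Fin n)) (c : ℝ)
    (ex : Fin n → Fin N) (el : Fin (p + 1) → Fin N) (en : Fin n → Fin N) (em : Fin N) :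
    SA (fun z : ℝ × (Fin N → ℝ) => eval (fun j => z.2 (ex j)) (f 0) = c + z.1 ∧
      CritSys f J (fun j => z.2 (ex j)) (fun j => z.2 (el j)) (fun j => z.2 (en j)) (z.2 em)) := by
  have hr : ∀ i : Fin N, Reg (fun z : ℝ × (Fin N → ℝ) => z.2 i) := fun i => Reg.sndF i
  have hm : ∀ q : MvPolynomial (Fin n) ℝ, Reg (fun z : ℝ × (Fin N → ℝ) => eval (fun j => z.2 (ex j)) q) :=
    fun q => Reg.mv (fun j => hr (ex j)) q
  have ht : Reg (fun z : ℝ × (Fin N → ℝ) => z.1) := Reg.of_PM PM.fstF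
  have h0 := fun r : ℝ => Reg.const (X := ℝ × (Fin N → ℝ)) r
  refine (SA.eq (hm _) ((h0 c).add ht)).and ?_
  refine SA.and (SA.fin_all fun i => (SA.const _).imp (SA.le (hm _) (h0 0))) ?_
  refine SA.and (SA.fin_all fun i => (SA.const _).imp (SA.eq (hr _) (h0 0)).not) ?_
  refine SA.and (SA.fin_all fun i => (SA.const _).imp (SA.eq (hr _) (h0 0))) ?_
  refine SA.and (SA.fin_all fun i => SA.eq (((Reg.sum _ fun k _ => (hr _).mul (hm _)).add (hr _)).add
    ((hr _).mul (hr _))) (h0 0)) ?_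
  refine SA.and (SA.fin_all fun i => (SA.const _).imp (SA.eq ((hr _).mul (hm _)) (h0 0))) ?_
  refine SA.and (SA.fin_all fun i => (SA.le (h0 0) (hr _))) ?_
  refine SA.and (SA.eq (((Reg.sum _ fun k _ => (hr _).pow 2).add (Reg.sum _ fun k _ => (hr _).pow 2)).add
    ((hr _).pow 2)) (h0 1)) ?_
  refine SA.and (SA.fin_all fun i => (SA.const _).imp ((SA.const _).imp (SA.eq (hr _) (h0 0)))) ?_
  exact SA.fin_all fun i => (SA.const _).imp (SA.eq (hr _) (h0 0))

theorem euclNorm_closedBall {n : ℕ} (R : ℝ) : IsCompact {x : Fin n → ℝ | euclNorm x ≤ R} := by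
  refine Metric.isCompact_of_isClosed_isBounded ?_ ?_
  · refine isClosed_le ?_ continuous_const
    unfold euclNorm
    fun_prop
  · refine (Metric.isBounded_closedBall (x := (0 : Fin n → ℝ)) (r := R)).subset fun x hx => ?_
    have hx' : euclNorm x ≤ R := hx
    have hR : 0 ≤ R := (Real.sqrt_nonneg _).trans hx'
    rw [mem_closedBall_zero_iff, pi_norm_le_iff_of_nonneg hR]
    intro i
    refine le_trans ?_ hx'
    rw [Real.norm_eq_abs]
    refine Real.abs_le_sqrt ?_
    exact Finset.single_le_sum (f := fun i => x i ^ 2) (fun i _ => sq_nonneg _) (Finset.mem_univ i)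

theorem critSys_frequently {n p : ℕ} (f : Fin (p + 1) → MvPolynomial (Fin n) ℝ)
    (S : Set (Fin n → ℝ))
    (hS : S = {x | ∀ i, i ≠ 0 → eval x (f i) ≤ 0})
    (hSne : S.Nonempty)
    (hbdd : BddBelow ((fun x => eval x (f 0)) '' S))
    (fstar : ℝ) (hfstar : fstar = sInf ((fun x => eval x (f 0)) '' S))
    (hnotatt : ∀ x ∈ S, eval x (f 0) ≠ fstar) :
    ∃ J : Set (Fin n), ∃ᶠ t in nhdsWithin (0:ℝ) (Ioi 0), ∃ x lam nu mu,
      eval x (f 0) = fstar + t ∧ CritSys f J x lam nu mu := by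
  have hSc : IsClosed S := by
    have : S = ⋂ i, ⋂ (_ : i ≠ 0), {x | eval x (f i) ≤ 0} := by
      rw [hS]; ext x; simp
    rw [this]
    exact isClosed_iInter fun i => isClosed_iInter fun _ => isClosed_le (cont_mv _) continuous_const
  have key : ∀ δ > 0, ∃ t ∈ Ioo 0 δ, ∃ J : Set (Fin n), ∃ x lam nu mu,
      eval x (f 0) = fstar + t ∧ CritSys f J x lam nu mu := by
    intro δ hδ
    obtain ⟨_, ⟨y, hyS, rfl⟩, hy⟩ := exists_lt_of_csInf_lt (hSne.image _)
      (show sInf ((fun x => eval x (f 0)) '' S) < fstar + δ by rw [← hfstar]; linarith)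
    simp only at hy
    have hcomp : IsCompact (S ∩ {x : Fin n → ℝ | ∑ j, x j ^ 2 = ∑ j, y j ^ 2}) := by
      refine (euclNorm_closedBall (n := n) (euclNorm y)).of_isClosed_subset
        (hSc.inter (isClosed_eq (by fun_prop) continuous_const)) ?_
      rintro x ⟨_, hx⟩
      have hx' : ∑ j, x j ^ 2 = ∑ j, y j ^ 2 := hx
      change Real.sqrt _ ≤ Real.sqrt _
      rw [hx']
    obtain ⟨x, ⟨hxS, hxy⟩, hmin⟩ := hcomp.exists_isMinOn ⟨y, hyS, rfl⟩ (cont_mv (f 0)).continuousOn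
    have hxy' : ∑ j, x j ^ 2 = ∑ j, y j ^ 2 := hxy
    have h1 : eval x (f 0) ≤ eval y (f 0) := hmin ⟨hyS, rfl⟩
    have h2 : fstar ≤ eval x (f 0) := by
      rw [hfstar]; exact csInf_le hbdd ⟨x, hxS, rfl⟩
    have h3 : fstar < eval x (f 0) := lt_of_le_of_ne h2 (hnotatt x hxS).symm
    have hxS' : ∀ i, i ≠ 0 → eval x (f i) ≤ 0 := by rw [hS] at hxS; exact hxS
    obtain ⟨lam, nu, mu, h⟩ := critSys_of_min f x hxS' (fun z hz hzz => hmin ⟨by rw [hS]; exact hz, hzz.trans hxy'⟩)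
    exact ⟨eval x (f 0) - fstar, ⟨by linarith, by linarith⟩, _, x, lam, nu, mu, by ring, h⟩
  by_contra hn
  simp only [not_exists, not_frequently] at hn
  have h1 := Filter.eventually_all.2 hn
  obtain ⟨e, he, h2⟩ := mem_nhdsGT_iff_exists_Ioo_subset.1 h1
  obtain ⟨t, ht, J, x, lam, nu, mu, h⟩ := key e he
  exact h2 ht J x lam nu mu h

theorem isSAFunOn_of_SAf {g : ℝ → ℝ} (hg : SAf g) (e : ℝ) : IsSAFunOn (Ioo 0 e) g := by
  refine SA.toIsSA (P := fun z : Fin 2 → ℝ => z 0 ∈ Ioo 0 e ∧ z 1 = g (z 0)) ?_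
  refine SA.and ((SA.lt (Reg.const 0) (Reg.coord 0)).and (SA.lt (Reg.coord 0) (Reg.const e))) ?_
  exact SA.comp hg (PM.prod (PM.toR (Reg.coord 0)) (Reg.coord 1))

theorem isSACurve_of_SAf {n : ℕ} {g : ℝ → Fin n → ℝ} (hg : ∀ j, SAf (fun t => g t j)) (e : ℝ) :
    IsSACurve (Ioo 0 e) g := by
  refine SA.toIsSA (P := fun z : Fin (n + 1) → ℝ => z 0 ∈ Ioo 0 e ∧ ∀ j : Fin n, z j.succ = g (z 0) j) ?_
  refine SA.and ((SA.lt (Reg.const 0) (Reg.coord 0)).and (SA.lt (Reg.coord 0) (Reg.const e))) ?_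
  exact SA.fin_all fun j => SA.comp (hg j) (PM.prod (PM.toR (Reg.coord 0)) (Reg.coord j.succ))

/-- The curve at infinity constructed in the proof of Theorem 3.1, satisfying
conditions (c1)–(c9). Here the multiplier curves `λ_i` (for `i ∈ I₁ ∪ {0}`) and `ν_k`
(for `k ∉ J`) are extended by zero to all indices. -/
theorem curve_at_infinity {n p : ℕ} (f : Fin (p + 1) → MvPolynomial (Fin n) ℝ)
    (hnc : ∀ i, ∃ x y : Fin n → ℝ, eval x (f i) ≠ eval y (f i))
    (S : Set (Fin n → ℝ))
    (hS : S = {x | ∀ i, i ≠ 0 → eval x (f i) ≤ 0})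
    (hSne : S.Nonempty)
    (hbdd : BddBelow ((fun x => eval x (f 0)) '' S))
    (fstar : ℝ) (hfstar : fstar = sInf ((fun x => eval x (f 0)) '' S))
    (hnotatt : ∀ x ∈ S, eval x (f 0) ≠ fstar) :
    ∃ (J : Set (Fin n)) (ε : ℝ) (φ : ℝ → Fin n → ℝ)
      (lam : ℝ → Fin (p + 1) → ℝ) (nu : ℝ → Fin n → ℝ) (mu : ℝ → ℝ),
      J.Nonempty ∧ 0 < ε ∧
      -- the curves are smooth and semialgebraic on `(0, ε)`
      ContDiffOn ℝ (⊤ : ℕ∞) φ (Ioo 0 ε) ∧ IsSACurve (Ioo 0 ε) φ ∧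
      (∀ i : Fin (p + 1), ContDiffOn ℝ (⊤ : ℕ∞) (fun t => lam t i) (Ioo 0 ε) ∧
        IsSAFunOn (Ioo 0 ε) (fun t => lam t i)) ∧
      (∀ k : Fin n, ContDiffOn ℝ (⊤ : ℕ∞) (fun t => nu t k) (Ioo 0 ε) ∧
        IsSAFunOn (Ioo 0 ε) (fun t => nu t k)) ∧
      (ContDiffOn ℝ (⊤ : ℕ∞) mu (Ioo 0 ε) ∧ IsSAFunOn (Ioo 0 ε) mu) ∧
      -- `λ_i` is carried by `I₁ ∪ {0}` and `ν_k` by the complement of `J`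
      (∀ i : Fin (p + 1), i ≠ 0 → ¬ NotConstOn (f i) J →
        ∀ t ∈ Ioo (0 : ℝ) ε, lam t i = 0) ∧
      (∀ k ∈ J, ∀ t ∈ Ioo (0 : ℝ) ε, nu t k = 0) ∧
      -- (c1)
      Tendsto (fun t => euclNorm (φ t)) (nhdsWithin 0 (Ioo 0 ε)) atTop ∧
      -- (c2)
      Tendsto (fun t => eval (φ t) (f 0)) (nhdsWithin 0 (Ioo 0 ε)) (nhds fstar) ∧
      -- (c3)
      (∀ t ∈ Ioo (0 : ℝ) ε, ∀ i, i ≠ 0 → NotConstOn (f i) J → eval (φ t) (f i) ≤ 0) ∧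
      -- (c4)
      J = {j : Fin n | ∃ t ∈ Ioo (0 : ℝ) ε, φ t j ≠ 0} ∧
      -- (c5)
      (∀ t ∈ Ioo (0 : ℝ) ε, ∀ k ∉ J, φ t k = 0) ∧
      -- (c6)
      (∀ t ∈ Ioo (0 : ℝ) ε, ∀ j : Fin n,
        (∑ i, lam t i * eval (φ t) (pderiv j (f i))) + nu t j + mu t * φ t j = 0) ∧
      -- (c7)
      (∀ t ∈ Ioo (0 : ℝ) ε, ∀ i, i ≠ 0 → NotConstOn (f i) J →
        lam t i * eval (φ t) (f i) = 0) ∧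
      -- (c8)
      (∀ t ∈ Ioo (0 : ℝ) ε, ∀ i, 0 ≤ lam t i) ∧
      -- (c9)
      (∀ t ∈ Ioo (0 : ℝ) ε,
        Real.sqrt ((∑ i, lam t i ^ 2) + (∑ k, nu t k ^ 2) + mu t ^ 2) = 1) := by
  obtain ⟨J, hfreq⟩ := critSys_frequently f S hS hSne hbdd fstar hfstar hnotatt
  let T := Fin n ⊕ Fin (p + 1) ⊕ Fin n ⊕ Unit
  let e : T ≃ Fin (Fintype.card T) := Fintype.equivFin T
  let ex : Fin n → Fin (Fintype.card T) := fun j => e (Sum.inl j)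
  let el : Fin (p + 1) → Fin (Fintype.card T) := fun j => e (Sum.inr (Sum.inl j))
  let en : Fin n → Fin (Fintype.card T) := fun j => e (Sum.inr (Sum.inr (Sum.inl j)))
  let em : Fin (Fintype.card T) := e (Sum.inr (Sum.inr (Sum.inr ())))
  have hSA := critSys_SA f J fstar ex el en em
  have hpack : ∀ t, (∃ x lam nu mu, eval x (f 0) = fstar + t ∧ CritSys f J x lam nu mu) →
      ∃ w : Fin (Fintype.card T) → ℝ, eval (fun j => w (ex j)) (f 0) = fstar + t ∧
        CritSys f J (fun j => w (ex j)) (fun j => w (el j)) (fun j => w (en j)) (w em) := by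
    rintro t ⟨x, lam, nu, mu, h1, h2⟩
    refine ⟨fun i => Sum.elim x (Sum.elim lam (Sum.elim nu (fun _ => mu))) (e.symm i), ?_⟩
    simp only [ex, el, en, em, Equiv.symm_apply_apply, Sum.elim_inl, Sum.elim_inr]
    exact ⟨h1, h2⟩
  have hev : ∀ᶠ t in nhdsWithin (0:ℝ) (Ioi 0), ∃ w : Fin (Fintype.card T) → ℝ,
      eval (fun j => w (ex j)) (f 0) = fstar + t ∧
        CritSys f J (fun j => w (ex j)) (fun j => w (el j)) (fun j => w (en j)) (w em) := by
    rcases (SA.exFin _ hSA).dich with h | h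
    · exact h
    · exact absurd h (hfreq.mono fun t ht => hpack t ht)
  obtain ⟨z, hzSA, hz⟩ := SAf.choiceFin _ hSA
  choose ee hee hsm using fun j => SAf.smooth_ev (hzSA j)
  have hev2 : ∀ᶠ t in nhdsWithin (0:ℝ) (Ioi 0), ∀ j, ContDiffAt ℝ (⊤ : ℕ∞) (fun t => z t j) t := by
    rw [Filter.eventually_all]
    intro j
    filter_upwards [Ioo_mem_nhdsGT (hee j)] with t ht using hsm j t ht
  obtain ⟨ε, hε, hall⟩ := mem_nhdsGT_iff_exists_Ioo_subset.1 (hev.and hev2)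
  have hε' : (0:ℝ) < ε := hε
  have hcrit : ∀ t ∈ Ioo (0:ℝ) ε, eval (fun j => z t (ex j)) (f 0) = fstar + t ∧
        CritSys f J (fun j => z t (ex j)) (fun j => z t (el j)) (fun j => z t (en j)) (z t em) :=
    fun t ht => hz t (hall ht).1
  have hsmooth : ∀ j, ContDiffOn ℝ (⊤ : ℕ∞) (fun t => z t j) (Ioo 0 ε) :=
    fun j t ht => ((hall ht).2 j).contDiffWithinAt
  have hin : ∀ t ∈ Ioo (0:ℝ) ε, (fun j => z t (ex j)) ∈ S := by
    intro t ht
    rw [hS]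
    exact (hcrit t ht).2.1
  have hmid : ε / 2 ∈ Ioo (0:ℝ) ε := ⟨by linarith, by linarith⟩
  have hmid' : ε / 3 ∈ Ioo (0:ℝ) ε := ⟨by linarith, by linarith⟩
  have hSc : IsClosed S := by
    have : S = ⋂ i, ⋂ (_ : i ≠ 0), {x | eval x (f i) ≤ 0} := by
      rw [hS]; ext x; simp
    rw [this]
    exact isClosed_iInter fun i => isClosed_iInter fun _ => isClosed_le (cont_mv _) continuous_const
  refine ⟨J, ε, fun t j => z t (ex j), fun t i => z t (el i), fun t k => z t (en k), fun t => z t em,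
    ?_, hε', ?_, ?_, ?_, ?_, ?_, ?_, ?_, ?_, ?_, ?_, ?_, ?_, ?_, ?_, ?_, ?_⟩
  · by_contra hJ
    rw [Set.not_nonempty_iff_eq_empty] at hJ
    have h0 : ∀ t ∈ Ioo (0:ℝ) ε, (fun j => z t (ex j)) = 0 := by
      intro t ht
      funext j
      exact (hcrit t ht).2.2.2.1 j (by simp [hJ])
    have h1 := (hcrit _ hmid).1
    have h2 := (hcrit _ hmid').1
    rw [h0 _ hmid] at h1
    rw [h0 _ hmid'] at h2
    linarith
  · exact contDiffOn_pi.2 fun j => hsmooth (ex j)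
  · exact isSACurve_of_SAf (fun j => hzSA (ex j)) ε
  · exact fun i => ⟨hsmooth (el i), isSAFunOn_of_SAf (hzSA (el i)) ε⟩
  · exact fun i => ⟨hsmooth (en i), isSAFunOn_of_SAf (hzSA (en i)) ε⟩
  · exact ⟨hsmooth em, isSAFunOn_of_SAf (hzSA em) ε⟩
  · exact fun i hi hc t ht => (hcrit t ht).2.2.2.2.2.2.2.2.1 i hi hc
  · exact fun k hk t ht => (hcrit t ht).2.2.2.2.2.2.2.2.2 k hk
  · rw [tendsto_atTop]
    intro R
    have hcomp : IsCompact (S ∩ {x : Fin n → ℝ | euclNorm x ≤ R}) :=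
      (euclNorm_closedBall R).inter_left hSc
    have hd : ∃ δ > 0, ∀ x ∈ S, euclNorm x ≤ R → fstar + δ ≤ eval x (f 0) := by
      by_cases hne : (S ∩ {x : Fin n → ℝ | euclNorm x ≤ R}).Nonempty
      · obtain ⟨x, ⟨hxS, hxR⟩, hmin⟩ := hcomp.exists_isMinOn hne (cont_mv (f 0)).continuousOn
        have h2 : fstar ≤ eval x (f 0) := by
          rw [hfstar]; exact csInf_le hbdd ⟨x, hxS, rfl⟩
        have h3 : fstar < eval x (f 0) := lt_of_le_of_ne h2 (hnotatt x hxS).symm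
        refine ⟨eval x (f 0) - fstar, by linarith, fun y hy hyR => ?_⟩
        have : eval x (f 0) ≤ eval y (f 0) := hmin ⟨hy, hyR⟩
        linarith
      · exact ⟨1, one_pos, fun x hx hxR => absurd ⟨x, hx, hxR⟩ hne⟩
    obtain ⟨δ, hδ, hd⟩ := hd
    have h1 : ∀ᶠ t in nhdsWithin (0:ℝ) (Ioo 0 ε), t < δ := nhdsWithin_le_nhds (gt_mem_nhds hδ)
    filter_upwards [h1, self_mem_nhdsWithin] with t ht1 ht2
    by_contra hlt
    push Not at hlt
    have h2 := hd _ (hin t ht2) hlt.le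
    have h3 := (hcrit t ht2).1
    linarith
  · have h1 : Tendsto (fun t : ℝ => fstar + t) (nhdsWithin 0 (Ioo 0 ε)) (nhds fstar) := by
      have : Tendsto (fun t : ℝ => fstar + t) (nhds 0) (nhds (fstar + 0)) :=
        (continuous_const.add continuous_id).tendsto 0
      rw [add_zero] at this
      exact this.mono_left nhdsWithin_le_nhds
    refine h1.congr' ?_
    filter_upwards [self_mem_nhdsWithin] with t ht
    exact (hcrit t ht).1.symm
  · exact fun t ht i hi _ => (hcrit t ht).2.1 i hi
  · ext j
    constructor
    · exact fun hj => ⟨ε / 2, hmid, (hcrit _ hmid).2.2.1 j hj⟩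
    · rintro ⟨t, ht, h⟩
      by_contra hj
      exact h ((hcrit t ht).2.2.2.1 j hj)
  · exact fun t ht k hk => (hcrit t ht).2.2.2.1 k hk
  · exact fun t ht j => (hcrit t ht).2.2.2.2.1 j
  · exact fun t ht i hi _ => (hcrit t ht).2.2.2.2.2.1 i hi
  · exact fun t ht i => (hcrit t ht).2.2.2.2.2.2.1 i
  · intro t ht
    have := (hcrit t ht).2.2.2.2.2.2.2.1
    rw [this, Real.sqrt_one]
end
end

section
/- (Curve Selection Lemma at infinity) Let A ⊆ ℝⁿ be a semialgebraic set and let f := (f₁, …, f_p) : ℝⁿ → ℝ^p be a semialgebraic map. Assume there exists a sequence {x^ℓ} with x^ℓ ∈ A, ‖x^ℓ‖ → ∞ as ℓ → ∞, and f(x^ℓ) → y ∈ (ℝ ∪ {±∞})^p as ℓ → ∞. Then there exists a smooth semialgebraic curve φ : (0, ε) → ℝⁿ such that φ(t) ∈ A for all t ∈ (0, ε), ‖φ(t)‖ → ∞ as t → 0⁺, and f(φ(t)) → y as t → 0⁺. -/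
open MvPolynomial Set Filter
open scoped Classical

noncomputable section

/-! ### Part 1: algebraicity of penalised minimisers -/

theorem cs_integral {R S τ : Type*} [CommRing R] [CommRing S] [Algebra R S] [Fintype τ]
    (v : τ → S) (D : ℕ) (g : τ → MvPolynomial τ R) (hg : ∀ j, (g j).totalDegree < D)
    (h : ∀ j, v j ^ D = aeval v (g j)) (j : τ) : IsIntegral R (v j) := by
  set T : Set (τ →₀ ℕ) := {α | ∀ i, α i < D} with hT
  have hTf : T.Finite := by
    have : T ⊆ Set.Iic (Finsupp.equivFunOnFinite.symm (fun _ => D)) := by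
      intro α hα i
      exact (hα i).le
    exact (Set.finite_Iic _).subset this
  set N : Submodule R S :=
    Submodule.span R ((fun α : τ →₀ ℕ => aeval v (monomial α (1 : R))) '' T) with hN
  have key : ∀ d : ℕ, ∀ p : MvPolynomial τ R, p.totalDegree ≤ d → aeval v p ∈ N := by
    intro d
    induction d using Nat.strong_induction_on with
    | _ d ih =>
      intro p hp
      rw [p.as_sum, map_sum]
      refine Submodule.sum_mem _ fun α hα => ?_
      have hαd : (α.sum fun _ e => e) ≤ d := (le_totalDegree hα).trans hp
      have e1 : monomial α (coeff α p) = C (coeff α p) * monomial α (1 : R) := by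
        rw [C_mul_monomial, mul_one]
      rw [e1, map_mul, ← algebraMap_eq, AlgHom.commutes, ← Algebra.smul_def]
      refine Submodule.smul_mem _ _ ?_
      by_cases hαT : α ∈ T
      · exact Submodule.subset_span ⟨α, hαT, rfl⟩
      · have : ∃ i, D ≤ α i := by
          by_contra hc
          push Not at hc
          exact hαT hc
        obtain ⟨i, hi⟩ := this
        set β := α - Finsupp.single i D with hβ
        have hαβ : α = β + Finsupp.single i D := by
          rw [hβ, tsub_add_cancel_of_le]
          exact Finsupp.single_le_iff.mpr hi
        have e2 : monomial α (1 : R) = monomial β (1 : R) * X i ^ D := by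
          rw [X_pow_eq_monomial, monomial_mul, ← hαβ, one_mul]
        have e3 : aeval v (monomial α (1 : R)) = aeval v (monomial β (1 : R) * g i) := by
          rw [e2, map_mul, map_mul, map_pow, aeval_X, h]
        rw [e3]
        have hsum : (α.sum fun _ e => e) = (β.sum fun _ e => e) + D := by
          conv_lhs => rw [hαβ]
          rw [Finsupp.sum_add_index' (by simp) (by simp)]
          simp
        have hlt : (monomial β (1 : R) * g i).totalDegree < d := by
          have h1 := totalDegree_mul (monomial β (1 : R)) (g i)
          have h2 := totalDegree_monomial_le β (1 : R)
          have h3 := hg i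
          have h4 : (β.sum fun _ e => e) = (β.sum fun _ => id) := rfl
          omega
        exact ih _ hlt _ le_rfl
  have hr : Subalgebra.toSubmodule (aeval (R := R) v).range = N := by
    apply le_antisymm
    · rintro _ ⟨p, rfl⟩
      exact key _ p le_rfl
    · rw [hN, Submodule.span_le]
      rintro _ ⟨α, _, rfl⟩
      exact ⟨_, rfl⟩
  refine IsIntegral.of_mem_of_fg (aeval (R := R) v).range ?_ _ ⟨X j, by simp⟩
  rw [hr, hN]
  exact Submodule.fg_span (hTf.image _)

theorem cs_hasDerivAt {τ : Type*} [Fintype τ] (P : MvPolynomial τ ℝ) (v : τ → ℝ) (j : τ) :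
    HasDerivAt (fun u => eval (Function.update v j u) P) (eval v (pderiv j P)) (v j) := by
  induction P using MvPolynomial.induction_on with
  | C a => simpa using hasDerivAt_const (v j) a
  | add p q hp hq =>
    simp only [map_add]
    exact hp.add hq
  | mul_X p i hp =>
    have hX : HasDerivAt (fun u => Function.update v j u i) (eval v (pderiv j (X i))) (v j) := by
      by_cases hij : i = j
      · subst hij
        simp only [Function.update_self, pderiv_X_self, map_one]
        exact hasDerivAt_id (v i)
      · have : pderiv j (X i : MvPolynomial τ ℝ) = 0 := pderiv_X_of_ne (fun h => hij h)
        rw [this]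
        simpa [hij] using hasDerivAt_const (v j) (v i)
    have := hp.mul hX
    simp only [Function.update_eq_self] at this
    rw [pderiv_mul, map_add, map_mul, map_mul, eval_X]
    simp only [map_mul, eval_X]
    exact this

theorem cs_totalDegree_pderiv {R τ : Type*} [CommRing R] (P : MvPolynomial τ R) (j : τ) :
    (pderiv j P).totalDegree ≤ P.totalDegree := by
  conv_lhs => rw [P.as_sum, map_sum]
  refine (totalDegree_finsetSum _ _).trans (Finset.sup_le fun α hα => ?_)
  rw [pderiv_monomial]
  refine (totalDegree_monomial_le _ _).trans (le_trans ?_ (le_totalDegree hα))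
  change ((α - Finsupp.single j 1).sum fun _ e => e) ≤ (α.sum fun _ e => e)
  by_cases h : α j = 0
  · rw [show α - Finsupp.single j 1 = α by
      ext i
      by_cases hi : i = j
      · subst hi; simp [h]
      · simp [Ne.symm hi]]
  · have : α = (α - Finsupp.single j 1) + Finsupp.single j 1 := by
      rw [tsub_add_cancel_of_le]
      exact Finsupp.single_le_iff.mpr (Nat.one_le_iff_ne_zero.mpr h)
    conv_rhs => rw [this]
    rw [Finsupp.sum_add_index' (by simp) (by simp)]
    simp

/-- Evaluation of a polynomial with coefficients in `ℝ[t]`. -/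
def csEv {τ : Type*} (t : ℝ) (v : τ → ℝ) : MvPolynomial τ (Polynomial ℝ) →+* ℝ :=
  eval₂Hom (Polynomial.evalRingHom t) v

theorem csEv_eq {τ : Type*} (t : ℝ) (v : τ → ℝ) (P : MvPolynomial τ (Polynomial ℝ)) :
    csEv t v P = eval v (MvPolynomial.map (Polynomial.evalRingHom t) P) := by
  simp [csEv, eval_map]

theorem cs_lead_limit (a : ℕ) (c : ℕ → ℕ → ℝ) (cb : ℕ → ℝ) (s : ℕ → ℝ)
    (hs : Tendsto s atTop atTop) (hc : ∀ i, Tendsto (fun k => c k i) atTop (nhds (cb i)))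
    (h0 : ∀ k, ∑ i ∈ Finset.range (a + 1), c k i * s k ^ i = 0) : cb a = 0 := by
  have h1 : Tendsto (fun k => ∑ i ∈ Finset.range (a + 1), c k i * ((s k)⁻¹) ^ (a - i)) atTop
      (nhds (∑ i ∈ Finset.range (a + 1), cb i * (0 : ℝ) ^ (a - i))) := by
    refine tendsto_finsetSum _ fun i _ => ?_
    exact (hc i).mul ((tendsto_inv_atTop_zero.comp hs).pow _)
  have h2 : ∑ i ∈ Finset.range (a + 1), cb i * (0 : ℝ) ^ (a - i) = cb a := by
    rw [Finset.sum_eq_single a]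
    · simp
    · intro i hi hia
      have : a - i ≠ 0 := by
        have := Finset.mem_range.mp hi
        omega
      simp [this]
    · simp
  have h3 : ∀ᶠ k in atTop, ∑ i ∈ Finset.range (a + 1), c k i * ((s k)⁻¹) ^ (a - i) = 0 := by
    filter_upwards [hs.eventually_gt_atTop 0] with k hk
    have : ∑ i ∈ Finset.range (a + 1), c k i * ((s k)⁻¹) ^ (a - i)
        = ((s k)⁻¹) ^ a * ∑ i ∈ Finset.range (a + 1), c k i * s k ^ i := by
      rw [Finset.mul_sum]
      refine Finset.sum_congr rfl fun i hi => ?_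
      have hia : i ≤ a := by
        have := Finset.mem_range.mp hi
        omega
      have : (s k)⁻¹ ^ a = (s k)⁻¹ ^ (a - i) * (s k)⁻¹ ^ i := by
        rw [← pow_add]; congr 1; omega
      rw [this]
      have h5 : (s k)⁻¹ ^ i * s k ^ i = 1 := by
        rw [← mul_pow, inv_mul_cancel₀ hk.ne', one_pow]
      linear_combination (-(c k i * (s k)⁻¹ ^ (a - i))) * h5
    rw [this, h0, mul_zero]
  rw [← h2]
  exact tendsto_nhds_unique h1 (Tendsto.congr' (h3.mono fun k hk => hk.symm) tendsto_const_nhds)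

/-- For each fixed `t` and weight `s ≥ 0`, a penalised minimiser exists and is critical. -/
theorem cs_minimiser {τ : Type*} [Fintype τ] (P : MvPolynomial τ ℝ) (hP : ∀ v, 0 ≤ eval v P)
    (N : ℕ) (hN : 0 < N) (v0 : τ → ℝ) (hv0 : eval v0 P = 0) (s : ℝ) (hs : 0 ≤ s) :
    ∃ v : τ → ℝ, (∀ j, v j ^ (2 * N - 1) + s * eval v (pderiv j P) = 0) ∧
      (∀ j, |v j| ≤ 1 + ∑ i, v0 i ^ (2 * N)) ∧
      2 * N * (s * eval v P) ≤ ∑ i, v0 i ^ (2 * N) := by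
  set c : ℝ := ∑ i, v0 i ^ (2 * N) with hc
  have hnn : ∀ (v : τ → ℝ) i, 0 ≤ v i ^ (2 * N) := fun v i => by
    rw [pow_mul]; positivity
  have hc0 : 0 ≤ c := Finset.sum_nonneg fun i _ => hnn v0 i
  set K : Set (τ → ℝ) := {v | ∑ i, v i ^ (2 * N) ≤ c} with hK
  have hbd : ∀ v ∈ K, ∀ j, |v j| ≤ 1 + c := by
    intro v hv j
    by_contra hcon
    push Not at hcon
    have h1 : v j ^ (2 * N) ≤ c :=
      (Finset.single_le_sum (f := fun i => v i ^ (2 * N)) (fun i _ => hnn v i)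
        (Finset.mem_univ j)).trans hv
    have h2 : |v j| ≤ |v j| ^ (2 * N) := le_self_pow₀ (by linarith) (by omega)
    rw [pow_mul, sq_abs, ← pow_mul] at h2
    linarith
  have hKc : IsCompact K := by
    have hcl : IsClosed K := isClosed_le (by fun_prop) continuous_const
    refine (isCompact_univ_pi (fun _ : τ => isCompact_Icc (a := -(1 + c)) (b := 1 + c))).of_isClosed_subset
      hcl ?_
    intro v hv j _
    exact abs_le.mp (hbd v hv j)
  set Φ : (τ → ℝ) → ℝ := fun v => 2 * N * (s * eval v P) + ∑ i, v i ^ (2 * N) with hΦ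
  have hcont : Continuous Φ := by
    have : Continuous fun v => eval v P := MvPolynomial.continuous_eval P
    fun_prop
  obtain ⟨v, hvK, hvmin⟩ := hKc.exists_isMinOn ⟨v0, le_refl c⟩ hcont.continuousOn
  have hN' : (0 : ℝ) < N := by exact_mod_cast hN
  have hΦ0 : Φ v0 = c := by simp [hΦ, hv0, hc]
  have hPn : ∀ w, 0 ≤ 2 * N * (s * eval w P) := fun w => by
    have := hP w
    positivity
  have hvle : Φ v ≤ c := hΦ0 ▸ hvmin (le_refl c : v0 ∈ K)
  have hglob : ∀ w, Φ v ≤ Φ w := by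
    intro w
    by_cases hw : w ∈ K
    · exact hvmin hw
    · have h1 : c < ∑ i, w i ^ (2 * N) := not_le.mp hw
      have h2 := hPn w
      simp only [hΦ] at hvle ⊢
      linarith
  refine ⟨v, ?_, hbd v hvK, ?_⟩
  · intro j
    have hd1 := cs_hasDerivAt P v j
    have hd2 := cs_hasDerivAt (∑ i, X i ^ (2 * N) : MvPolynomial τ ℝ) v j
    have hd := ((hd1.const_mul s).const_mul (2 * N : ℝ)).add hd2
    have hmin : IsLocalMin (fun u => 2 * (N : ℝ) * (s * eval (Function.update v j u) P) +
        eval (Function.update v j u) (∑ i, X i ^ (2 * N) : MvPolynomial τ ℝ)) (v j) := by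
      refine Filter.Eventually.of_forall fun u => ?_
      have := hglob (Function.update v j u)
      simpa [hΦ] using this
    have hz := hmin.hasDerivAt_eq_zero hd
    have hp : eval v (pderiv j (∑ i, X i ^ (2 * N) : MvPolynomial τ ℝ))
        = 2 * N * v j ^ (2 * N - 1) := by
      rw [map_sum, map_sum, Finset.sum_eq_single j]
      · rw [pderiv_pow, pderiv_X_self]; simp
      · intro i _ hij
        rw [pderiv_pow, pderiv_X_of_ne hij]; simp
      · simp
    rw [hp] at hz
    have h2 : (2 * (N : ℝ)) * (v j ^ (2 * N - 1) + s * eval v (pderiv j P)) = 0 := by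
      linear_combination hz
    exact (mul_eq_zero.mp h2).resolve_left (by positivity)
  · have h1 : 0 ≤ ∑ i, v i ^ (2 * N) := Finset.sum_nonneg fun i _ => hnn v i
    simp only [hΦ] at hvle
    linarith

theorem cs_integral_eq {τ : Type*} [Fintype τ] (P : MvPolynomial τ (Polynomial ℝ)) (D : ℕ)
    (hD : P.totalDegree < D) (j : τ) :
    ∃ f : Polynomial (Polynomial (Polynomial ℝ)), f.Monic ∧
      ∀ (t s : ℝ) (v : τ → ℝ), (∀ i, v i ^ D + s * csEv t v (pderiv i P) = 0) →
        Polynomial.eval₂ (Polynomial.evalEvalRingHom t s) (v j) f = 0 := by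
  let Z := {z : ℝ × ℝ × (τ → ℝ) // ∀ i, z.2.2 i ^ D + z.2.1 * csEv z.1 z.2.2 (pderiv i P) = 0}
  let ρ : Polynomial (Polynomial ℝ) →+* (Z → ℝ) :=
    RingHom.pi fun z : Z => Polynomial.evalEvalRingHom z.1.1 z.1.2.1
  let _ : Algebra (Polynomial (Polynomial ℝ)) (Z → ℝ) := ρ.toAlgebra
  let v : τ → (Z → ℝ) := fun i z => z.1.2.2 i
  let g : τ → MvPolynomial τ (Polynomial (Polynomial ℝ)) := fun i =>
    C (-Polynomial.X) * MvPolynomial.map Polynomial.C (pderiv i P)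
  have hg : ∀ i, (g i).totalDegree < D := by
    intro i
    refine lt_of_le_of_lt (totalDegree_mul _ _) ?_
    rw [totalDegree_C, zero_add]
    refine lt_of_le_of_lt ?_ hD
    refine le_trans ?_ (cs_totalDegree_pderiv P i)
    unfold totalDegree
    exact Finset.sup_mono (support_map_subset _ _)
  have h : ∀ i, v i ^ D = aeval v (g i) := by
    intro i
    funext z
    have h1 : (aeval v (g i)) z = eval₂Hom (Polynomial.evalEvalRingHom z.1.1 z.1.2.1) z.1.2.2 (g i) := by
      have : (Pi.evalRingHom (fun _ : Z => ℝ) z).comp (aeval v : _ →ₐ[Polynomial (Polynomial ℝ)] _).toRingHom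
          = eval₂Hom (Polynomial.evalEvalRingHom z.1.1 z.1.2.1) z.1.2.2 := by
        apply MvPolynomial.ringHom_ext
        · intro r
          simp
          rfl
        · intro k
          simp [v]
      exact congrArg (fun F => F (g i)) this
    rw [h1]
    have h2 : eval₂Hom (Polynomial.evalEvalRingHom z.1.1 z.1.2.1) z.1.2.2 (g i)
        = -z.1.2.1 * csEv z.1.1 z.1.2.2 (pderiv i P) := by
      simp only [g, map_mul, csEv, coe_eval₂Hom, eval₂_C, eval₂_map]
      congr 1
      · simp
      · congr 1
        ext <;> simp
    rw [h2]
    have := z.2 i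
    simp only [Pi.pow_apply, v]
    linarith
  obtain ⟨f, hf, hf0⟩ := cs_integral v D g hg h j
  refine ⟨f, hf, fun t s w hw => ?_⟩
  have := congrFun hf0 ⟨(t, s, w), hw⟩
  have h3 := Polynomial.hom_eval₂ f ρ (Pi.evalRingHom (fun _ : Z => ℝ) ⟨(t, s, w), hw⟩) (v j)
  have h4 : (Pi.evalRingHom (fun _ : Z => ℝ) ⟨(t, s, w), hw⟩) (Polynomial.eval₂ ρ (v j) f) = 0 := this
  rw [h4] at h3
  exact h3.symm

theorem cs_swap (f : Polynomial (Polynomial (Polynomial ℝ))) (t s x : ℝ) :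
    Polynomial.eval₂ (Polynomial.evalEvalRingHom t s) x f =
      Polynomial.eval₂ (Polynomial.evalEvalRingHom t x) s (Polynomial.Bivariate.swap f) := by
  have : Polynomial.eval₂RingHom (Polynomial.evalEvalRingHom t s) x =
      (Polynomial.eval₂RingHom (Polynomial.evalEvalRingHom t x) s).comp
        (Polynomial.Bivariate.swap (R := Polynomial ℝ)).toAlgHom.toRingHom := by
    apply Polynomial.ringHom_ext'
    · apply Polynomial.ringHom_ext'
      · ext <;> simp [Polynomial.Bivariate.swap_apply]
      · simp [Polynomial.Bivariate.swap_apply]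
    · simp [Polynomial.Bivariate.swap_apply]
  exact congrArg (fun F => F f) this

theorem cs_algebraic_zero {τ : Type*} [Fintype τ] (P : MvPolynomial τ (Polynomial ℝ))
    (hP : ∀ t v, 0 ≤ csEv t v P) :
    ∃ Q : τ → Polynomial (Polynomial ℝ), (∀ j, Q j ≠ 0) ∧
      ∀ t, (∃ v, csEv t v P = 0) →
        ∃ v : τ → ℝ, csEv t v P = 0 ∧ ∀ j, Polynomial.evalEval t (v j) (Q j) = 0 := by
  set N := P.totalDegree + 1 with hN
  have hD : P.totalDegree < 2 * N - 1 := by omega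
  choose f hf hf0 using fun j => cs_integral_eq P (2 * N - 1) hD j
  set g := fun j => Polynomial.Bivariate.swap (f j) with hg
  have hg0 : ∀ j, g j ≠ 0 := fun j => by
    rw [hg]
    simpa using (hf j).ne_zero
  refine ⟨fun j => (g j).leadingCoeff, fun j => Polynomial.leadingCoeff_ne_zero.mpr (hg0 j), ?_⟩
  rintro t ⟨v0, hv0⟩
  set Pt := MvPolynomial.map (Polynomial.evalRingHom t) P with hPt
  have hmin := fun k : ℕ => cs_minimiser Pt (fun v => by rw [hPt, ← csEv_eq]; exact hP t v) N
    (by omega) v0 (by rw [hPt, ← csEv_eq]; exact hv0) (k + 1) (by positivity)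
  choose v hv1 hv2 hv3 using hmin
  set c : ℝ := ∑ i, v0 i ^ (2 * N) with hc
  have hcomp : IsCompact (Set.univ.pi fun _ : τ => Icc (-(1 + c)) (1 + c)) :=
    isCompact_univ_pi fun _ => isCompact_Icc
  obtain ⟨w, -, ψ, hψ, hlim⟩ := hcomp.tendsto_subseq (x := v)
    (fun k j _ => abs_le.mp (hv2 k j))
  have hs : Tendsto (fun k => ((ψ k : ℕ) : ℝ) + 1) atTop atTop :=
    tendsto_atTop_add_const_right _ _ (tendsto_natCast_atTop_atTop.comp hψ.tendsto_atTop)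
  refine ⟨w, ?_, fun j => ?_⟩
  · have hcont : Continuous fun v => eval v Pt := MvPolynomial.continuous_eval Pt
    have h1 : Tendsto (fun k => eval (v (ψ k)) Pt) atTop (nhds (eval w Pt)) :=
      (hcont.tendsto w).comp hlim
    have h2 : Tendsto (fun k => eval (v (ψ k)) Pt) atTop (nhds 0) := by
      have h3 : Tendsto (fun k => c * (((ψ k : ℕ) : ℝ) + 1)⁻¹) atTop (nhds (c * 0)) :=
        (tendsto_inv_atTop_zero.comp hs).const_mul c
      rw [mul_zero] at h3
      refine squeeze_zero (fun k => ?_) (fun k => ?_) h3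
      · rw [hPt, ← csEv_eq]; exact hP t _
      · have h4 := hv3 (ψ k)
        have h5 : 0 ≤ eval (v (ψ k)) Pt := by rw [hPt, ← csEv_eq]; exact hP t _
        have h6 : (0 : ℝ) < ((ψ k : ℕ) : ℝ) + 1 := by positivity
        rw [← div_eq_mul_inv, le_div_iff₀ h6]
        have h7 : (1 : ℝ) ≤ 2 * N := by
          have : (1 : ℝ) ≤ N := by rw [hN]; push_cast; linarith [Nat.cast_nonneg (α := ℝ) P.totalDegree]
          linarith
        nlinarith [mul_nonneg h6.le h5]
    rw [csEv_eq]
    exact tendsto_nhds_unique h1 h2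
  · refine cs_lead_limit (g j).natDegree
      (fun k i => Polynomial.evalEval t (v (ψ k) j) ((g j).coeff i))
      (fun i => Polynomial.evalEval t (w j) ((g j).coeff i)) _ hs ?_ ?_
    · intro i
      have : Continuous fun z => Polynomial.evalEval t z ((g j).coeff i) := by
        simp only [← Polynomial.map_evalRingHom_eval]
        exact Polynomial.continuous _
      exact (this.tendsto _).comp ((tendsto_pi_nhds.mp hlim) j)
    · intro k
      have h1 := hf0 j t (((ψ k : ℕ) : ℝ) + 1) (v (ψ k)) (by
        intro i
        rw [csEv_eq, ← pderiv_map]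
        exact hv1 (ψ k) i)
      rw [cs_swap, Polynomial.eval₂_eq_sum_range] at h1
      exact h1

/-! ### Part 2: smooth semialgebraic branches of plane algebraic curves -/

theorem cs_eventually_ne (c : Polynomial ℝ) (hc : c ≠ 0) :
    ∀ᶠ t in nhdsWithin (0 : ℝ) (Ioi 0), c.eval t ≠ 0 := by
  have hf : {t : ℝ | c.IsRoot t}.Finite := Polynomial.finite_setOfPred_isRoot hc
  have hcl : IsClosed ({t : ℝ | c.IsRoot t} \ {0}) := (hf.sdiff).isClosed
  have h1 : ∀ᶠ t in nhds (0 : ℝ), t ∉ ({t : ℝ | c.IsRoot t} \ {0}) :=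
    hcl.isOpen_compl.mem_nhds (by simp)
  filter_upwards [nhdsWithin_le_nhds h1, self_mem_nhdsWithin] with t ht ht0 h0
  exact ht ⟨h0, (ne_of_gt ht0 : t ≠ 0)⟩

theorem cs_bezout (q r : Polynomial (Polynomial ℝ)) (hq : Irreducible q) (hr : r ≠ 0)
    (hd : r.natDegree < q.natDegree) :
    ∃ a b : Polynomial (Polynomial ℝ), ∃ c : Polynomial ℝ, c ≠ 0 ∧
      a * q + b * r = Polynomial.C c := by
  let K := FractionRing (Polynomial ℝ)
  have hinj : Function.Injective (algebraMap (Polynomial ℝ) K) := IsFractionRing.injective _ _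
  have hprim : q.IsPrimitive := hq.isPrimitive (by omega)
  have hqK : Irreducible (q.map (algebraMap (Polynomial ℝ) K)) :=
    (hprim.irreducible_iff_irreducible_map_fraction_map).mp hq
  have hrK : r.map (algebraMap (Polynomial ℝ) K) ≠ 0 := by
    rwa [Ne, Polynomial.map_eq_zero_iff hinj]
  have hcop : IsCoprime (q.map (algebraMap (Polynomial ℝ) K))
      (r.map (algebraMap (Polynomial ℝ) K)) := by
    rw [hqK.coprime_iff_not_dvd]
    intro hdvd
    have := Polynomial.natDegree_le_of_dvd hdvd hrK
    rw [Polynomial.natDegree_map_eq_of_injective hinj,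
      Polynomial.natDegree_map_eq_of_injective hinj] at this
    omega
  obtain ⟨a, b, hab⟩ := hcop
  obtain ⟨ca, hca, ha⟩ := IsLocalization.integerNormalization_spec (nonZeroDivisors (Polynomial ℝ)) a
  obtain ⟨cb, hcb, hb⟩ := IsLocalization.integerNormalization_spec (nonZeroDivisors (Polynomial ℝ)) b
  set A := IsLocalization.integerNormalization (nonZeroDivisors (Polynomial ℝ)) a
  set B := IsLocalization.integerNormalization (nonZeroDivisors (Polynomial ℝ)) b
  refine ⟨Polynomial.C cb * A, Polynomial.C ca * B, ca * cb,
    mul_ne_zero (nonZeroDivisors.ne_zero hca) (nonZeroDivisors.ne_zero hcb), ?_⟩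
  apply Polynomial.map_injective _ hinj
  have hs : ∀ (c : Polynomial ℝ) (p : Polynomial K),
      c • p = Polynomial.C (algebraMap (Polynomial ℝ) K c) * p := by
    intro c p
    rw [← Polynomial.smul_eq_C_mul, algebraMap_smul]
  rw [hs] at ha hb
  simp only [Polynomial.map_add, Polynomial.map_mul, Polynomial.map_C, ha, hb, map_mul]
  linear_combination (Polynomial.C (algebraMap (Polynomial ℝ) K ca) *
    Polynomial.C (algebraMap (Polynomial ℝ) K cb)) * hab

theorem cs_evalEval_sum (q : Polynomial (Polynomial ℝ)) (t z : ℝ) :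
    Polynomial.evalEval t z q =
      ∑ i ∈ Finset.range (q.natDegree + 1), (q.coeff i).eval t * z ^ i := by
  rw [← Polynomial.eval₂_evalRingHom, Polynomial.eval₂_eq_sum_range]
  simp

theorem cs_contDiff (q : Polynomial (Polynomial ℝ)) :
    ContDiff ℝ (⊤ : ℕ∞) (fun u : ℝ × ℝ => Polynomial.evalEval u.1 u.2 q) := by
  simp only [cs_evalEval_sum]
  refine ContDiff.sum fun i _ => ?_
  have h : ContDiff ℝ (⊤ : ℕ∞) fun u : ℝ => (q.coeff i).eval u := by
    simpa using Polynomial.contDiff_aeval (𝕜 := ℝ) (q.coeff i) _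
  exact (h.comp contDiff_fst).mul (contDiff_snd.pow i)

theorem cs_ift (q : Polynomial (Polynomial ℝ)) (t0 z0 : ℝ) (h0 : Polynomial.evalEval t0 z0 q = 0)
    (h1 : Polynomial.evalEval t0 z0 (Polynomial.derivative q) ≠ 0) :
    ∃ η : ℝ → ℝ, ContDiffAt ℝ (⊤ : ℕ∞) η t0 ∧ η t0 = z0 ∧
      ∀ᶠ t in nhds t0, Polynomial.evalEval t (η t) q = 0 := by
  set f : ℝ × ℝ → ℝ := fun u => Polynomial.evalEval u.1 u.2 q with hf
  have cdf : ContDiffAt ℝ (⊤ : ℕ∞) f (t0, z0) := (cs_contDiff q).contDiffAt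
  have hdf : HasFDerivAt f (fderiv ℝ f (t0, z0)) (t0, z0) :=
    (cdf.differentiableAt (by simp)).hasFDerivAt
  have hc : HasDerivAt (fun z : ℝ => (t0, z)) ((0 : ℝ), (1 : ℝ)) z0 :=
    (hasDerivAt_const z0 t0).prodMk (hasDerivAt_id z0)
  have hd1 : HasDerivAt (fun z => f (t0, z)) (fderiv ℝ f (t0, z0) (0, 1)) z0 :=
    HasFDerivAt.comp_hasDerivAt (x := z0) (f := fun z : ℝ => (t0, z)) hdf hc
  have hd2 : HasDerivAt (fun z => f (t0, z))
      (Polynomial.evalEval t0 z0 (Polynomial.derivative q)) z0 := by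
    have := (q.map (Polynomial.evalRingHom t0)).hasDerivAt z0
    rw [Polynomial.derivative_map, Polynomial.map_evalRingHom_eval] at this
    simp only [hf, ← Polynomial.map_evalRingHom_eval t0 _ q]
    exact this
  have hne : fderiv ℝ f (t0, z0) (0, 1) ≠ 0 := by
    rw [hd1.unique hd2]; exact h1
  have hinv : (fderiv ℝ f (t0, z0) ∘L ContinuousLinearMap.inr ℝ ℝ ℝ).IsInvertible := by
    refine ⟨ContinuousLinearEquiv.unitsEquivAut ℝ (Units.mk0 _ hne), ?_⟩
    ext
    simp
  have hn : ((⊤ : ℕ∞) : WithTop ℕ∞) ≠ 0 := by simp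
  refine ⟨cdf.implicitFunction hn hinv, cdf.contDiffAt_implicitFunction hn hinv,
    cdf.implicitFunction_apply_self hn hinv, ?_⟩
  filter_upwards [cdf.eventually_apply_implicitFunction hn hinv] with t ht
  have : f (t0, z0) = 0 := h0
  rw [this] at ht
  exact ht

/-- The Thom lemma, first form. -/
theorem cs_thom_aux (x y : ℝ) (hxy : x ≤ y) : ∀ (d : ℕ) (g : Polynomial ℝ), g.natDegree ≤ d →
    (∀ k ≤ d, 0 < (Polynomial.derivative^[k] g).eval x * (Polynomial.derivative^[k] g).eval y ∨
      Polynomial.derivative^[k] g = 0) → g ≠ 0 → ∀ w ∈ Icc x y, g.eval w ≠ 0 := by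
  intro d
  induction d with
  | zero =>
    intro g hg hk hg0 w _
    obtain ⟨c, rfl⟩ := Polynomial.natDegree_eq_zero.mp (Nat.le_zero.mp hg)
    simpa using hg0
  | succ d ih =>
    intro g hg hk hg0 w hw h0
    have hxy0 : 0 < g.eval x * g.eval y := (hk 0 (by omega)).resolve_right hg0
    by_cases hg' : Polynomial.derivative g = 0
    · have := Polynomial.natDegree_eq_zero_of_derivative_eq_zero hg'
      obtain ⟨c, rfl⟩ := Polynomial.natDegree_eq_zero.mp this
      simp at h0
      simp [h0] at hg0
    have hd : (Polynomial.derivative g).natDegree ≤ d := by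
      have := Polynomial.natDegree_derivative_le g
      omega
    have hne : ∀ w ∈ Icc x y, (Polynomial.derivative g).eval w ≠ 0 := by
      refine ih _ hd (fun k hkd => ?_) hg'
      have := hk (k + 1) (by omega)
      rwa [Function.iterate_succ_apply] at this
    have hcontg' : ContinuousOn (fun w => (Polynomial.derivative g).eval w) (Icc x y) :=
      (Polynomial.continuous _).continuousOn
    have hcontg : ContinuousOn (fun w => g.eval w) (Icc x y) := (Polynomial.continuous _).continuousOn
    have hsign : (∀ w ∈ Icc x y, 0 < (Polynomial.derivative g).eval w) ∨
        (∀ w ∈ Icc x y, (Polynomial.derivative g).eval w < 0) := by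
      by_contra hcon
      push Not at hcon
      obtain ⟨⟨a, ha, ha'⟩, b, hb, hb'⟩ := hcon
      have hpc : IsPreconnected (Icc x y) := isPreconnected_Icc
      obtain ⟨c, hc, hc0⟩ := hpc.intermediate_value ha hb hcontg' ⟨ha', hb'⟩
      exact hne c hc hc0
    have hx : x ∈ Icc x y := left_mem_Icc.mpr hxy
    have hy : y ∈ Icc x y := right_mem_Icc.mpr hxy
    rcases hsign with hs | hs
    · have hmono : MonotoneOn (fun w => g.eval w) (Icc x y) := by
        refine monotoneOn_of_deriv_nonneg (convex_Icc x y) hcontg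
          (g.differentiable.differentiableOn) fun u hu => ?_
        rw [Polynomial.deriv]
        exact (hs u (interior_subset hu)).le
      have h1 := hmono hx hw hw.1
      have h2 := hmono hw hy hw.2
      simp only at h1 h2
      rw [h0] at h1 h2
      nlinarith
    · have hmono : AntitoneOn (fun w => g.eval w) (Icc x y) := by
        refine antitoneOn_of_deriv_nonpos (convex_Icc x y) hcontg
          (g.differentiable.differentiableOn) fun u hu => ?_
        rw [Polynomial.deriv]
        exact (hs u (interior_subset hu)).le
      have h1 := hmono hx hw hw.1
      have h2 := hmono hw hy hw.2
      simp only at h1 h2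
      rw [h0] at h1 h2
      nlinarith

/-- The Thom lemma: a root is determined by the signs of the derivatives. -/
theorem cs_thom (f : Polynomial ℝ) (d : ℕ) (hd : f.natDegree = d + 1) (x y : ℝ)
    (hx : f.eval x = 0) (hy : f.eval y = 0)
    (hk : ∀ k ≤ d, 0 < (Polynomial.derivative^[k + 1] f).eval x *
      (Polynomial.derivative^[k + 1] f).eval y) : x = y := by
  wlog hxy : x < y generalizing x y
  · rcases eq_or_lt_of_le (not_lt.mp hxy) with h | h
    · exact h.symm
    · exact (this y x hy hx (fun k hkd => by rw [mul_comm]; exact hk k hkd) h).symm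
  exfalso
  have hf' : Polynomial.derivative f ≠ 0 := by
    intro h
    have := Polynomial.natDegree_eq_zero_of_derivative_eq_zero h
    omega
  have hdeg : (Polynomial.derivative f).natDegree ≤ d := by
    have := Polynomial.natDegree_derivative_le f
    omega
  have hne := cs_thom_aux x y hxy.le d (Polynomial.derivative f) hdeg
    (fun k hkd => Or.inl (by
      have := hk k hkd
      rwa [Function.iterate_succ_apply] at this)) hf'
  obtain ⟨c, hc, hc0⟩ := exists_deriv_eq_zero hxy (f.continuous.continuousOn)
    (show f.eval x = f.eval y by rw [hx, hy])
  rw [Polynomial.deriv] at hc0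
  exact hne c (Ioo_subset_Icc_self hc) hc0

theorem cs_basicSA_of {m : ℕ} {ι κ : Type*} [Fintype ι] [Fintype κ]
    (g : ι → MvPolynomial (Fin m) ℝ) (h : κ → MvPolynomial (Fin m) ℝ) (A : Set (Fin m → ℝ))
    (hA : ∀ x, x ∈ A ↔ (∀ i, eval x (g i) = 0) ∧ ∀ i, 0 < eval x (h i)) : BasicSA A := by
  refine ⟨Fintype.card ι, Fintype.card κ, fun i => g ((Fintype.equivFin ι).symm i),
    fun i => h ((Fintype.equivFin κ).symm i), ?_⟩
  ext x
  rw [hA, mem_ofPred_eq]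
  refine and_congr ?_ ?_
  · exact ((Fintype.equivFin ι).symm.forall_congr_right (q := fun i => eval x (g i) = 0)).symm
  · exact ((Fintype.equivFin κ).symm.forall_congr_right (q := fun i => 0 < eval x (h i))).symm

/-- A two-variable polynomial as an element of `ℝ[X₀, X₁]`. -/
def csMv (q : Polynomial (Polynomial ℝ)) : MvPolynomial (Fin 2) ℝ :=
  Polynomial.eval₂ (Polynomial.eval₂RingHom C (X 0)) (X 1) q

theorem cs_eval_mv (q : Polynomial (Polynomial ℝ)) (z : Fin 2 → ℝ) :
    eval z (csMv q) = Polynomial.evalEval (z 0) (z 1) q := by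
  rw [csMv, Polynomial.hom_eval₂, ← Polynomial.eval₂_evalRingHom, eval_X]
  congr 1
  ext <;> simp

/-- Smooth semialgebraic branch of the curve `Q = 0` over `(0, ε)`. -/
def CsBranch (Q : Polynomial (Polynomial ℝ)) (ε : ℝ) (ξ : ℝ → ℝ) : Prop :=
  ContDiffOn ℝ (⊤ : ℕ∞) ξ (Ioo 0 ε) ∧
  (∀ ε' ≤ ε, BasicSA {z : Fin 2 → ℝ | z 0 ∈ Ioo 0 ε' ∧ z 1 = ξ (z 0)}) ∧
  ∀ t ∈ Ioo 0 ε, Polynomial.evalEval t (ξ t) Q = 0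

/-- All real points of `Q = 0` over `(0, ε)` lie on finitely many branches. -/
def CsCovered (Q : Polynomial (Polynomial ℝ)) (ε : ℝ) : Prop :=
  ∃ Ξ : Set (ℝ → ℝ), Ξ.Finite ∧ (∀ ξ ∈ Ξ, CsBranch Q ε ξ) ∧
    ∀ t ∈ Ioo 0 ε, ∀ z, Polynomial.evalEval t z Q = 0 → ∃ ξ ∈ Ξ, z = ξ t

theorem CsBranch.mono {Q : Polynomial (Polynomial ℝ)} {ε ε' : ℝ} {ξ : ℝ → ℝ}
    (h : CsBranch Q ε ξ) (hε : ε' ≤ ε) : CsBranch Q ε' ξ :=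
  ⟨h.1.mono (Ioo_subset_Ioo_right hε), fun _ h' => h.2.1 _ (h'.trans hε),
    fun _ ht => h.2.2 _ (Ioo_subset_Ioo_right hε ht)⟩

theorem CsCovered.mono {Q : Polynomial (Polynomial ℝ)} {ε ε' : ℝ}
    (h : CsCovered Q ε) (hε : ε' ≤ ε) : CsCovered Q ε' := by
  obtain ⟨Ξ, h1, h2, h3⟩ := h
  exact ⟨Ξ, h1, fun ξ hξ => (h2 ξ hξ).mono hε, fun t ht => h3 t (Ioo_subset_Ioo_right hε ht)⟩

theorem cs_exists_Ioo {p : ℝ → Prop} (h : ∀ᶠ t in nhdsWithin (0 : ℝ) (Ioi 0), p t) :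
    ∃ ε > 0, ∀ t ∈ Ioo 0 ε, p t := by
  obtain ⟨u, hu, hsub⟩ := mem_nhdsGT_iff_exists_Ioo_subset.mp h
  exact ⟨u, hu, fun t ht => hsub ht⟩

theorem cs_irreducible (q : Polynomial (Polynomial ℝ)) (hq : Irreducible q) :
    ∃ ε > 0, CsCovered q ε := by
  have hq0 : q ≠ 0 := hq.ne_zero
  rcases Nat.eq_zero_or_pos q.natDegree with hdeg | hdeg
  · -- no roots
    obtain ⟨c, rfl⟩ := Polynomial.natDegree_eq_zero.mp hdeg
    have hc : c ≠ 0 := by rintro rfl; simp at hq0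
    obtain ⟨ε, hε, h⟩ := cs_exists_Ioo (cs_eventually_ne c hc)
    refine ⟨ε, hε, ∅, Set.finite_empty, by simp, fun t ht z hz => ?_⟩
    rw [Polynomial.evalEval_C] at hz
    exact absurd hz (h t ht)
  obtain ⟨d, hd⟩ : ∃ d, q.natDegree = d + 1 := ⟨q.natDegree - 1, by omega⟩
  set D : ℕ → Polynomial (Polynomial ℝ) := fun k => Polynomial.derivative^[k + 1] q with hD
  have hDne : ∀ k ≤ d, D k ≠ 0 := by
    intro k hk h
    have h1 : (D k).coeff (d - k) = 0 := by rw [h]; simp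
    rw [hD] at h1
    simp only [Polynomial.coeff_iterate_derivative] at h1
    rw [show d - k + (k + 1) = q.natDegree by omega] at h1
    rw [smul_eq_zero] at h1
    rcases h1 with h1 | h1
    · rw [Nat.descFactorial_eq_zero_iff_lt] at h1
      omega
    · exact hq0 (Polynomial.leadingCoeff_eq_zero.mp h1)
  have hbez : ∀ k : Fin (d + 1), ∀ᶠ t in nhdsWithin (0 : ℝ) (Ioi 0),
      ∀ z, Polynomial.evalEval t z q = 0 → Polynomial.evalEval t z (D k) ≠ 0 := by
    intro k
    have hlt : (D k).natDegree < q.natDegree := by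
      have := Polynomial.natDegree_iterate_derivative q (k + 1)
      simp only [hD]
      omega
    obtain ⟨a, b, c, hc, habc⟩ := cs_bezout q (D k) hq (hDne k (by omega)) hlt
    filter_upwards [cs_eventually_ne c hc] with t ht z hz hz'
    have := congrArg (Polynomial.evalEval t z) habc
    rw [Polynomial.evalEval_add, Polynomial.evalEval_mul, Polynomial.evalEval_mul, hz, hz',
      Polynomial.evalEval_C] at this
    simp at this
    exact ht this.symm
  obtain ⟨ε, hε, hgood⟩ := cs_exists_Ioo
    ((cs_eventually_ne q.leadingCoeff (Polynomial.leadingCoeff_ne_zero.mpr hq0)).and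
      (eventually_all.mpr hbez))
  -- sign conditions
  set S : (Fin (d + 1) → ℤˣ) → ℝ → ℝ → Prop := fun σ t z =>
    Polynomial.evalEval t z q = 0 ∧ ∀ k : Fin (d + 1),
      0 < (((σ k : ℤ) : ℝ)) * Polynomial.evalEval t z (D k) with hS
  have huniq : ∀ σ, ∀ t ∈ Ioo 0 ε, ∀ z w, S σ t z → S σ t w → z = w := by
    intro σ t ht z w hz hw
    have hdegt : (q.map (Polynomial.evalRingHom t)).natDegree = d + 1 := by
      rw [← hd]
      exact Polynomial.natDegree_map_of_leadingCoeff_ne_zero _ (hgood t ht).1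
    refine cs_thom (q.map (Polynomial.evalRingHom t)) d hdegt z w ?_ ?_ ?_
    · rw [Polynomial.map_evalRingHom_eval]; exact hz.1
    · rw [Polynomial.map_evalRingHom_eval]; exact hw.1
    · intro k hk
      have h1 := hz.2 ⟨k, by omega⟩
      have h2 := hw.2 ⟨k, by omega⟩
      rw [Polynomial.iterate_derivative_map, Polynomial.map_evalRingHom_eval,
        Polynomial.map_evalRingHom_eval]
      have h3 := mul_pos h1 h2
      rcases Int.units_eq_one_or (σ ⟨k, by omega⟩) with h | h
      · rw [h] at h3; simpa [hD] using h3
      · rw [h] at h3; simpa [hD] using h3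
  have hcov : ∀ t ∈ Ioo 0 ε, ∀ z, Polynomial.evalEval t z q = 0 → ∃ σ, S σ t z := by
    intro t ht z hz
    refine ⟨fun k => if 0 < Polynomial.evalEval t z (D k) then 1 else -1, hz, fun k => ?_⟩
    have hne := (hgood t ht).2 k z hz
    by_cases h : 0 < Polynomial.evalEval t z (D k)
    · simpa [h] using h
    · have : Polynomial.evalEval t z (D k) < 0 := lt_of_le_of_ne (not_lt.mp h) hne
      simpa [h] using this
  have hcontE : ∀ p : Polynomial (Polynomial ℝ),
      Continuous fun u : ℝ × ℝ => Polynomial.evalEval u.1 u.2 p := fun p => (cs_contDiff p).continuous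
  -- local continuation
  have hloc : ∀ σ, ∀ t ∈ Ioo 0 ε, ∀ z, S σ t z → ∃ η : ℝ → ℝ, ContDiffAt ℝ (⊤ : ℕ∞) η t ∧
      ∀ᶠ u in nhds t, S σ u (η u) := by
    intro σ t ht z hz
    have h1 : Polynomial.evalEval t z (Polynomial.derivative q) ≠ 0 := (hgood t ht).2 0 z hz.1
    obtain ⟨η, hη, hηt, hη0⟩ := cs_ift q t z hz.1 h1
    refine ⟨η, hη, ?_⟩
    have h2 : ∀ k : Fin (d + 1), ∀ᶠ u in nhds t,
        0 < (((σ k : ℤ) : ℝ)) * Polynomial.evalEval u (η u) (D k) := by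
      intro k
      have hc : ContinuousAt (fun u => (((σ k : ℤ) : ℝ)) * Polynomial.evalEval u (η u) (D k)) t := by
        refine continuousAt_const.mul ?_
        exact ContinuousAt.comp (f := fun u => (u, η u))
          (g := fun u : ℝ × ℝ => Polynomial.evalEval u.1 u.2 (D k))
          (hcontE (D k)).continuousAt (continuousAt_id.prodMk hη.continuousAt)
      refine hc.eventually (lt_mem_nhds ?_)
      show 0 < ((σ k : ℤ) : ℝ) * Polynomial.evalEval t (η t) (D k)
      rw [hηt]
      exact hz.2 k
    filter_upwards [hη0, eventually_all.mpr h2] with u hu1 hu2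
    exact ⟨hu1, hu2⟩
  -- clopen
  have hall : ∀ σ, (∃ t ∈ Ioo 0 ε, ∃ z, S σ t z) → ∀ t ∈ Ioo 0 ε, ∃ z, S σ t z := by
    intro σ ⟨t1, ht1, z1, hz1⟩
    set T : Set ℝ := {t | t ∈ Ioo 0 ε ∧ ∃ z, S σ t z} with hT
    have hTo : IsOpen T := by
      rw [isOpen_iff_mem_nhds]
      rintro t ⟨ht, z, hz⟩
      obtain ⟨η, _, hη⟩ := hloc σ t ht z hz
      filter_upwards [hη, isOpen_Ioo.mem_nhds ht] with u hu hu'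
      exact ⟨hu', _, hu⟩
    have hcl : closure T ∩ Ioo 0 ε ⊆ T := by
      rintro t ⟨htc, ht⟩
      obtain ⟨u, huT, hulim⟩ := mem_closure_iff_seq_limit.mp htc
      choose hu z hz using huT
      set B : ℝ → NNReal := fun t => (Finset.range (d + 1)).sup
        (fun i => ‖(q.coeff i).eval t‖₊) / ‖(q.leadingCoeff).eval t‖₊ + 1 with hB
      have hBc : ContinuousAt B t := by
        have hn : ‖(q.leadingCoeff).eval t‖₊ ≠ 0 := by
          simpa using (hgood t ht).1
        have h1 : Continuous fun t => (Finset.range (d + 1)).sup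
            (fun i => ‖(q.coeff i).eval t‖₊) :=
          Continuous.finset_sup_apply fun i _ => (Polynomial.continuous _).nnnorm
        have h2 : Continuous fun t => ‖(q.leadingCoeff).eval t‖₊ := (Polynomial.continuous _).nnnorm
        exact (h1.continuousAt.div h2.continuousAt hn).add continuousAt_const
      have hzB : ∀ k, ‖z k‖₊ < B (u k) := by
        intro k
        have hdegt : (q.map (Polynomial.evalRingHom (u k))).natDegree = d + 1 := by
          rw [← hd]
          exact Polynomial.natDegree_map_of_leadingCoeff_ne_zero _ (hgood _ (hu k)).1
        have hne : q.map (Polynomial.evalRingHom (u k)) ≠ 0 := by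
          intro h; rw [h] at hdegt; simp at hdegt
        have := Polynomial.IsRoot.norm_lt_cauchyBound hne (a := z k) (by
          rw [Polynomial.IsRoot, Polynomial.map_evalRingHom_eval]; exact (hz k).1)
        rw [Polynomial.cauchyBound, Polynomial.leadingCoeff, hdegt] at this
        simpa [hB, Polynomial.leadingCoeff, hd] using this
      have hbdd : ∀ᶠ k in atTop, z k ∈ Metric.closedBall (0 : ℝ) (B t + 1) := by
        have h1 : ∀ᶠ k in atTop, B (u k) < B t + 1 :=
          (hBc.tendsto.comp hulim).eventually (gt_mem_nhds (by simp))
        filter_upwards [h1] with k hk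
        rw [mem_closedBall_zero_iff]
        have := (hzB k).trans hk
        exact_mod_cast (NNReal.coe_lt_coe.mpr this).le
      obtain ⟨w, -, ψ, hψ, hw⟩ := (isCompact_closedBall (0 : ℝ) (B t + 1)).tendsto_subseq'
        hbdd.frequently
      have hlim2 : Tendsto (fun k => (u (ψ k), z (ψ k))) atTop (nhds (t, w)) :=
        (hulim.comp hψ.tendsto_atTop).prodMk_nhds hw
      have hw0 : Polynomial.evalEval t w q = 0 := by
        have h1 := ((hcontE q).tendsto (t, w)).comp hlim2
        refine tendsto_nhds_unique h1 (Tendsto.congr (fun k => ?_) tendsto_const_nhds)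
        exact (hz (ψ k)).1.symm
      refine ⟨ht, w, hw0, fun k => ?_⟩
      have h1 := (((hcontE (D k)).tendsto (t, w)).comp hlim2).const_mul ((σ k : ℤ) : ℝ)
      have h2 : 0 ≤ ((σ k : ℤ) : ℝ) * Polynomial.evalEval t w (D k) :=
        ge_of_tendsto' h1 fun i => ((hz (ψ i)).2 k).le
      refine lt_of_le_of_ne h2 (Ne.symm (mul_ne_zero ?_ ((hgood t ht).2 k w hw0)))
      exact_mod_cast (σ k).ne_zero
    have := isPreconnected_Ioo.subset_of_closure_inter_subset hTo ⟨t1, ht1, ht1, z1, hz1⟩ hcl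
    intro t ht
    exact (this ht).2
  -- the branches
  set ξ : (Fin (d + 1) → ℤˣ) → ℝ → ℝ := fun σ t => if h : ∃ z, S σ t z then h.choose else 0 with hξ
  have hξS : ∀ σ t, (∃ z, S σ t z) → S σ t (ξ σ t) := by
    intro σ t h
    simp only [hξ, dif_pos h]
    exact h.choose_spec
  refine ⟨ε, hε, ξ '' {σ | ∃ t ∈ Ioo 0 ε, ∃ z, S σ t z}, (Set.toFinite _).image _, ?_, ?_⟩
  · rintro _ ⟨σ, hσ, rfl⟩
    have hσall := hall σ hσ
    refine ⟨?_, ?_, ?_⟩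
    · intro t ht
      obtain ⟨η, hη, hηS⟩ := hloc σ t ht _ (hξS σ t (hσall t ht))
      refine (hη.congr_of_eventuallyEq ?_).contDiffWithinAt
      filter_upwards [hηS, isOpen_Ioo.mem_nhds ht] with u hu hu'
      exact huniq σ u hu' _ _ (hξS σ u (hσall u hu')) hu
    · intro ε' hε'
      refine cs_basicSA_of (ι := Unit) (κ := Fin (d + 1) ⊕ Bool) (fun _ => csMv q)
        (Sum.elim (fun k => C ((σ k : ℤ) : ℝ) * csMv (D k))
          (fun b => if b then X 0 else C ε' - X 0)) _ ?_
      intro z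
      simp only [mem_ofPred_eq, Sum.forall, Sum.elim_inl, Sum.elim_inr, Bool.forall_bool, cs_eval_mv,
        map_mul, eval_C, forall_const, if_true, Bool.false_eq_true, if_false, map_sub, eval_X]
      constructor
      · rintro ⟨h1, h2⟩
        have h3 := hξS σ (z 0) (hσall _ (Ioo_subset_Ioo_right hε' h1))
        rw [← h2] at h3
        exact ⟨h3.1, h3.2, by linarith [h1.2], h1.1⟩
      · rintro ⟨h1, h2, h3, h4⟩
        have h5 : z 0 ∈ Ioo 0 ε' := ⟨h4, by linarith⟩
        have h6 := Ioo_subset_Ioo_right hε' h5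
        exact ⟨h5, huniq σ _ h6 _ _ ⟨h1, h2⟩ (hξS σ _ (hσall _ h6))⟩
    · intro t ht
      exact (hξS σ t (hσall t ht)).1
  · intro t ht z hz
    obtain ⟨σ, hσ⟩ := hcov t ht z hz
    exact ⟨ξ σ, ⟨σ, ⟨t, ht, z, hσ⟩, rfl⟩, huniq σ t ht _ _ hσ (hξS σ t ⟨z, hσ⟩)⟩

theorem cs_branches (Q : Polynomial (Polynomial ℝ)) (hQ : Q ≠ 0) : ∃ ε > 0, CsCovered Q ε := by
  induction Q using WfDvdMonoid.induction_on_irreducible with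
  | zero => exact absurd rfl hQ
  | unit u hu =>
    refine ⟨1, one_pos, ∅, Set.finite_empty, by simp, fun t _ z hz => ?_⟩
    have := hu.map (Polynomial.evalEvalRingHom t z)
    rw [Polynomial.coe_evalEvalRingHom, hz] at this
    simp at this
  | mul a q ha hq ih =>
    obtain ⟨ε1, hε1, h1⟩ := ih ha
    obtain ⟨ε2, hε2, h2⟩ := cs_irreducible q hq
    refine ⟨min ε1 ε2, lt_min hε1 hε2, ?_⟩
    obtain ⟨Ξ1, f1, b1, c1⟩ := h1.mono (min_le_left ε1 ε2)
    obtain ⟨Ξ2, f2, b2, c2⟩ := h2.mono (min_le_right ε1 ε2)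
    refine ⟨Ξ1 ∪ Ξ2, f1.union f2, ?_, ?_⟩
    · rintro ξ (h | h)
      · obtain ⟨p1, p2, p3⟩ := b1 ξ h
        exact ⟨p1, p2, fun t ht => by rw [Polynomial.evalEval_mul, p3 t ht, mul_zero]⟩
      · obtain ⟨p1, p2, p3⟩ := b2 ξ h
        exact ⟨p1, p2, fun t ht => by rw [Polynomial.evalEval_mul, p3 t ht, zero_mul]⟩
    · intro t ht z hz
      rw [Polynomial.evalEval_mul, mul_eq_zero] at hz
      rcases hz with hz | hz
      · obtain ⟨ξ, hξ, e⟩ := c2 t ht z hz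
        exact ⟨ξ, Or.inr hξ, e⟩
      · obtain ⟨ξ, hξ, e⟩ := c1 t ht z hz
        exact ⟨ξ, Or.inl hξ, e⟩

/-! ### Part 3: selection of curves -/

theorem cs_algebraic {τ : Type*} (ε : ℝ) (c : τ → ℝ → ℝ) (Q : τ → Polynomial (Polynomial ℝ))
    (hQ : ∀ j, Q j ≠ 0)
    (hc : ∀ j, ∀ t ∈ Ioo 0 ε, Polynomial.evalEval t (c j t) (Q j) = 0)
    (P : MvPolynomial τ (Polynomial ℝ)) :
    ∃ W : Polynomial (Polynomial ℝ), W ≠ 0 ∧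
      ∀ t ∈ Ioo 0 ε, Polynomial.evalEval t (csEv t (fun j => c j t) P) W = 0 := by
  let Z := {t : ℝ // t ∈ Ioo 0 ε}
  let ρ : Polynomial ℝ →+* (Z → ℝ) := RingHom.pi fun z : Z => Polynomial.evalRingHom z.1
  let _ : Algebra (Polynomial ℝ) (Z → ℝ) := ρ.toAlgebra
  let v : τ → (Z → ℝ) := fun j z => c j z.1
  have hev : ∀ (W : Polynomial (Polynomial ℝ)) (g : Z → ℝ) (z : Z),
      (Polynomial.aeval g W) z = Polynomial.evalEval z.1 (g z) W := by
    intro W g z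
    have h3 := Polynomial.hom_eval₂ W ρ (Pi.evalRingHom (fun _ : Z => ℝ) z) g
    rw [← Polynomial.eval₂_evalRingHom]
    exact h3
  have halg : ∀ j, v j ∈ Subalgebra.algebraicClosure (Polynomial ℝ) (Z → ℝ) := by
    intro j
    refine ⟨Q j, hQ j, ?_⟩
    funext z
    rw [hev]
    exact hc j z.1 z.2
  have hmem : aeval v P ∈ Subalgebra.algebraicClosure (Polynomial ℝ) (Z → ℝ) := by
    have h1 : aeval v P ∈ (aeval v : MvPolynomial τ (Polynomial ℝ) →ₐ[Polynomial ℝ] (Z → ℝ)).range :=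
      ⟨P, rfl⟩
    rw [aeval_range] at h1
    refine Algebra.adjoin_le ?_ h1
    rintro _ ⟨j, rfl⟩
    exact halg j
  obtain ⟨W, hW, hW0⟩ := hmem
  refine ⟨W, hW, fun t ht => ?_⟩
  have h2 := congrFun hW0 ⟨t, ht⟩
  rw [hev] at h2
  have h1 : (aeval v P) ⟨t, ht⟩ = csEv t (fun j => c j t) P := by
    have : (Pi.evalRingHom (fun _ : Z => ℝ) ⟨t, ht⟩).comp
        (aeval v : _ →ₐ[Polynomial ℝ] _).toRingHom = csEv t (fun j => c j t) := by
      apply MvPolynomial.ringHom_ext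
      · intro r
        simp [csEv]
        rfl
      · intro k
        simp [v, csEv]
    exact congrArg (fun F => F P) this
  rw [h1] at h2
  exact h2

theorem cs_csEv_continuousOn {τ : Type*} (s : Set ℝ) (c : τ → ℝ → ℝ)
    (hc : ∀ j, ContinuousOn (c j) s) (P : MvPolynomial τ (Polynomial ℝ)) :
    ContinuousOn (fun t => csEv t (fun j => c j t) P) s := by
  induction P using MvPolynomial.induction_on with
  | C a =>
    simp only [csEv, coe_eval₂Hom, eval₂_C, Polynomial.coe_evalRingHom]
    exact a.continuous.continuousOn
  | add p q hp hq =>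
    simp only [map_add]
    exact hp.add hq
  | mul_X p j hp =>
    simp only [map_mul]
    refine hp.mul ?_
    simp only [csEv, coe_eval₂Hom, eval₂_X]
    exact hc j

theorem cs_eventually_zero {τ : Type*} (ε : ℝ) (hε : 0 < ε) (c : τ → ℝ → ℝ)
    (Q : τ → Polynomial (Polynomial ℝ)) (hQ : ∀ j, Q j ≠ 0)
    (hc : ∀ j, ∀ t ∈ Ioo 0 ε, Polynomial.evalEval t (c j t) (Q j) = 0)
    (hcc : ∀ j, ContinuousOn (c j) (Ioo 0 ε))
    (P : MvPolynomial τ (Polynomial ℝ))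
    (hfr : ∃ᶠ t in nhdsWithin (0 : ℝ) (Ioi 0), csEv t (fun j => c j t) P = 0) :
    ∃ ε' > 0, ε' ≤ ε ∧ ∀ t ∈ Ioo 0 ε', csEv t (fun j => c j t) P = 0 := by
  obtain ⟨W, hW, hW0⟩ := cs_algebraic ε c Q hQ hc P
  obtain ⟨W1, hW1, hnd⟩ := Polynomial.exists_eq_pow_rootMultiplicity_mul_and_not_dvd W hW 0
  rw [map_zero, sub_zero] at hW1 hnd
  have hcoe : W1.coeff 0 ≠ 0 := fun h => hnd (Polynomial.X_dvd_iff.mpr h)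
  obtain ⟨ε1, hε1, h1⟩ := cs_exists_Ioo (cs_eventually_ne _ hcoe)
  set f : ℝ → ℝ := fun t => csEv t (fun j => c j t) P with hf
  have hεm : 0 < min ε ε1 := lt_min hε hε1
  refine ⟨min ε ε1, hεm, min_le_left _ _, ?_⟩
  have hfc : ContinuousOn f (Ioo 0 (min ε ε1)) :=
    (cs_csEv_continuousOn _ c hcc P).mono (Ioo_subset_Ioo_right (min_le_left _ _))
  set T : Set ℝ := {t | t ∈ Ioo 0 (min ε ε1) ∧ f t = 0} with hT
  have hTo : IsOpen T := by
    rw [isOpen_iff_mem_nhds]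
    rintro t ⟨ht, hft⟩
    have hca : ContinuousAt f t := hfc.continuousAt (isOpen_Ioo.mem_nhds ht)
    have hg : ContinuousAt (fun u => Polynomial.evalEval u (f u) W1) t :=
      ContinuousAt.comp (f := fun u => (u, f u))
        (g := fun u : ℝ × ℝ => Polynomial.evalEval u.1 u.2 W1)
        (cs_contDiff W1).continuous.continuousAt (continuousAt_id.prodMk hca)
    have hne : Polynomial.evalEval t (f t) W1 ≠ 0 := by
      rw [hft]
      have : Polynomial.evalEval t 0 W1 = (W1.coeff 0).eval t := by
        rw [Polynomial.evalEval, Polynomial.coeff_zero_eq_eval_zero]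
        simp
      rw [this]
      exact h1 t (Ioo_subset_Ioo_right (min_le_right _ _) ht)
    filter_upwards [hg.eventually_ne hne, isOpen_Ioo.mem_nhds ht] with u hu hu'
    refine ⟨hu', ?_⟩
    have h2 := hW0 u (Ioo_subset_Ioo_right (min_le_left _ _) hu')
    rw [hW1, Polynomial.evalEval_mul, Polynomial.evalEval_pow, Polynomial.evalEval_X] at h2
    exact eq_zero_of_pow_eq_zero ((mul_eq_zero.mp h2).resolve_right hu)
  have hcl : closure T ∩ Ioo 0 (min ε ε1) ⊆ T := by
    rintro t ⟨htc, ht⟩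
    refine ⟨ht, ?_⟩
    obtain ⟨u, hu, hulim⟩ := mem_closure_iff_seq_limit.mp htc
    have hca : ContinuousAt f t := hfc.continuousAt (isOpen_Ioo.mem_nhds ht)
    have h2 := hca.tendsto.comp hulim
    refine tendsto_nhds_unique h2 (Tendsto.congr (fun k => ?_) tendsto_const_nhds)
    exact (hu k).2.symm
  obtain ⟨t1, ht1, ht1'⟩ := (hfr.and_eventually (Ioo_mem_nhdsGT hεm)).exists
  have := isPreconnected_Ioo.subset_of_closure_inter_subset hTo ⟨t1, ht1', ht1', ht1⟩ hcl
  exact fun t ht => (this ht).2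

theorem cs_select {τ : Type*} [Fintype τ] (P : MvPolynomial τ (Polynomial ℝ))
    (hP : ∀ t v, 0 ≤ csEv t v P)
    (hfr : ∃ᶠ t in nhdsWithin (0 : ℝ) (Ioi 0), ∃ v, csEv t v P = 0) :
    ∃ ε > 0, ∃ c : τ → ℝ → ℝ, (∀ j, ContDiffOn ℝ (⊤ : ℕ∞) (c j) (Ioo 0 ε)) ∧
      (∀ j, BasicSA {z : Fin 2 → ℝ | z 0 ∈ Ioo 0 ε ∧ z 1 = c j (z 0)}) ∧
      ∀ t ∈ Ioo 0 ε, csEv t (fun j => c j t) P = 0 := by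
  obtain ⟨Q, hQ, hz⟩ := cs_algebraic_zero P hP
  obtain ⟨ε, hε, hcov⟩ : ∃ ε > 0, ∀ j, CsCovered (Q j) ε := by
    choose e he hce using fun j => cs_branches (Q j) (hQ j)
    have hev : ∀ᶠ t in nhdsWithin (0 : ℝ) (Ioi 0), ∀ j, t ≤ e j := by
      rw [eventually_all]
      intro j
      filter_upwards [Ioo_mem_nhdsGT (he j)] with t ht
      exact ht.2.le
    obtain ⟨t, ht, ht'⟩ := (hev.and self_mem_nhdsWithin).exists
    exact ⟨t, ht', fun j => (hce j).mono (ht j)⟩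
  choose Ξ hfin hbr hroot using hcov
  have hfr2 : ∃ᶠ t in nhdsWithin (0 : ℝ) (Ioi 0),
      ∃ c ∈ Set.pi univ Ξ, csEv t (fun j => c j t) P = 0 := by
    refine (hfr.and_eventually (Ioo_mem_nhdsGT hε)).mono ?_
    rintro t ⟨hv, ht⟩
    obtain ⟨v, hv0, hvQ⟩ := hz t hv
    choose c hc hcv using fun j => hroot j t ht (v j) (hvQ j)
    refine ⟨c, fun j _ => hc j, ?_⟩
    rw [← hv0]
    congr 1
    exact congrArg (csEv t) (funext fun j => (hcv j).symm)
  have hpf : (Set.pi univ Ξ).Finite := Set.Finite.pi hfin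
  obtain ⟨c, hcm, hcf⟩ : ∃ c ∈ Set.pi univ Ξ,
      ∃ᶠ t in nhdsWithin (0 : ℝ) (Ioi 0), csEv t (fun j => c j t) P = 0 := by
    by_contra hcon
    push Not at hcon
    apply hfr2
    have : ∀ c ∈ Set.pi univ Ξ, ∀ᶠ t in nhdsWithin (0 : ℝ) (Ioi 0),
        ¬ csEv t (fun j => c j t) P = 0 := fun c hc => by simpa using hcon c hc
    filter_upwards [(eventually_all_finite hpf).mpr this] with t ht
    rintro ⟨c, hc, h0⟩
    exact ht c hc h0
  have hb : ∀ j, CsBranch (Q j) ε (c j) := fun j => hbr j _ (hcm j (mem_univ j))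
  obtain ⟨ε', hε', hle, h0⟩ := cs_eventually_zero ε hε c Q hQ (fun j => (hb j).2.2)
    (fun j => (hb j).1.continuousOn) P hcf
  exact ⟨ε', hε', c, fun j => (hb j).1.mono (Ioo_subset_Ioo_right hle),
    fun j => (hb j).2.1 ε' hle, h0⟩

theorem cs_select_system {τ ι κ : Type} [Fintype τ] [Fintype ι] [Fintype κ]
    (g : ι → MvPolynomial τ (Polynomial ℝ)) (h : κ → MvPolynomial τ (Polynomial ℝ))
    (hfr : ∃ᶠ t in nhdsWithin (0 : ℝ) (Ioi 0), ∃ v,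
      (∀ i, csEv t v (g i) = 0) ∧ ∀ i, 0 < csEv t v (h i)) :
    ∃ ε > 0, ∃ c : τ → ℝ → ℝ, (∀ j, ContDiffOn ℝ (⊤ : ℕ∞) (c j) (Ioo 0 ε)) ∧
      (∀ j, BasicSA {z : Fin 2 → ℝ | z 0 ∈ Ioo 0 ε ∧ z 1 = c j (z 0)}) ∧
      ∀ t ∈ Ioo 0 ε, (∀ i, csEv t (fun j => c j t) (g i) = 0) ∧
        ∀ i, 0 < csEv t (fun j => c j t) (h i) := by
  set P : MvPolynomial (τ ⊕ κ) (Polynomial ℝ) :=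
    ∑ i, rename Sum.inl (g i) ^ 2 + ∑ i, (rename Sum.inl (h i) * X (Sum.inr i) ^ 2 - 1) ^ 2 with hPdef
  have hren : ∀ (t : ℝ) (v : τ ⊕ κ → ℝ) (p : MvPolynomial τ (Polynomial ℝ)),
      csEv t v (rename Sum.inl p) = csEv t (fun j => v (Sum.inl j)) p := by
    intro t v p
    simp only [csEv, coe_eval₂Hom, eval₂_rename]
    rfl
  have hPe : ∀ t v, csEv t v P = ∑ i, csEv t (fun j => v (Sum.inl j)) (g i) ^ 2 +
      ∑ i, (csEv t (fun j => v (Sum.inl j)) (h i) * v (Sum.inr i) ^ 2 - 1) ^ 2 := by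
    intro t v
    have hX : ∀ k, csEv t v (X k) = v k := fun k => by simp [csEv]
    simp only [hPdef, map_add, map_sum, map_pow, map_sub, map_mul, map_one, hren, hX]
  have hn1 : ∀ (t : ℝ) (v : τ ⊕ κ → ℝ), 0 ≤ ∑ i, csEv t (fun j => v (Sum.inl j)) (g i) ^ 2 :=
    fun t v => Finset.sum_nonneg fun i _ => sq_nonneg _
  have hn2 : ∀ (t : ℝ) (v : τ ⊕ κ → ℝ), 0 ≤
      ∑ i, (csEv t (fun j => v (Sum.inl j)) (h i) * v (Sum.inr i) ^ 2 - 1) ^ 2 :=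
    fun t v => Finset.sum_nonneg fun i _ => sq_nonneg _
  obtain ⟨ε, hε, c, h1, h2, h3⟩ := cs_select P
    (fun t v => by rw [hPe]; exact add_nonneg (hn1 t v) (hn2 t v)) (by
      refine hfr.mono ?_
      rintro t ⟨v, hg, hh⟩
      refine ⟨Sum.elim v fun i => 1 / Real.sqrt (csEv t v (h i)), ?_⟩
      rw [hPe]
      have e1 : ∀ i, csEv t v (h i) * (1 / Real.sqrt (csEv t v (h i))) ^ 2 - 1 = 0 := by
        intro i
        rw [div_pow, one_pow, Real.sq_sqrt (hh i).le, mul_one_div_cancel (hh i).ne', sub_self]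
      show ∑ i, csEv t v (g i) ^ 2 +
        ∑ i, (csEv t v (h i) * (1 / Real.sqrt (csEv t v (h i))) ^ 2 - 1) ^ 2 = 0
      simp only [hg, e1]
      simp)
  refine ⟨ε, hε, fun j => c (Sum.inl j), fun j => h1 _, fun j => h2 _, fun t ht => ?_⟩
  have h4 := h3 t ht
  rw [hPe] at h4
  have a1 := hn1 t (fun j => c j t)
  have a2 := hn2 t (fun j => c j t)
  have b1 : ∑ i, csEv t (fun j => c (Sum.inl j) t) (g i) ^ 2 = 0 := by linarith
  have b2 : ∑ i, (csEv t (fun j => c (Sum.inl j) t) (h i) * c (Sum.inr i) t ^ 2 - 1) ^ 2 = 0 := by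
    linarith
  rw [Finset.sum_eq_zero_iff_of_nonneg fun i _ => sq_nonneg _] at b1 b2
  refine ⟨fun i => by simpa using b1 i (Finset.mem_univ i), fun i => ?_⟩
  have := b2 i (Finset.mem_univ i)
  rw [sq_eq_zero_iff, sub_eq_zero] at this
  by_contra hneg
  nlinarith [sq_nonneg (c (Sum.inr i) t)]

/-! ### Part 4: the conclusion -/

/-- Positivity of this quantity says that `z` is close to `y` at scale `t`. -/
def csVal (y : EReal) (t z : ℝ) : ℝ :=
  if y = ⊤ then t * z - 1 else if y = ⊥ then -(t * z) - 1 else t ^ 2 - (z - y.toReal) ^ 2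

/-- Polynomial form of `csVal`. -/
def csPol {τ : Type} (y : EReal) (k : τ) : MvPolynomial τ (Polynomial ℝ) :=
  if y = ⊤ then C Polynomial.X * X k - 1 else if y = ⊥ then -(C Polynomial.X * X k) - 1
    else C Polynomial.X ^ 2 - (X k - C (Polynomial.C y.toReal)) ^ 2

theorem csEv_X {τ : Type} (t : ℝ) (v : τ → ℝ) (k : τ) : csEv t v (X k) = v k := by
  simp [csEv]

theorem csEv_C {τ : Type} (t : ℝ) (v : τ → ℝ) (a : Polynomial ℝ) : csEv t v (C a) = a.eval t := by
  simp [csEv]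

theorem csEv_pol {τ : Type} (t : ℝ) (v : τ → ℝ) (y : EReal) (k : τ) :
    csEv t v (csPol y k) = csVal y t (v k) := by
  unfold csPol csVal
  split_ifs <;> simp [csEv_X, csEv_C]

theorem cs_val_pos (y : EReal) (u : ℕ → ℝ) (hu : Tendsto (fun l => ((u l : ℝ) : EReal)) atTop (nhds y))
    (t : ℝ) (ht : 0 < t) : ∀ᶠ l in atTop, 0 < csVal y t (u l) := by
  unfold csVal
  induction y with
  | top =>
    rw [EReal.tendsto_nhds_top_iff_real] at hu
    filter_upwards [hu (1 / t)] with l hl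
    have hl' : 1 / t < u l := by exact_mod_cast hl
    rw [div_lt_iff₀ ht] at hl'
    simp only [if_true]
    linarith
  | bot =>
    rw [EReal.tendsto_nhds_bot_iff_real] at hu
    filter_upwards [hu (-1 / t)] with l hl
    have hl' : u l < -1 / t := by exact_mod_cast hl
    rw [lt_div_iff₀ ht] at hl'
    simp only [bot_ne_top, if_true, if_false]
    linarith
  | coe r =>
    rw [EReal.tendsto_coe] at hu
    filter_upwards [Metric.tendsto_nhds.mp hu t ht] with l hl
    simp only [EReal.coe_ne_top, EReal.coe_ne_bot, if_false, EReal.toReal_coe]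
    rw [Real.dist_eq] at hl
    have := sq_lt_sq' (abs_lt.mp hl).1 (abs_lt.mp hl).2
    linarith

theorem cs_val_tendsto (y : EReal) (ε : ℝ) (f : ℝ → ℝ)
    (hf : ∀ t ∈ Ioo 0 ε, 0 < csVal y t (f t)) :
    Tendsto (fun t => ((f t : ℝ) : EReal)) (nhdsWithin 0 (Ioo 0 ε)) (nhds y) := by
  have hsmall : ∀ δ > (0 : ℝ), ∀ᶠ t in nhdsWithin (0 : ℝ) (Ioo 0 ε), t < δ := fun δ hδ =>
    nhdsWithin_le_nhds (gt_mem_nhds hδ)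
  unfold csVal at hf
  induction y with
  | top =>
    rw [EReal.tendsto_nhds_top_iff_real]
    intro x
    filter_upwards [hsmall (1 / (|x| + 1)) (by positivity), self_mem_nhdsWithin] with t ht htm
    have h1 := hf t htm
    simp only [if_true] at h1
    rw [lt_div_iff₀ (by positivity)] at ht
    have h0 : 0 < t := htm.1
    have : x < f t := by
      by_contra hcon
      have := le_abs_self x
      nlinarith
    exact_mod_cast this
  | bot =>
    rw [EReal.tendsto_nhds_bot_iff_real]
    intro x
    filter_upwards [hsmall (1 / (|x| + 1)) (by positivity), self_mem_nhdsWithin] with t ht htm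
    have h1 := hf t htm
    simp only [bot_ne_top, if_true, if_false] at h1
    rw [lt_div_iff₀ (by positivity)] at ht
    have h0 : 0 < t := htm.1
    have : f t < x := by
      by_contra hcon
      have := neg_abs_le x
      nlinarith
    exact_mod_cast this
  | coe r =>
    rw [EReal.tendsto_coe, Metric.tendsto_nhds]
    intro δ hδ
    filter_upwards [hsmall δ hδ, self_mem_nhdsWithin] with t ht htm
    have h1 := hf t htm
    simp only [EReal.coe_ne_top, EReal.coe_ne_bot, if_false, EReal.toReal_coe] at h1
    rw [Real.dist_eq]
    exact (abs_lt_of_sq_lt_sq (by linarith) htm.1.le).trans ht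

theorem cs_lift {τ σ : Type} (t : ℝ) (v : τ → ℝ) (k : σ → τ) (q : MvPolynomial σ ℝ) :
    csEv t v (map Polynomial.C (rename k q)) = eval (fun j => v (k j)) q := by
  rw [csEv_eq, MvPolynomial.map_map]
  have : (Polynomial.evalRingHom t).comp Polynomial.C = RingHom.id ℝ := by
    ext x
    simp
  rw [this, MvPolynomial.map_id, eval_rename]
  rfl

theorem cs_curve {n : ℕ} (ε : ℝ) (φ : ℝ → Fin n → ℝ)
    (h : ∀ j, BasicSA {z : Fin 2 → ℝ | z 0 ∈ Ioo 0 ε ∧ z 1 = φ (z 0) j}) :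
    IsSACurve (Ioo 0 ε) φ := by
  choose k l g q hgq using h
  refine ⟨1, fun _ => {z | z 0 ∈ Ioo 0 ε ∧ ∀ j : Fin n, z j.succ = φ (z 0) j}, fun _ => ?_, ?_⟩
  · refine cs_basicSA_of (ι := Σ j : Fin n, Fin (k j)) (κ := (Σ j : Fin n, Fin (l j)) ⊕ Bool)
      (fun s => rename ![0, s.1.succ] (g s.1 s.2))
      (Sum.elim (fun s => rename ![0, s.1.succ] (q s.1 s.2))
        (fun b => if b then X 0 else C ε - X 0)) _ ?_
    intro z
    have key : ∀ j : Fin n, (z 0 ∈ Ioo 0 ε ∧ z j.succ = φ (z 0) j) ↔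
        (∀ i, eval z (rename ![0, j.succ] (g j i)) = 0) ∧
          ∀ i, 0 < eval z (rename ![0, j.succ] (q j i)) := by
      intro j
      have h1 := Set.ext_iff.mp (hgq j) (z ∘ ![0, j.succ])
      simp only [mem_ofPred_eq] at h1
      simp only [eval_rename]
      rw [← h1]
      simp
    simp only [mem_ofPred_eq, Sum.forall, Sum.elim_inl, Sum.elim_inr, Bool.forall_bool, if_true,
      Bool.false_eq_true, if_false, map_sub, eval_X, eval_C, Sigma.forall]
    constructor
    · rintro ⟨h0, h1⟩
      exact ⟨fun j => ((key j).mp ⟨h0, h1 j⟩).1, fun j => ((key j).mp ⟨h0, h1 j⟩).2,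
        by linarith [h0.2], h0.1⟩
    · rintro ⟨h1, h2, h3, h4⟩
      exact ⟨⟨h4, by linarith⟩, fun j => ((key j).mpr ⟨h1 j, h2 j⟩).2⟩
  · ext z
    simp

/-- **Lemma 2.2 (Curve Selection Lemma at infinity).** -/
theorem curve_selection_at_infinity {n p : ℕ} (A : Set (Fin n → ℝ)) (hA : IsSA A)
    (F : (Fin n → ℝ) → (Fin p → ℝ)) (hF : IsSAMap F)
    (x : ℕ → Fin n → ℝ) (hxA : ∀ ℓ, x ℓ ∈ A)
    (hxnorm : Tendsto (fun ℓ => euclNorm (x ℓ)) atTop atTop)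
    (y : Fin p → EReal)
    (hy : ∀ i, Tendsto (fun ℓ => ((F (x ℓ) i : ℝ) : EReal)) atTop (nhds (y i))) :
    ∃ ε : ℝ, 0 < ε ∧ ∃ φ : ℝ → Fin n → ℝ,
      ContDiffOn ℝ (⊤ : ℕ∞) φ (Ioo 0 ε) ∧ IsSACurve (Ioo 0 ε) φ ∧
      (∀ t ∈ Ioo (0 : ℝ) ε, φ t ∈ A) ∧
      Tendsto (fun t => euclNorm (φ t)) (nhdsWithin 0 (Ioo 0 ε)) atTop ∧
      ∀ i, Tendsto (fun t => ((F (φ t) i : ℝ) : EReal))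
        (nhdsWithin 0 (Ioo 0 ε)) (nhds (y i)) := by
  obtain ⟨N, B, hB, hAB⟩ := hA
  obtain ⟨M, G, hG, hFG⟩ := hF
  choose kA lA gA qA hAe using hB
  choose kF lF gF qF hFe using hG
  let g : ∀ s : Fin N × Fin M, Fin (kA s.1) ⊕ Fin (kF s.2) →
      MvPolynomial (Fin (n + p)) (Polynomial ℝ) := fun s =>
    Sum.elim (fun i => map Polynomial.C (rename (Fin.castAdd p) (gA s.1 i)))
      (fun i => map Polynomial.C (rename id (gF s.2 i)))
  let q : ∀ s : Fin N × Fin M, (Fin (lA s.1) ⊕ Fin (lF s.2)) ⊕ (Unit ⊕ Fin p) →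
      MvPolynomial (Fin (n + p)) (Polynomial ℝ) := fun s =>
    Sum.elim (Sum.elim (fun i => map Polynomial.C (rename (Fin.castAdd p) (qA s.1 i)))
      (fun i => map Polynomial.C (rename id (qF s.2 i))))
      (Sum.elim (fun _ => C Polynomial.X ^ 2 * ∑ j : Fin n, X (Fin.castAdd p j) ^ 2 - 1)
        (fun i => csPol (y i) (Fin.natAdd n i)))
  have hsys : ∀ (s : Fin N × Fin M) (t : ℝ) (v : Fin (n + p) → ℝ),
      ((∀ i, csEv t v (g s i) = 0) ∧ ∀ i, 0 < csEv t v (q s i)) ↔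
      ((fun j => v (Fin.castAdd p j)) ∈ B s.1 ∧ v ∈ G s.2 ∧
        0 < t ^ 2 * ∑ j, v (Fin.castAdd p j) ^ 2 - 1 ∧
        ∀ i, 0 < csVal (y i) t (v (Fin.natAdd n i))) := by
    intro s t v
    rw [hAe s.1, hFe s.2]
    simp only [g, q, Sum.forall, Sum.elim_inl, Sum.elim_inr, cs_lift, csEv_pol, map_sub, map_mul,
      map_pow, map_sum, map_one, csEv_X, csEv_C, Polynomial.eval_X, mem_ofPred_eq, id,
      forall_const]
    tauto
  have hex : ∀ t > 0, ∃ s, ∃ v, (∀ i, csEv t v (g s i) = 0) ∧ ∀ i, 0 < csEv t v (q s i) := by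
    intro t ht
    have e1 := hxnorm.eventually_gt_atTop (1 / t)
    have e2 : ∀ᶠ l in atTop, ∀ i, 0 < csVal (y i) t (F (x l) i) :=
      eventually_all.mpr fun i => cs_val_pos (y i) _ (hy i) t ht
    obtain ⟨l, hl1, hl2⟩ := (e1.and e2).exists
    have hxl := hxA l
    rw [hAB, mem_iUnion] at hxl
    obtain ⟨a, ha⟩ := hxl
    have hgr : Fin.append (x l) (F (x l)) ∈ ⋃ i, G i := by
      rw [← hFG]
      simp
    obtain ⟨b, hb⟩ := mem_iUnion.mp hgr
    refine ⟨(a, b), Fin.append (x l) (F (x l)), (hsys _ _ _).mpr ⟨?_, hb, ?_, ?_⟩⟩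
    · simpa using ha
    · simp only [Fin.append_left]
      have h0 : (0 : ℝ) < 1 / t := by positivity
      have h1 : (1 / t) ^ 2 < ∑ j, x l j ^ 2 := by
        unfold euclNorm at hl1
        exact (Real.lt_sqrt h0.le).mp hl1
      rw [div_pow, one_pow, div_lt_iff₀ (by positivity)] at h1
      linarith
    · simpa using hl2
  obtain ⟨s, hs⟩ : ∃ s, ∃ᶠ t in nhdsWithin (0 : ℝ) (Ioi 0),
      ∃ v, (∀ i, csEv t v (g s i) = 0) ∧ ∀ i, 0 < csEv t v (q s i) := by
    by_contra hcon
    have hcon' : ∀ s, ∀ᶠ t in nhdsWithin (0 : ℝ) (Ioi 0),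
        ¬ ∃ v, (∀ i, csEv t v (g s i) = 0) ∧ ∀ i, 0 < csEv t v (q s i) := by
      intro s
      by_contra h
      exact hcon ⟨s, h⟩
    obtain ⟨t, ht, ht0⟩ := ((eventually_all.mpr hcon').and self_mem_nhdsWithin).exists
    obtain ⟨s, hs⟩ := hex t ht0
    exact ht s hs
  obtain ⟨ε, hε, c, h1, h2, h3⟩ := cs_select_system (g s) (q s) hs
  have h4 := fun t ht => (hsys s t (fun j => c j t)).mp (h3 t ht)
  have hFv : ∀ t ∈ Ioo 0 ε, ∀ i, F (fun j => c (Fin.castAdd p j) t) i = c (Fin.natAdd n i) t := by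
    intro t ht i
    have hm : (fun j => c j t) ∈ ⋃ i, G i := mem_iUnion.mpr ⟨_, (h4 t ht).2.1⟩
    rw [← hFG] at hm
    exact (congrFun hm i).symm
  refine ⟨ε, hε, fun t j => c (Fin.castAdd p j) t, contDiffOn_pi.mpr fun j => h1 _,
    cs_curve ε _ fun j => h2 _, fun t ht => ?_, ?_, fun i => ?_⟩
  · rw [hAB]
    exact mem_iUnion.mpr ⟨_, (h4 t ht).1⟩
  · have hlow : ∀ t ∈ Ioo 0 ε, t⁻¹ ≤ euclNorm (fun j => c (Fin.castAdd p j) t) := by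
      intro t ht
      have h5 := (h4 t ht).2.2.1
      have ht0 : 0 < t := ht.1
      unfold euclNorm
      refine Real.le_sqrt_of_sq_le ?_
      rw [inv_pow, inv_le_iff_one_le_mul₀ (by positivity)]
      linarith
    have hinv : Tendsto (fun t : ℝ => t⁻¹) (nhdsWithin 0 (Ioo 0 ε)) atTop :=
      tendsto_inv_nhdsGT_zero.mono_left (nhdsWithin_mono _ Ioo_subset_Ioi_self)
    exact tendsto_atTop_mono' _ (by filter_upwards [self_mem_nhdsWithin] with t ht using hlow t ht) hinv
  · refine cs_val_tendsto (y i) ε _ fun t ht => ?_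
    rw [hFv t ht i]
    exact (h4 t ht).2.2.2 i
end
end
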